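/- Let D be a division algebra over ℚ whose center F is a CM field, and let * be a positive involution of D whose restriction to F is the nontrivial automorphism of F over its maximal totally real subfield F₀ (an involution of the second kind). Then for any nonzero finite-dimensional right D-module V and any two positive definite (D,*)-Hermitian forms ψ₁, ψ₂ on V, the forms ψ₁^⊕4 and ψ₂^⊕4 are isometric. (This is the Albert type IV case of the fourth-power Hermitian form theorem.) -/

import Mathlib

/-!
Both forms turn out to have the same fourth power, namely `4n` copies of the standard form
`(x, y) ↦ x* y`. Gram–Schmidt diagonalises a positive definite form, with self-adjoint diagonal
entries `d` for which `x ↦ Tr(x* d x)` is positive. The field `ℚ(d) ⊆ D` is fixed pointwise by `*`.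
Since a number field is dense in the product of its archimedean completions, positivity of the
trace forms `x ↦ Tr(x²)` and `x ↦ Tr(d x²)` shows that `ℚ(d)` is totally real and `d` totally
positive. By Siegel's theorem `d` is a sum of four squares in `ℚ(d)`. The matrix `M` of left
multiplication by the corresponding quaternion has self-adjoint entries and satisfies `Mᵀ M = d`, so
it carries `⟨d⟩^⊕4` to `⟨1⟩^⊕4`.

Most of the work is Siegel's theorem (`is4_of_pos`): a totally positive element `a` of a totally real
field `K` of degree `d` is a sum of four squares. The argument below does not use the
Hasse–Minkowski theorem; it is a form of the circle method.

Suppose first that `a` is integral and `a ≡ 1 mod 8` (`is4_of_one_mod_eight`). Choose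
`u, v, b` with `1 + u² + v² = a b`. There is an explicit positive definite unimodular quaternary
form `S` for which `a S` is integrally a sub-form of the sum of four squares. Over every finite
quotient `𝓞/q` the form `S` is equivalent to the sum of four squares `I₄`, because it represents `1`
there; so the quadratic Gauss sums of `S` and `I₄` agree. By Dirichlet approximation with almost
coprime `p, q` and by Poisson summation, the theta series of `S` and of `I₄` on the torus of height
`y` have the same main term near `p/q`, and the error is `O(y^{-d})`. If `S` and `I₄` had no nonzero
value in common, Bessel's inequality with `y = H⁻²` would bound the contribution `≫ H^{4d}` of the
lattice points of size at most `H`, whose values are `O(H^{2d})` in number, by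
`O(H^{2d}) · O(H^{2d})^{1/2} = O(H^{3d})`, which is absurd (`common_value`). Hence there is a common
nonzero value `t`; then `t` and `a t` are sums of four squares and so is their quotient `a`, by
Euler's identity.

For general `a`, some `4 ^ k * a` is a sum of four squares modulo all powers of each prime above `2`
(`loc4_of_ne_zero`), so by the Chinese remainder theorem a sum of four squares `s` is congruent to
`4 ^ k * a` modulo a high power of `2`. Then `s a` agrees up to squares with an element congruent to
`1` modulo `8`, and the previous case applies.
-/

open MulOpposite

/-- The trace of left multiplication by `x` on the finite-dimensional `ℚ`-algebra `A`. -/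
noncomputable def algTraceQ (A : Type*) [Ring A] [Algebra ℚ A] (x : A) : ℚ :=
  LinearMap.trace ℚ A (LinearMap.mulLeft ℚ x)

/-- `st` is an involution of the `ℚ`-algebra `D`. -/
def IsInvolutionQ (D : Type*) [Ring D] [Algebra ℚ D] (st : D → D) : Prop :=
  (∀ x y : D, st (x + y) = st x + st y) ∧
  (∀ x y : D, st (x * y) = st y * st x) ∧
  (∀ x : D, st (st x) = x) ∧
  (∀ r : ℚ, st (algebraMap ℚ D r) = algebraMap ℚ D r)

/-- `st` is a positive involution of the `ℚ`-algebra `D`. -/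
def IsPositiveInvolutionQ (D : Type*) [Ring D] [Algebra ℚ D] (st : D → D) : Prop :=
  IsInvolutionQ D st ∧ ∀ d : D, d ≠ 0 → 0 < algTraceQ D (st d * d)

/-- `ψ` is a `(D,*)`-Hermitian form on the right `D`-module `V`. -/
def IsHermitianForm (D : Type*) [Ring D] [Algebra ℚ D] (V : Type*) [AddCommGroup V]
    [Module Dᵐᵒᵖ V] (st : D → D) (ψ : V → V → D) : Prop :=
  (∀ v v' w : V, ψ (v + v') w = ψ v w + ψ v' w) ∧
  (∀ v w w' : V, ψ v (w + w') = ψ v w + ψ v w') ∧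
  (∀ (a : D) (v w : V), ψ (op a • v) w = st a * ψ v w) ∧
  (∀ (b : D) (v w : V), ψ v (op b • w) = ψ v w * b) ∧
  (∀ v w : V, ψ w v = st (ψ v w))

/-- `ψ` is a positive definite `(D,*)`-Hermitian form on the right `D`-module `V`. -/
def IsPosDefHermitianForm (D : Type*) [Ring D] [Algebra ℚ D] (V : Type*) [AddCommGroup V]
    [Module Dᵐᵒᵖ V] (st : D → D) (ψ : V → V → D) : Prop :=
  IsHermitianForm D V st ψ ∧ ∀ v : V, v ≠ 0 → 0 < algTraceQ D (ψ v v)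

/-! ### Gaussian sums over lattices -/

section

open MeasureTheory

theorem summable_pi_prod {n : Type*} [Fintype n] {f : ℤ → ℝ} (hf0 : ∀ j, 0 ≤ f j)
    (hf : Summable f) : Summable (fun m : n → ℤ => ∏ i, f (m i)) := by
  classical
  refine summable_of_sum_le (c := ∏ _i : n, ∑' j, f j)
    (fun m => Finset.prod_nonneg fun i _ => hf0 _) fun s => ?_
  calc ∑ m ∈ s, ∏ i, f (m i)
      ≤ ∑ m ∈ Fintype.piFinset (fun i : n => s.image (fun m => m i)), ∏ i, f (m i) := by
        refine Finset.sum_le_sum_of_subset_of_nonneg (fun m hm => ?_)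
          (fun m _ _ => Finset.prod_nonneg fun i _ => hf0 _)
        rw [Fintype.mem_piFinset]
        exact fun i => Finset.mem_image_of_mem _ hm
    _ = ∏ i : n, ∑ j ∈ s.image (fun m => m i), f j := (Finset.prod_univ_sum _ _).symm
    _ ≤ _ := Finset.prod_le_prod (fun i _ => Finset.sum_nonneg fun j _ => hf0 j)
        (fun i _ => hf.sum_le_tsum _ fun j _ => hf0 j)

theorem summable_exp_neg_sq {n : Type*} [Fintype n] {c : ℝ} (hc : 0 < c) :
    Summable (fun m : n → ℤ => Real.exp (-c * ∑ i, (m i : ℝ) ^ 2)) := by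
  have h1 : Summable (fun j : ℤ => Real.exp (-c * (j : ℝ) ^ 2)) := by
    have := summable_pow_mul_jacobiTheta₂_term_bound 0 (T := c / Real.pi) (by positivity) 0
    refine this.congr fun j => ?_
    simp
    field_simp
  refine (summable_pi_prod (n := n) (fun j => (Real.exp_pos _).le) h1).congr fun m => ?_
  rw [← Real.exp_sum, Finset.mul_sum]

/-- A nondegenerate linear change of variables expands lengths at least by a positive factor. -/
theorem exists_sum_sq_le_mulVec {n : Type*} [Fintype n] [DecidableEq n] (M : Matrix n n ℝ)
    (hM : M.det ≠ 0) : ∃ c : ℝ, 0 < c ∧ ∀ x : n → ℝ, c * ∑ i, x i ^ 2 ≤ ∑ i, (M.mulVec x) i ^ 2 := by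
  let C : ℝ := 1 + ∑ i, ∑ j, (M⁻¹ i j) ^ 2
  have hC : 0 < C := by positivity
  refine ⟨C⁻¹, by positivity, fun x => ?_⟩
  have hx : x = M⁻¹.mulVec (M.mulVec x) := by
    rw [Matrix.mulVec_mulVec, Matrix.nonsing_inv_mul _ (by simpa using hM), Matrix.one_mulVec]
  set z := M.mulVec x with hz
  rw [inv_mul_le_iff₀ hC]
  calc ∑ i, x i ^ 2 = ∑ i, (∑ j, M⁻¹ i j * z j) ^ 2 := by
        conv_lhs => rw [hx]
        rfl
    _ ≤ ∑ i, (∑ j, M⁻¹ i j ^ 2) * ∑ j, z j ^ 2 :=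
        Finset.sum_le_sum fun i _ => Finset.sum_mul_sq_le_sq_mul_sq _ _ _
    _ = (∑ i, ∑ j, (M⁻¹ i j) ^ 2) * ∑ j, z j ^ 2 := by rw [Finset.sum_mul]
    _ ≤ C * ∑ j, z j ^ 2 := by
        gcongr
        simp [C]

/-- The Gaussian `exp (-π ∑ wᵣ ((M x)ᵣ)²)` with complex widths. -/
noncomputable def gau {n : Type*} [Fintype n] (M : Matrix n n ℝ) (w : n → ℂ) (x : n → ℝ) : ℂ :=
  Complex.exp (-Real.pi * ∑ r, w r * ((M.mulVec x r : ℝ) : ℂ) ^ 2)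

theorem norm_gau {n : Type*} [Fintype n] (M : Matrix n n ℝ) (w : n → ℂ) (x : n → ℝ) :
    ‖gau M w x‖ = Real.exp (-Real.pi * ∑ r, (w r).re * (M.mulVec x r) ^ 2) := by
  rw [gau, Complex.norm_exp]
  congr 1
  rw [← Complex.ofReal_neg, Complex.re_ofReal_mul, Complex.re_sum]
  congr 1
  refine Finset.sum_congr rfl fun r _ => ?_
  rw [← Complex.ofReal_pow, Complex.re_mul_ofReal]

theorem continuous_gau {n : Type*} [Fintype n] (M : Matrix n n ℝ) (w : n → ℂ) :
    Continuous (gau M w) := by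
  unfold gau Matrix.mulVec dotProduct
  fun_prop

theorem norm_gau_le {n : Type*} [Fintype n] [DecidableEq n] (M : Matrix n n ℝ) (hM : M.det ≠ 0)
    (w : n → ℂ) (hw : ∀ r, 0 < (w r).re) :
    ∃ c : ℝ, 0 < c ∧ ∀ x, ‖gau M w x‖ ≤ Real.exp (-c * ∑ i, x i ^ 2) := by
  obtain ⟨c, hc, h⟩ := exists_sum_sq_le_mulVec M hM
  obtain ⟨δ, hδ, hδ'⟩ : ∃ δ : ℝ, 0 < δ ∧ ∀ r, δ ≤ (w r).re := by
    cases isEmpty_or_nonempty n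
    · exact ⟨1, one_pos, fun r => isEmptyElim r⟩
    · obtain ⟨r, hr⟩ := Finite.exists_min (fun r => (w r).re)
      exact ⟨_, hw r, hr⟩
  refine ⟨Real.pi * δ * c, by positivity, fun x => ?_⟩
  rw [norm_gau]
  apply Real.exp_le_exp.mpr
  have : δ * (c * ∑ i, x i ^ 2) ≤ ∑ r, (w r).re * (M.mulVec x r) ^ 2 := by
    refine (mul_le_mul_of_nonneg_left (h x) hδ.le).trans ?_
    rw [Finset.mul_sum]
    exact Finset.sum_le_sum fun r _ => mul_le_mul_of_nonneg_right (hδ' r) (sq_nonneg _)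
  nlinarith [Real.pi_pos]

theorem norm_gau_add_le {n : Type*} [Fintype n] [DecidableEq n] (M : Matrix n n ℝ) (hM : M.det ≠ 0)
    (w : n → ℂ) (hw : ∀ r, 0 < (w r).re) :
    ∃ c : ℝ, 0 < c ∧ ∀ (x : n → ℝ) (m : n → ℤ), ‖gau M w (x + (fun i => (m i : ℝ)))‖ ≤
      Real.exp (2 * c * ∑ i, x i ^ 2) * Real.exp (-c * ∑ i, (m i : ℝ) ^ 2) := by
  obtain ⟨c, hc, h⟩ := norm_gau_le M hM w hw
  refine ⟨c / 2, by positivity, fun x m => (h _).trans ?_⟩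
  rw [← Real.exp_add]
  apply Real.exp_le_exp.mpr
  have : ∑ i, (m i : ℝ) ^ 2 ≤ ∑ i, (2 * ((x + (fun i => (m i : ℝ))) i) ^ 2 + 2 * x i ^ 2) := by
    refine Finset.sum_le_sum fun i _ => ?_
    simp only [Pi.add_apply]
    nlinarith [sq_nonneg (2 * x i + m i)]
  rw [Finset.sum_add_distrib, ← Finset.mul_sum, ← Finset.mul_sum] at this
  nlinarith

theorem summable_gau {n : Type*} [Fintype n] [DecidableEq n] (M : Matrix n n ℝ) (hM : M.det ≠ 0)
    (w : n → ℂ) (hw : ∀ r, 0 < (w r).re) (x : n → ℝ) :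
    Summable (fun m : n → ℤ => gau M w (x + (fun i => (m i : ℝ)))) := by
  obtain ⟨c, hc, h⟩ := norm_gau_add_le M hM w hw
  exact Summable.of_norm_bounded ((summable_exp_neg_sq hc).mul_left _) (h x)

theorem continuous_tsum_gau {n : Type*} [Fintype n] [DecidableEq n] (M : Matrix n n ℝ)
    (hM : M.det ≠ 0) (w : n → ℂ) (hw : ∀ r, 0 < (w r).re) :
    Continuous (fun x : n → ℝ => ∑' m : n → ℤ, gau M w (x + (fun i => (m i : ℝ)))) := by
  obtain ⟨c, hc, h⟩ := norm_gau_add_le M hM w hw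
  refine continuous_iff_continuousAt.mpr fun x0 => ?_
  let U : Set (n → ℝ) := {x | ∑ i, x i ^ 2 < ∑ i, x0 i ^ 2 + 1}
  have hU : IsOpen U := isOpen_lt
    (continuous_finsetSum _ fun i _ => (continuous_apply i).pow 2) continuous_const
  have hc : ContinuousOn (fun x : n → ℝ => ∑' m : n → ℤ, gau M w (x + (fun i => (m i : ℝ)))) U := by
    have hu := (summable_exp_neg_sq (n := n) hc).mul_left (Real.exp (2 * c * (∑ i, x0 i ^ 2 + 1)))
    refine continuousOn_tsum (fun m => ?_) hu fun m x hx => ?_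
    · exact Continuous.continuousOn 
        ((continuous_gau M w).comp (continuous_id.add continuous_const))
    · refine (h x m).trans (mul_le_mul_of_nonneg_right (Real.exp_le_exp.mpr ?_) (Real.exp_pos _).le)
      exact mul_le_mul_of_nonneg_left (le_of_lt hx) (by positivity)
  exact hc.continuousAt (hU.mem_nhds (by simp [U]))

end

/-! ### Poisson summation for Gaussians -/

section

open MeasureTheory UnitAddTorus

section
theorem isOpenQuotientMap_toTorus {n : Type*} :
    IsOpenQuotientMap (fun (x : n → ℝ) (i : n) => ((x i : ℝ) : UnitAddCircle)) :=
  IsOpenQuotientMap.piMap (f := fun (_ : n) (x : ℝ) => (x : UnitAddCircle))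
    fun _ => QuotientAddGroup.isOpenQuotientMap_mk

variable {n : Type*} [Fintype n]

/-- A continuous `ℤⁿ`-periodic function, as a continuous function on the torus. -/
theorem exists_torus_lift (G : (n → ℝ) → ℂ) (hG : Continuous G)
    (hper : ∀ (x : n → ℝ) (m : n → ℤ), G (x + fun i => (m i : ℝ)) = G x) :
    ∃ F : C(UnitAddTorus n, ℂ), ∀ x : n → ℝ, F (fun i => ((x i : ℝ) : UnitAddCircle)) = G x := by
  have hq := (isOpenQuotientMap_toTorus (n := n)).isQuotientMap
  let q : C(n → ℝ, UnitAddTorus n) := ⟨_, hq.continuous⟩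
  have hq' : Topology.IsQuotientMap q := hq
  have hc : ∀ a b : n → ℝ, q a = q b → G a = G b := by
    intro a b hab
    have h1 : ∀ i, ∃ m : ℤ, a i + m = b i := fun i => by
      have := congrFun hab i
      simp only [q, ContinuousMap.coe_mk] at this
      have h0 : ((b i - a i : ℝ) : UnitAddCircle) = 0 := by
        rw [AddCircle.coe_sub, this, sub_self]
      obtain ⟨m, hm⟩ := (AddCircle.coe_eq_zero_iff 1).mp h0
      refine ⟨m, ?_⟩
      rw [zsmul_eq_mul, mul_one] at hm
      linarith
    choose m hm using h1
    rw [← hper a m]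
    congr 1
    ext i
    exact (hm i).symm ▸ rfl
  refine ⟨hq'.lift ⟨G, hG⟩ hc, fun x => ?_⟩
  exact DFunLike.congr_fun (hq'.lift_comp ⟨G, hG⟩ hc) x

/-- An integral over `ℝⁿ` is the sum of the integrals over the integral translates of the unit cube. -/
theorem integrable_pi_tsum {E : Type*} [NormedAddCommGroup E] [NormedSpace ℝ E]
    {h : (n → ℝ) → E} (hh : Integrable h) :
    HasSum (fun m : n → ℤ => ∫ x in {x : n → ℝ | ∀ i, x i ∈ Set.Ioc (0 : ℝ) (0 + 1)},
      h (x + fun i => (m i : ℝ))) (∫ x, h x) := by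
  let S : (n → ℤ) → Set (n → ℝ) := fun m => {x | ∀ i, x i ∈ Set.Ioc (m i : ℝ) (m i + 1)}
  have hS : ∀ m, MeasurableSet (S m) := fun m => by
    have : S m = Set.univ.pi fun i => Set.Ioc (m i : ℝ) (m i + 1) := by
      ext x; simp [S]
    rw [this]
    exact MeasurableSet.univ_pi fun i => measurableSet_Ioc
  have hd : Pairwise (Function.onFun Disjoint S) := by
    intro m m' hmm
    rw [Function.onFun, Set.disjoint_left]
    intro x hx hx'
    apply hmm
    funext i
    have h1 := hx i
    have h2 := hx' i
    have a1 : (m i : ℝ) < m' i + 1 := h1.1.trans_le h2.2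
    have a2 : (m' i : ℝ) < m i + 1 := h2.1.trans_le h1.2
    have b1 : m i < m' i + 1 := by exact_mod_cast a1
    have b2 : m' i < m i + 1 := by exact_mod_cast a2
    omega
  have hU : (⋃ m, S m) = Set.univ := by
    rw [Set.eq_univ_iff_forall]
    intro x
    rw [Set.mem_iUnion]
    refine ⟨fun i => ⌈x i⌉ - 1, fun i => ?_⟩
    constructor
    · have := Int.ceil_lt_add_one (x i)
      push_cast
      linarith
    · have := Int.le_ceil (x i)
      push_cast
      linarith
  have := hasSum_integral_iUnion hS hd (f := h) (μ := volume) (by rw [hU]; exact hh.integrableOn)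
  rw [hU, setIntegral_univ] at this
  convert! this using 2 with m
  have hmp := measurePreserving_add_right (volume : Measure (n → ℝ)) (fun i => (m i : ℝ))
  rw [← hmp.setIntegral_preimage_emb (measurableEmbedding_addRight _) h (S m)]
  congr 2
  ext x
  simp only [S, Set.mem_preimage, Set.mem_ofPred_eq, Pi.add_apply, Set.mem_Ioc]
  refine forall_congr' fun i => ?_
  constructor <;> rintro ⟨h1, h2⟩ <;> constructor <;> linarith

theorem mFourier_coe (k : n → ℤ) (x : n → ℝ) :
    mFourier k (fun i => ((x i : ℝ) : UnitAddCircle)) =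
      Complex.exp (2 * Real.pi * Complex.I * ∑ i, (k i : ℂ) * (x i : ℂ)) := by
  simp only [mFourier, ContinuousMap.coe_mk, fourier_coe_apply]
  rw [← Complex.exp_sum, Finset.mul_sum]
  congr 1
  refine Finset.sum_congr rfl fun i _ => ?_
  push_cast
  ring

variable [DecidableEq n]

theorem integrable_gau
    (w : n → ℂ) (hw : ∀ r, 0 < (w r).re) (κ : n → ℂ) :
    Integrable (fun z : n → ℝ =>
      Complex.exp (-∑ r, (Real.pi * w r) * (z r : ℂ) ^ 2 + ∑ r, κ r * z r)) :=
  GaussianFourier.integrable_cexp_neg_sum_mul_add (fun r => by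
    rw [Complex.re_ofReal_mul]; exact mul_pos Real.pi_pos (hw r)) _

/-- The Fourier transform of the Gaussian `gau M w`. -/
theorem fourier_gau (M : Matrix n n ℝ) (hM : M.det ≠ 0)
    (w : n → ℂ) (hw : ∀ r, 0 < (w r).re) (k : n → ℤ) :
    Integrable (fun x : n → ℝ => Complex.exp (2 * Real.pi * Complex.I *
        ∑ i, ((-k) i : ℂ) * (x i : ℂ)) * gau M w x) ∧
    ∫ x : n → ℝ, Complex.exp (2 * Real.pi * Complex.I *
        ∑ i, ((-k) i : ℂ) * (x i : ℂ)) * gau M w x =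
      (|M.det| : ℝ)⁻¹ * (∏ r, (1 / w r) ^ (1 / 2 : ℂ)) *
        gau (M⁻¹.transpose) (fun r => (w r)⁻¹) (fun i => (k i : ℝ)) := by
  set κ : n → ℝ := M⁻¹.transpose.mulVec (fun i => (k i : ℝ)) with hκ
  set g : (n → ℝ) → ℂ := fun z => Complex.exp (-∑ r, (Real.pi * w r) * (z r : ℂ) ^ 2 +
    ∑ r, (-(2 * Real.pi * Complex.I * κ r)) * z r) with hg
  have hgi : Integrable g := integrable_gau w hw _
  have key : ∀ x : n → ℝ, Complex.exp (2 * Real.pi * Complex.I *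
        ∑ i, ((-k) i : ℂ) * (x i : ℂ)) * gau M w x = g (Matrix.toLin' M x) := by
    intro x
    have h1 : ∑ i, (k i : ℝ) * x i = ∑ r, κ r * (M.mulVec x) r := by
      change (fun i => (k i : ℝ)) ⬝ᵥ x = κ ⬝ᵥ M.mulVec x
      rw [hκ, Matrix.dotProduct_mulVec, Matrix.vecMul_mulVec, Matrix.transpose_transpose,
        Matrix.nonsing_inv_mul _ (by simpa using hM), Matrix.vecMul_one]
    have h2 : ∑ i, ((k i : ℂ)) * (x i : ℂ) = ∑ r, (κ r : ℂ) * ((M.mulVec x r : ℝ) : ℂ) := by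
      exact_mod_cast congrArg (fun t : ℝ => (t : ℂ)) h1
    simp only [hg, gau, Matrix.toLin'_apply]
    rw [← Complex.exp_add]
    congr 1
    have h3 : ∑ i, (((-k) i : ℤ) : ℂ) * (x i : ℂ) = - ∑ i, ((k i : ℂ)) * (x i : ℂ) := by
      rw [← Finset.sum_neg_distrib]
      refine Finset.sum_congr rfl fun i _ => ?_
      simp
    rw [h3, h2, mul_neg, Finset.mul_sum, Finset.mul_sum, ← Finset.sum_neg_distrib,
      ← Finset.sum_neg_distrib, add_comm]
    congr 1 <;> refine Finset.sum_congr rfl fun r _ => by ring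
  have hmap := Real.map_matrix_volume_pi_eq_smul_volume_pi hM
  have hme : MeasurableEmbedding (Matrix.toLin' M) := by
    have : LinearMap.det (Matrix.toLin' M) ≠ 0 := by rwa [LinearMap.det_toLin']
    exact (LinearEquiv.toContinuousLinearEquiv
      (LinearMap.equivOfDetNeZero (Matrix.toLin' M) this)).toHomeomorph.measurableEmbedding
  simp_rw [key]
  constructor
  · have : Integrable g (Measure.map (Matrix.toLin' M) volume) := by
      rw [hmap]
      exact hgi.smul_measure (by simp)
    exact (hme.integrable_map_iff).mp this
  · rw [← hme.integral_map (μ := volume) g, hmap, integral_smul_measure]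
    rw [hg, GaussianFourier.integral_cexp_neg_sum_mul_add (fun r => by
      rw [Complex.re_ofReal_mul]; exact mul_pos Real.pi_pos (hw r))]
    have e1 : ∀ r : n, ((Real.pi : ℂ) / (Real.pi * w r)) ^ (1 / 2 : ℂ) *
        Complex.exp ((-(2 * Real.pi * Complex.I * κ r)) ^ 2 / (4 * (Real.pi * w r))) =
        (1 / w r) ^ (1 / 2 : ℂ) * Complex.exp (-Real.pi * ((w r)⁻¹ * (κ r : ℂ) ^ 2)) := by
      intro r
      have hpi : (Real.pi : ℂ) ≠ 0 := by exact_mod_cast Real.pi_ne_zero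
      have hwr : w r ≠ 0 := fun h => by have := hw r; simp [h] at this
      congr 2
      · field_simp
      · field_simp
        ring_nf
        simp [Complex.I_sq]
    rw [Finset.prod_congr rfl fun r _ => e1 r, Finset.prod_mul_distrib, ← Complex.exp_sum, abs_inv,
      ENNReal.toReal_ofReal (by positivity), Complex.real_smul, mul_assoc, ← Finset.mul_sum]
    rfl

theorem re_inv_pos {w : ℂ} (hw : 0 < w.re) : 0 < (w⁻¹).re := by
  rw [Complex.inv_re]
  exact div_pos hw (Complex.normSq_pos.mpr fun h => by simp [h] at hw)

theorem summable_gau_dual (M : Matrix n n ℝ) (hM : M.det ≠ 0)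
    (w : n → ℂ) (hw : ∀ r, 0 < (w r).re) :
    Summable (fun k : n → ℤ => gau (M⁻¹.transpose) (fun r => (w r)⁻¹) (fun i => (k i : ℝ))) := by
  have := summable_gau (M⁻¹.transpose)
    (by rw [Matrix.det_transpose, Matrix.det_nonsing_inv]; simpa using hM)
    (fun r => (w r)⁻¹) (fun r => re_inv_pos (hw r)) 0
  simpa using this

/-- Poisson summation for a Gaussian of complex widths on a translate of an arbitrary lattice. -/
theorem poisson_gau (M : Matrix n n ℝ) (hM : M.det ≠ 0)
    (w : n → ℂ) (hw : ∀ r, 0 < (w r).re) (v : n → ℝ) :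
    ∑' m : n → ℤ, gau M w (v + fun i => (m i : ℝ)) =
      (|M.det| : ℝ)⁻¹ * (∏ r, (1 / w r) ^ (1 / 2 : ℂ)) *
        ∑' k : n → ℤ, gau (M⁻¹.transpose) (fun r => (w r)⁻¹) (fun i => (k i : ℝ)) *
          Complex.exp (2 * Real.pi * Complex.I * ∑ i, (k i : ℂ) * (v i : ℂ)) := by
  obtain ⟨F, hF⟩ := exists_torus_lift _ (continuous_tsum_gau M hM w hw) (by
    intro x m
    rw [← (Equiv.addRight m).tsum_eq (fun m' : n → ℤ => gau M w (x + fun i => (m' i : ℝ)))]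
    refine tsum_congr fun m' => ?_
    congr 1
    funext i
    simp only [Pi.add_apply, Equiv.coe_addRight]
    push_cast
    ring)
  have hcoef : ∀ k : n → ℤ, mFourierCoeff F k = (|M.det| : ℝ)⁻¹ * (∏ r, (1 / w r) ^ (1 / 2 : ℂ)) *
        gau (M⁻¹.transpose) (fun r => (w r)⁻¹) (fun i => (k i : ℝ)) := by
    intro k
    obtain ⟨hi, hv⟩ := fourier_gau M hM w hw k
    rw [← hv, mFourierCoeff_eq_integral F k 0, ← (integrable_pi_tsum hi).tsum_eq]
    have hexp : ∀ (m : n → ℤ) (x : n → ℝ), Complex.exp (2 * Real.pi * Complex.I *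
        ∑ i, ((-k) i : ℂ) * ((x + fun i => (m i : ℝ)) i : ℂ)) =
        Complex.exp (2 * Real.pi * Complex.I * ∑ i, ((-k) i : ℂ) * (x i : ℂ)) := by
      intro m x
      rw [← mFourier_coe, ← mFourier_coe]
      congr 1
      funext i
      simp [AddCircle.coe_add]
    rw [integral_tsum_of_summable_integral_norm]
    · refine integral_congr_ae (Filter.Eventually.of_forall fun x => ?_)
      simp only [hF, smul_eq_mul, mFourier_coe]
      rw [← tsum_mul_left]
      exact tsum_congr fun m => by rw [hexp]
    · intro m
      exact (hi.comp_add_right (fun i => (m i : ℝ))).integrableOn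
    · exact (integrable_pi_tsum hi.norm).summable
  have hs : Summable (mFourierCoeff F) := by
    rw [funext hcoef]
    exact (summable_gau_dual M hM w hw).mul_left _
  have := (hasSum_mFourier_series_apply_of_summable hs (fun i => ((v i : ℝ) : UnitAddCircle))).tsum_eq
  rw [hF] at this
  rw [← this, ← tsum_mul_left]
  refine tsum_congr fun k => ?_
  rw [hcoef, mFourier_coe, smul_eq_mul]
  ring
end

end

/-! ### Bessel's inequality on the torus -/

section

open MeasureTheory UnitAddTorus

noncomputable section
local instance : MeasureSpace UnitAddCircle := ⟨AddCircle.haarAddCircle⟩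

local instance : IsProbabilityMeasure (volume : Measure UnitAddCircle) :=
  inferInstanceAs (IsProbabilityMeasure AddCircle.haarAddCircle)

variable {J : Type*} [Fintype J]

theorem summable_smul_mFourier {N : Type*} (φ : N → J → ℤ) (c : N → ℝ) (hc : ∀ n, 0 ≤ c n)
    (hs : Summable c) : Summable (fun n => (c n : ℂ) • mFourier (φ n)) := by
  refine Summable.of_norm_bounded hs fun n => ?_
  rw [norm_smul, mFourier_norm, mul_one, Complex.norm_real, Real.norm_of_nonneg (hc n)]

theorem tsum_mFourier_coe {N : Type*} (φ : N → J → ℤ) (c : N → ℝ)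
    (hs : Summable (fun n => (c n : ℂ) • mFourier (φ n))) (s : J → ℝ) :
    (∑' n, (c n : ℂ) • mFourier (φ n)) (fun i => ((s i : ℝ) : UnitAddCircle)) =
      ∑' n, (c n : ℂ) * Complex.exp (2 * Real.pi * Complex.I * ∑ k, (φ n k : ℂ) * (s k : ℂ)) := by
  rw [← ContinuousMap.tsum_apply hs]
  refine tsum_congr fun n => ?_
  rw [ContinuousMap.smul_apply, mFourier_coe, smul_eq_mul]

/-- The Fourier coefficients of an absolutely convergent exponential series, whose frequencies may
repeat. -/
theorem inner_mFourierLp_tsum [DecidableEq (J → ℤ)] {N : Type*} (φ : N → J → ℤ) (c : N → ℝ)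
    (hc : ∀ n, 0 ≤ c n) (hs : Summable c) (l : J → ℤ) :
    HasSum (fun n => if φ n = l then (c n : ℂ) else 0)
      (inner ℂ (mFourierLp (d := J) 2 l)
      (ContinuousMap.toLp (E := ℂ) 2 volume ℂ (∑' n, (c n : ℂ) • mFourier (φ n)))) := by
  let Λ : C(UnitAddTorus J, ℂ) →L[ℂ] ℂ :=
    (innerSL ℂ (mFourierLp (d := J) 2 l)).comp (ContinuousMap.toLp (E := ℂ) 2 volume ℂ)
  have := (summable_smul_mFourier φ c hc hs).hasSum.mapL Λ
  convert! this using 2 with n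
  rw [map_smul]
  have h2 := orthonormal_iff_ite.mp (orthonormal_mFourier (d := J)) l (φ n)
  change _ = (c n : ℂ) • inner ℂ (mFourierLp (d := J) 2 l) (mFourierLp (d := J) 2 (φ n))
  rw [h2]
  by_cases h : φ n = l
  · simp [h]
  · rw [if_neg h, if_neg fun h' => h h'.symm]; simp

/-- Two nonnegative exponential sums that are uniformly close must have close Fourier coefficients
on average; so if the frequencies of the second sum avoid a finite set `T`, the part of the first
sum with frequencies in `T` is small. This is Bessel's inequality on the torus. -/
theorem sum_coeff_le_of_torus_bound {N₁ N₂ : Type*}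
    (φ₁ : N₁ → J → ℤ) (φ₂ : N₂ → J → ℤ) (c₁ : N₁ → ℝ) (c₂ : N₂ → ℝ)
    (h₁ : ∀ n, 0 ≤ c₁ n) (hs₁ : Summable c₁) (h₂ : ∀ n, 0 ≤ c₂ n) (hs₂ : Summable c₂)
    (X : ℝ) (hX : ∀ s : J → ℝ,
      ‖∑' n, (c₁ n : ℂ) * Complex.exp (2 * Real.pi * Complex.I * ∑ k, (φ₁ n k : ℂ) * (s k : ℂ)) -
       ∑' n, (c₂ n : ℂ) * Complex.exp (2 * Real.pi * Complex.I * ∑ k, (φ₂ n k : ℂ) * (s k : ℂ))‖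
        ≤ X)
    (T : Finset (J → ℤ)) (hT : ∀ n, φ₂ n ∉ T) (box : Finset N₁) (hbox : ∀ n ∈ box, φ₁ n ∈ T) :
    ∑ n ∈ box, c₁ n ≤ X * Real.sqrt T.card := by
  classical
  have hX0 : 0 ≤ X := (norm_nonneg _).trans (hX 0)
  have hS₁ := summable_smul_mFourier φ₁ c₁ h₁ hs₁
  have hS₂ := summable_smul_mFourier φ₂ c₂ h₂ hs₂
  set F₁ := ∑' n, (c₁ n : ℂ) • mFourier (φ₁ n) with hF₁
  set F₂ := ∑' n, (c₂ n : ℂ) • mFourier (φ₂ n) with hF₂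
  have hsup : ‖F₁ - F₂‖ ≤ X := by
    rw [ContinuousMap.norm_le _ hX0]
    intro z
    obtain ⟨s, rfl⟩ := isOpenQuotientMap_toTorus.surjective z
    rw [ContinuousMap.sub_apply, hF₁, hF₂, tsum_mFourier_coe φ₁ c₁ hS₁,
      tsum_mFourier_coe φ₂ c₂ hS₂]
    exact hX s
  set D := ContinuousMap.toLp (E := ℂ) 2 (volume : Measure (UnitAddTorus J)) ℂ (F₁ - F₂) with hD
  have hDn : ‖D‖ ≤ X := by
    refine (ContinuousLinearMap.le_opNorm _ _).trans ?_
    have h3 : ‖ContinuousMap.toLp (E := ℂ) 2 (volume : Measure (UnitAddTorus J)) ℂ‖ ≤ 1 := by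
      refine (ContinuousMap.toLp_norm_le _).trans ?_
      simp [measureUnivNNReal]
    exact (mul_le_mul h3 hsup (norm_nonneg _) zero_le_one).trans (one_mul X).le
  have hcoef : ∀ l, (∑ n ∈ box with φ₁ n = l, c₁ n) ≤ ‖inner ℂ (mFourierLp (d := J) 2 l) D‖ ∨ l ∉ T := by
    intro l
    by_cases hl : l ∈ T
    · left
      have e1 := inner_mFourierLp_tsum φ₁ c₁ h₁ hs₁ l
      have e2 := inner_mFourierLp_tsum φ₂ c₂ h₂ hs₂ l
      have e3 : inner ℂ (mFourierLp (d := J) 2 l) (ContinuousMap.toLp (E := ℂ) 2 volume ℂ F₂) = 0 := by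
        refine e2.unique ?_
        convert! hasSum_zero using 2 with n
        exact if_neg (fun h : φ₂ n = l => hT n (h ▸ hl))
      have e4 : inner ℂ (mFourierLp (d := J) 2 l) D =
          inner ℂ (mFourierLp (d := J) 2 l) (ContinuousMap.toLp (E := ℂ) 2 volume ℂ F₁) := by
        rw [hD, map_sub, inner_sub_right, e3, sub_zero]
      rw [e4]
      have e5 := Complex.hasSum_re e1
      have e6 : (∑ n ∈ box with φ₁ n = l, c₁ n) = ∑ n ∈ box,
          (if φ₁ n = l then (c₁ n : ℂ) else 0).re := by
        rw [Finset.sum_filter]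
        refine Finset.sum_congr rfl fun n _ => ?_
        split_ifs <;> simp
      rw [e6]
      refine (sum_le_hasSum box (fun n _ => ?_) e5).trans (Complex.re_le_norm _)
      split_ifs
      · simpa using h₁ n
      · simp
    · exact Or.inr hl
  have hbessel := (orthonormal_mFourier (d := J)).sum_inner_products_le D (s := T)
  calc ∑ n ∈ box, c₁ n = ∑ l ∈ T, ∑ n ∈ box with φ₁ n = l, c₁ n :=
        (Finset.sum_fiberwise_of_maps_to hbox c₁).symm
    _ ≤ ∑ l ∈ T, 1 * ‖inner ℂ (mFourierLp (d := J) 2 l) D‖ :=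
        Finset.sum_le_sum fun l hl => by
          rw [one_mul]
          exact (hcoef l).resolve_right fun h => h hl
    _ ≤ Real.sqrt (∑ l ∈ T, 1 ^ 2) *
        Real.sqrt (∑ l ∈ T, ‖inner ℂ (mFourierLp (d := J) 2 l) D‖ ^ 2) :=
        Real.sum_mul_le_sqrt_mul_sqrt _ _ _
    _ ≤ Real.sqrt T.card * X := by
        refine mul_le_mul (by simp) ?_ (Real.sqrt_nonneg _) (Real.sqrt_nonneg _)
        rw [Real.sqrt_le_left hX0]
        exact hbessel.trans (by gcongr)
    _ = _ := mul_comm _ _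
end

end

/-! ### Totally real fields and the dual lattice -/

section

open NumberField

section
variable (K : Type*) [Field K]

/-- The real embedding attached to an infinite place of a totally real field. -/
noncomputable def sg {K : Type*} [Field K] [IsTotallyReal K] (w : InfinitePlace K) : K →+* ℝ :=
  InfinitePlace.embedding_of_isReal (IsTotallyReal.isReal w)

variable {K}

theorem abs_sg [IsTotallyReal K] (w : InfinitePlace K) (x : K) : |sg w x| = w x :=
  InfinitePlace.norm_embedding_of_isReal _ x

variable [NumberField K] [IsTotallyReal K]

theorem prod_abs_sg (x : K) : ∏ w : InfinitePlace K, |sg w x| = |(Algebra.norm ℚ x : ℝ)| := by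
  have := InfinitePlace.prod_eq_abs_norm x
  simp only [IsTotallyReal.mult_eq, pow_one] at this
  simp_rw [abs_sg]
  rw [this]
  simp

theorem card_infinitePlace : Fintype.card (InfinitePlace K) = Module.finrank ℚ K := by
  rw [IsTotallyReal.finrank, InfinitePlace.card_eq_nrRealPlaces_add_nrComplexPlaces,
    IsTotallyReal.nrComplexPlaces_eq_zero, add_zero]

theorem trace_eq_sum_sg (x : K) : (Algebra.trace ℚ K x : ℝ) = ∑ w : InfinitePlace K, sg w x := by
  have h1 := trace_eq_sum_embeddings (K := ℚ) (L := K) ℂ (x := x)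
  have e : InfinitePlace K → (K →ₐ[ℚ] ℂ) := fun w => (w.embedding).toRatAlgHom
  have h2 : ∑ f : K →ₐ[ℚ] ℂ, f x = ∑ w : InfinitePlace K, ((sg w x : ℝ) : ℂ) := by
    symm
    refine Fintype.sum_bijective (fun w : InfinitePlace K => (w.embedding).toRatAlgHom) ?_ _ _ ?_
    · rw [Fintype.bijective_iff_injective_and_card]
      constructor
      · intro w w' h
        rw [← InfinitePlace.mk_embedding w, ← InfinitePlace.mk_embedding w']
        congr 1
        ext y
        exact DFunLike.congr_fun h y
      · rw [card_infinitePlace, AlgHom.card]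
    · intro w
      exact InfinitePlace.embedding_of_isReal_apply _ x
  rw [h2] at h1
  have h3 : ((Algebra.trace ℚ K x : ℝ) : ℂ) = ((∑ w : InfinitePlace K, sg w x : ℝ) : ℂ) := by
    push_cast
    rw [← h1]
    simp
  exact_mod_cast h3

theorem natCard_quot (q : 𝓞 K) :
    (Nat.card (𝓞 K ⧸ Ideal.span {q}) : ℝ) = ∏ w : InfinitePlace K, |sg w (q : K)| := by
  rw [prod_abs_sg, ← Submodule.cardQuot_apply, ← Ideal.absNorm_apply, Ideal.absNorm_span_singleton]
  rw [← Algebra.coe_norm_int]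
  simp [Nat.cast_natAbs]

theorem one_le_prod_abs_sg (q : 𝓞 K) (hq : q ≠ 0) :
    1 ≤ ∏ w : InfinitePlace K, |sg w (q : K)| := by
  rw [prod_abs_sg, ← Algebra.coe_norm_int]
  have : Algebra.norm ℤ q ≠ 0 := by simpa [Algebra.norm_eq_zero_iff] using hq
  have h : 1 ≤ |Algebra.norm ℤ q| := Int.one_le_abs this
  exact_mod_cast h

open scoped Classical in
variable (K) in
/-- An integral basis of a totally real field, indexed by the infinite places. -/
noncomputable def ib : Module.Basis (InfinitePlace K) ℤ (𝓞 K) :=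
  (RingOfIntegers.basis K).reindex (Fintype.equivOfCardEq (by
    rw [card_infinitePlace, ← Module.finrank_eq_card_chooseBasisIndex, RingOfIntegers.rank]))

variable (K) in
/-- The matrix of real embeddings of an integral basis. -/
noncomputable def emb : Matrix (InfinitePlace K) (InfinitePlace K) ℝ :=
  Matrix.of fun w k => sg w (ib K k : K)

variable (K) in
/-- The trace matrix of the integral basis. -/
noncomputable def trm : Matrix (InfinitePlace K) (InfinitePlace K) ℤ :=
  Matrix.of fun k l => Algebra.trace ℤ (𝓞 K) (ib K k * ib K l)

theorem trace_int_cast (x : 𝓞 K) : (Algebra.trace ℤ (𝓞 K) x : ℝ) = ∑ w, sg w (x : K) := by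
  rw [← trace_eq_sum_sg, ← Algebra.coe_trace_int]
  simp

theorem emb_transpose_mul : (emb K).transpose * emb K = (trm K).map (Int.cast : ℤ → ℝ) := by
  ext k l
  simp only [Matrix.mul_apply, Matrix.transpose_apply, emb, trm, Matrix.map_apply, Matrix.of_apply,
    trace_int_cast]
  simp

open scoped Classical in
theorem det_trm_ne_zero : (trm K).det ≠ 0 := by
  have h := discr_ne_zero K
  rw [← discr_eq_discr K (ib K), Algebra.discr_def] at h
  exact h

open scoped Classical in
theorem det_emb_ne_zero : (emb K).det ≠ 0 := by
  intro h
  have h1 := congrArg Matrix.det (emb_transpose_mul (K := K))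
  rw [Matrix.det_mul, h, mul_zero] at h1
  have h2 : ((trm K).map (Int.cast : ℤ → ℝ)).det = ((trm K).det : ℝ) := 
    (Int.castRingHom ℝ).map_det (trm K) |>.symm
  rw [h2] at h1
  exact det_trm_ne_zero (K := K) (by exact_mod_cast h1.symm)

theorem sg_eq_sum (x : 𝓞 K) (w : InfinitePlace K) :
    sg w (x : K) = ((emb K).mulVec fun k => ((ib K).repr x k : ℝ)) w := by
  conv_lhs => rw [← (ib K).sum_repr x]
  simp only [emb, Matrix.mulVec, dotProduct, Matrix.of_apply, map_sum]
  refine Finset.sum_congr rfl fun k _ => ?_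
  simp [mul_comm]

open scoped Classical in
/-- The vectors of the dual lattice of the ring of integers have bounded denominators. -/
theorem exists_dual_int (k : InfinitePlace K → ℤ) : ∃ t : 𝓞 K, ∀ w,
    ((trm K).det : ℝ) * ((emb K)⁻¹.transpose.mulVec fun i => (k i : ℝ)) w = sg w (t : K) := by
  let c : InfinitePlace K → ℤ := (trm K).adjugate.mulVec k
  refine ⟨∑ l, c l • ib K l, fun w => ?_⟩
  have h1 : sg w ((∑ l, c l • ib K l : 𝓞 K) : K) = ((emb K).mulVec fun i => (c i : ℝ)) w := by
    rw [sg_eq_sum]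
    congr 1
    ext l
    rw [(ib K).repr_sum_self]
  have hB : IsUnit (emb K).det := isUnit_iff_ne_zero.mpr det_emb_ne_zero
  have h2 : (fun i => (c i : ℝ)) =
      ((trm K).map (Int.cast : ℤ → ℝ)).adjugate.mulVec fun i => (k i : ℝ) := by
    have e1 : ((trm K).map (Int.cast : ℤ → ℝ)).adjugate = (trm K).adjugate.map (Int.cast : ℤ → ℝ) :=
      ((Int.castRingHom ℝ).map_adjugate (trm K)).symm
    rw [e1]
    ext i
    simp [c, Matrix.mulVec, dotProduct]
  have h3 : ((trm K).map (Int.cast : ℤ → ℝ)).det = ((trm K).det : ℝ) :=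
    (Int.castRingHom ℝ).map_det (trm K) |>.symm
  have h4 : (emb K) * ((trm K).map (Int.cast : ℤ → ℝ)).adjugate =
      ((trm K).det : ℝ) • (emb K)⁻¹.transpose := by
    have hBt : IsUnit ((emb K).transpose).det := by rwa [Matrix.det_transpose]
    rw [← h3, Matrix.transpose_nonsing_inv]
    have e2 := congrArg ((emb K).transpose⁻¹ * ·)
      (Matrix.mul_adjugate ((trm K).map (Int.cast : ℤ → ℝ)))
    simp only [← emb_transpose_mul, ← mul_assoc] at e2
    rw [Matrix.nonsing_inv_mul _ hBt, one_mul] at e2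
    rw [← emb_transpose_mul, e2, Matrix.mul_smul, mul_one]
  rw [h1, h2, Matrix.mulVec_mulVec, h4, Matrix.smul_mulVec]
  rfl

open scoped Classical in
/-- The codifferent has bounded denominators. -/
theorem exists_of_trace_int (x : K)
    (hx : ∀ c : 𝓞 K, ∃ m : ℤ, Algebra.trace ℚ K (x * c) = m) :
    ∃ t : 𝓞 K, (trm K).det * x = t := by
  choose m hm using hx
  -- coordinates of `x` on the integral basis
  obtain ⟨e, he⟩ : ∃ e : InfinitePlace K → ℚ, x = ∑ l, (e l : K) * (ib K l : K) := by
    obtain ⟨⟨a, s⟩, h⟩ := IsLocalization.surj (Algebra.algebraMapSubmonoid (𝓞 K) (nonZeroDivisors ℤ)) x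
    obtain ⟨s, n, hn, rfl⟩ := s
    simp only at h
    have hn0 : (n : ℚ) ≠ 0 := by simpa using nonZeroDivisors.ne_zero hn
    refine ⟨fun l => ((ib K).repr a l : ℚ) / n, ?_⟩
    have h5 : (algebraMap (𝓞 K) K) a = ∑ l, ((ib K).repr a l : K) * (ib K l : K) := by
      conv_lhs => rw [← (ib K).sum_repr a]
      simp
    have hnK : (n : K) ≠ 0 := by exact_mod_cast hn0
    rw [h5] at h
    have h6 : x * (n : K) = ∑ l, ((ib K).repr a l : K) * (ib K l : K) := by
      rw [← h]
      simp
    rw [← mul_left_inj' hnK, h6, Finset.sum_mul]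
    refine Finset.sum_congr rfl fun l _ => ?_
    push_cast
    field_simp
  have h1 : ((trm K).map (Int.cast : ℤ → ℚ)).mulVec e = fun k => (m (ib K k) : ℚ) := by
    ext k
    rw [← hm, he, Finset.sum_mul, map_sum]
    simp only [Matrix.mulVec, dotProduct, Matrix.map_apply, trm, Matrix.of_apply]
    refine Finset.sum_congr rfl fun l _ => ?_
    have h7 : (e l : K) * (ib K l : K) * (ib K k : K) = e l • ((ib K k * ib K l : 𝓞 K) : K) := by
      rw [Algebra.smul_def]
      push_cast
      simp only [eq_ratCast]
      ring
    rw [h7, map_smul, ← Algebra.coe_trace_int, smul_eq_mul, mul_comm]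
  have h2 : ∀ k, ((trm K).det : ℚ) * e k = ((trm K).adjugate.mulVec fun k => m (ib K k)) k := by
    intro k
    have h3 : ((trm K).map (Int.cast : ℤ → ℚ)).det = ((trm K).det : ℚ) :=
      (Int.castRingHom ℚ).map_det (trm K) |>.symm
    have e1 : ((trm K).map (Int.cast : ℤ → ℚ)).adjugate = (trm K).adjugate.map (Int.cast : ℤ → ℚ) :=
      ((Int.castRingHom ℚ).map_adjugate (trm K)).symm
    have h4 := congrArg (((trm K).map (Int.cast : ℤ → ℚ)).adjugate.mulVec ·) h1
    simp only [Matrix.mulVec_mulVec, Matrix.adjugate_mul, h3, Matrix.smul_mulVec,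
      Matrix.one_mulVec] at h4
    rw [e1] at h4
    have h5 := congrFun h4 k
    rw [Pi.smul_apply, smul_eq_mul] at h5
    rw [h5]
    simp [Matrix.mulVec, dotProduct]
  refine ⟨∑ l, ((trm K).adjugate.mulVec fun k => m (ib K k)) l • ib K l, ?_⟩
  have h10 := map_sum (algebraMap (𝓞 K) K)
    (fun l => ((trm K).adjugate.mulVec fun k => m (ib K k)) l • ib K l) Finset.univ
  refine Eq.trans ?_ h10.symm
  rw [he, Finset.mul_sum]
  refine Finset.sum_congr rfl fun l _ => ?_
  have h8 := h2 l
  have h9 : ((trm K).det : K) * (e l : K) =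
      (((trm K).adjugate.mulVec fun k => m (ib K k)) l : K) := by
    have := congrArg (fun t : ℚ => (t : K)) h8
    simpa only [Rat.cast_mul, Rat.cast_intCast] using this
  rw [← mul_assoc, h9]
  simp

open scoped Classical in
variable (K) in
/-- The discriminant of `K`, as the determinant of the integral trace matrix. -/
noncomputable def dK : ℤ := (trm K).det

theorem dK_ne_zero : dK K ≠ 0 := det_trm_ne_zero

open scoped Classical in
theorem exists_dual_int' (k : InfinitePlace K → ℤ) : ∃ t : 𝓞 K, ∀ w,
    (dK K : ℝ) * ((emb K)⁻¹.transpose.mulVec fun i => (k i : ℝ)) w = sg w (t : K) :=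
  exists_dual_int k

theorem exists_of_trace_int' (x : K)
    (hx : ∀ c : 𝓞 K, ∃ m : ℤ, Algebra.trace ℚ K (x * c) = m) :
    ∃ t : 𝓞 K, (dK K : K) * x = t := exists_of_trace_int x hx

end

end

/-! ### Quadratic Gauss sums -/

section

open NumberField

/-- Weyl differencing: a phase `f` that is additive up to the characters `β h` is quadratic, and the
square of its sum is bounded by the group order times the number of `h` with trivial `β h`. -/
theorem gauss_sq {A : Type*} [AddCommGroup A] [Fintype A] (f : A → ℂ) (hf : ∀ c, ‖f c‖ = 1)
    (β : A → AddChar A ℂ) (h : ∀ c h, f (c + h) = f c * f h * β h c) :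
    ‖∑ c, f c‖ ^ 2 ≤ (Nat.card A : ℝ) * Nat.card {h : A // β h = 0} := by
  classical
  have h1 : ((‖∑ c, f c‖ ^ 2 : ℝ) : ℂ) = ∑ h, f h * ∑ c, β h c := by
    have hc : ∀ z : ℂ, ((‖z‖ ^ 2 : ℝ) : ℂ) = (starRingEnd ℂ) z * z := fun z => by
      rw [Complex.conj_mul']; push_cast; rfl
    rw [hc, map_sum, Finset.sum_mul_sum]
    have : ∀ c, ∑ c', (starRingEnd ℂ) (f c) * f c' = ∑ h, f h * β h c := fun c => by
      rw [← Equiv.sum_comp (Equiv.addLeft c)]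
      refine Finset.sum_congr rfl fun h' _ => ?_
      simp only [Equiv.coe_addLeft]
      rw [h c h', mul_assoc, ← mul_assoc, ← hc, hf]
      simp
    simp_rw [this]
    rw [Finset.sum_comm]
    simp_rw [Finset.mul_sum]
  have h2 : ‖∑ c, f c‖ ^ 2 = ‖∑ h, f h * ∑ c, β h c‖ := by
    rw [← h1]; simp
  rw [h2]
  calc _ ≤ ∑ h, ‖f h * ∑ c, β h c‖ := norm_sum_le _ _
    _ = ∑ h, if β h = 0 then (Nat.card A : ℝ) else 0 := by
      refine Finset.sum_congr rfl fun h' _ => ?_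
      rw [norm_mul, hf, one_mul, AddChar.sum_eq_ite]
      split_ifs <;> simp
    _ = _ := by
      rw [← Finset.sum_filter, Finset.sum_const, nsmul_eq_mul, Nat.card_eq_fintype_card (α := {h : A // β h = 0}),
        Fintype.card_subtype, mul_comm]

/-- The bound for a quadratic Gauss sum with a unimodular matrix over a finite ring. -/
theorem gauss_ring {Q : Type*} [CommRing Q] [Fintype Q] (ψ : AddChar Q ℂ)
    (S T : Matrix (Fin 4) (Fin 4) Q) (hS : S.transpose = S) (hTS : T * S = 1)
    (χ : AddChar (Fin 4 → Q) ℂ) :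
    ‖∑ c : Fin 4 → Q, ψ (c ⬝ᵥ S.mulVec c) * χ c‖ ≤
      (Nat.card Q : ℝ) ^ 2 * (Nat.card {t : Q // ∀ c, ψ (2 * c * t) = 1} : ℝ) ^ 2 := by
  have hsymm : ∀ a b : Fin 4 → Q, a ⬝ᵥ S.mulVec b = b ⬝ᵥ S.mulVec a := fun a b => by
    rw [Matrix.dotProduct_mulVec, ← Matrix.mulVec_transpose, hS, dotProduct_comm]
  let β : (Fin 4 → Q) → AddChar (Fin 4 → Q) ℂ := fun h =>
    { toFun := fun c => ψ (2 * (c ⬝ᵥ S.mulVec h))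
      map_zero_eq_one' := by simp
      map_add_eq_mul' := fun a b => by rw [add_dotProduct, mul_add, AddChar.map_add_eq_mul] }
  have key := gauss_sq (fun c : Fin 4 → Q => ψ (c ⬝ᵥ S.mulVec c) * χ c)
    (fun c => by rw [norm_mul, AddChar.norm_apply, AddChar.norm_apply, one_mul]) β (fun c h => by
      have : (c + h) ⬝ᵥ S.mulVec (c + h) =
          c ⬝ᵥ S.mulVec c + h ⬝ᵥ S.mulVec h + 2 * (c ⬝ᵥ S.mulVec h) := by
        rw [Matrix.mulVec_add, add_dotProduct, dotProduct_add, dotProduct_add, hsymm h c]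
        ring
      change ψ _ * χ _ = _ * _ * ψ _
      rw [this, AddChar.map_add_eq_mul, AddChar.map_add_eq_mul, AddChar.map_add_eq_mul]
      ring)
  have hcard : Nat.card {h : Fin 4 → Q // β h = 0} ≤
      Nat.card {t : Q // ∀ c, ψ (2 * c * t) = 1} ^ 4 := by
    have e : Nat.card (Fin 4 → {t : Q // ∀ c, ψ (2 * c * t) = 1}) =
        Nat.card {t : Q // ∀ c, ψ (2 * c * t) = 1} ^ 4 := by
      rw [Nat.card_fun]; simp
    rw [← e]
    refine Nat.card_le_card_of_injective (fun h i => ⟨S.mulVec h.1 i, fun c => ?_⟩) ?_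
    · have := DFunLike.congr_fun h.2 (Pi.single i c)
      change ψ (2 * (_ ⬝ᵥ _)) = 1 at this
      rwa [single_dotProduct, ← mul_assoc] at this
    · intro h h' hh
      have h1 : S.mulVec h.1 = S.mulVec h'.1 := by
        ext i
        exact congrArg Subtype.val (congrFun hh i)
      have h2 := congrArg T.mulVec h1
      rw [Matrix.mulVec_mulVec, Matrix.mulVec_mulVec, hTS, Matrix.one_mulVec, Matrix.one_mulVec] at h2
      exact Subtype.ext h2
  rw [← abs_of_nonneg (norm_nonneg _), ← abs_of_nonneg (a := (Nat.card Q : ℝ) ^ 2 * _) (by positivity)]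
  refine sq_le_sq.mp (key.trans ?_)
  have : Nat.card (Fin 4 → Q) = Nat.card Q ^ 4 := by rw [Nat.card_fun]; simp
  rw [this]
  have hc' : (Nat.card {h : Fin 4 → Q // β h = 0} : ℝ) ≤
      (Nat.card {t : Q // ∀ c, ψ (2 * c * t) = 1} : ℝ) ^ 4 := by exact_mod_cast hcard
  push_cast
  calc _ ≤ (Nat.card Q : ℝ) ^ 4 * (Nat.card {t : Q // ∀ c, ψ (2 * c * t) = 1} : ℝ) ^ 4 := by gcongr
    _ = _ := by ring

section
variable {K : Type*} [Field K] [NumberField K] [IsTotallyReal K]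

/-- The additive function `z ↦ exp(2πi Tr z)` on `K`. -/
noncomputable def eTr (z : K) : ℂ := Complex.exp (2 * Real.pi * Complex.I * (Algebra.trace ℚ K z : ℂ))

omit [IsTotallyReal K] in
theorem eTr_add (x y : K) : eTr (x + y) = eTr x * eTr y := by
  rw [eTr, eTr, eTr, ← Complex.exp_add, map_add]
  push_cast
  ring_nf

omit [IsTotallyReal K] in
theorem eTr_int (x : 𝓞 K) : eTr (x : K) = 1 := by
  rw [eTr, Complex.exp_eq_one_iff]
  refine ⟨Algebra.trace ℤ (𝓞 K) x, ?_⟩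
  rw [← Algebra.coe_trace_int]
  push_cast
  ring

omit [IsTotallyReal K] in
theorem eTr_eq_one {x : K} (h : eTr x = 1) : ∃ m : ℤ, Algebra.trace ℚ K x = m := by
  rw [eTr, Complex.exp_eq_one_iff] at h
  obtain ⟨m, hm⟩ := h
  refine ⟨m, ?_⟩
  have : (2 * Real.pi * Complex.I : ℂ) ≠ 0 := Complex.two_pi_I_ne_zero
  rw [mul_comm (m : ℂ)] at hm
  exact_mod_cast mul_left_cancel₀ this hm

/-- The character `x ↦ exp(2πi Tr(p x / q))` of `𝓞/q`. -/
noncomputable def psi (p q : 𝓞 K) (hq : q ≠ 0) : AddChar (𝓞 K ⧸ Ideal.span {q}) ℂ := by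
  have hwd : ∀ x y : 𝓞 K, Ideal.Quotient.mk (Ideal.span {q}) x = Ideal.Quotient.mk _ y →
      eTr ((p : K) * x / q) = eTr ((p : K) * y / q) := fun x y h => by
    rw [Ideal.Quotient.mk_eq_mk_iff_sub_mem, Ideal.mem_span_singleton] at h
    obtain ⟨z, hz⟩ := h
    have hq' : (q : K) ≠ 0 := by exact_mod_cast hq
    have h1 : (p : K) * x / q = (p : K) * y / q + (p * z : 𝓞 K) := by
      have : x = y + q * z := by rw [← hz]; ring
      rw [this]
      push_cast
      field_simp
    rw [h1, eTr_add, eTr_int, mul_one]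
  exact
  { toFun := fun c => eTr ((p : K) * (Quotient.out c : 𝓞 K) / q)
    map_zero_eq_one' := by
      rw [hwd _ 0 (by rw [map_zero]; exact Ideal.Quotient.mk_out 0)]
      have := eTr_int (0 : 𝓞 K)
      simpa using this
    map_add_eq_mul' := fun a b => by
      rw [hwd _ (Quotient.out a + Quotient.out b) (by
        rw [map_add, Ideal.Quotient.mk_out, Ideal.Quotient.mk_out, Ideal.Quotient.mk_out]), ← eTr_add]
      congr 1
      push_cast
      ring }


omit [IsTotallyReal K] in
theorem psi_mk (p q : 𝓞 K) (hq : q ≠ 0) (x : 𝓞 K) :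
    psi p q hq (Ideal.Quotient.mk _ x) = eTr ((p : K) * x / q) := by
  change eTr ((p : K) * (Quotient.out (Ideal.Quotient.mk (Ideal.span {q}) x) : 𝓞 K) / q) = _
  have h : Ideal.Quotient.mk (Ideal.span {q}) (Quotient.out (Ideal.Quotient.mk (Ideal.span {q}) x)) =
      Ideal.Quotient.mk (Ideal.span {q}) x := Ideal.Quotient.mk_out _
  rw [Ideal.Quotient.mk_eq_mk_iff_sub_mem, Ideal.mem_span_singleton] at h
  obtain ⟨z, hz⟩ := h
  have hq' : (q : K) ≠ 0 := by exact_mod_cast hq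
  generalize Quotient.out (Ideal.Quotient.mk (Ideal.span {q}) x) = y at *
  have h1 : (p : K) * y / q = (p : K) * x / q + (p * z : 𝓞 K) := by
    have : y = x + q * z := by rw [← hz]; ring
    rw [this]
    push_cast
    field_simp
  rw [h1, eTr_add, eTr_int, mul_one]

/-- The radical of the bilinear character `(c, t) ↦ ψ(2 c t)` modulo `q` has size bounded
independently of `q`: `p` is invertible modulo `q` up to `D`, and the codifferent has bounded
denominators. -/
theorem card_psi (p q α β : 𝓞 K) (hq : q ≠ 0) (D : ℤ) (hD : D ≠ 0) (h : α * p + β * q = D) :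
    Nat.card {t : 𝓞 K ⧸ Ideal.span {q} // ∀ c, psi p q hq (2 * c * t) = 1} ≤
      Nat.card (𝓞 K ⧸ Ideal.span {((2 * dK K * D : ℤ) : 𝓞 K)}) := by
  classical
  set m : ℤ := 2 * dK K * D with hm
  have hm0 : m ≠ 0 := mul_ne_zero (mul_ne_zero two_ne_zero dK_ne_zero) hD
  have hq' : (q : K) ≠ 0 := by exact_mod_cast hq
  have hmO : ((m : ℤ) : 𝓞 K) ≠ 0 := by exact_mod_cast hm0
  have hfin : Finite (𝓞 K ⧸ Ideal.span {(m : 𝓞 K)}) :=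
    Ideal.finiteQuotientOfFreeOfNeBot _ (by simpa using hmO)
  have key : ∀ t : {t : 𝓞 K ⧸ Ideal.span {q} // ∀ c, psi p q hq (2 * c * t) = 1},
      ∃ x y : 𝓞 K, Ideal.Quotient.mk _ x = t.1 ∧ (m : 𝓞 K) * x = q * y := by
    rintro ⟨t, ht⟩
    obtain ⟨x, rfl⟩ := Ideal.Quotient.mk_surjective t
    have h1 : ∀ c : 𝓞 K, ∃ m : ℤ, Algebra.trace ℚ K ((2 * p * x / q : K) * c) = m := fun c => by
      have := ht (Ideal.Quotient.mk _ c)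
      have e2 : (2 : 𝓞 K ⧸ Ideal.span {q}) = Ideal.Quotient.mk _ 2 := rfl
      rw [e2, ← map_mul, ← map_mul, psi_mk] at this
      refine eTr_eq_one (Eq.trans (congrArg eTr ?_) this)
      rw [two_mul (c : 𝓞 K)]
      push_cast
      ring
    obtain ⟨s, hs⟩ := exists_of_trace_int' _ h1
    refine ⟨x, α * s + 2 * dK K * β * x, rfl, ?_⟩
    have hs' : (dK K : 𝓞 K) * 2 * p * x = q * s := by
      have : (dK K : K) * 2 * p * x = q * s := by
        rw [← hs]; field_simp
      apply RingOfIntegers.coe_injective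
      push_cast
      exact this
    rw [hm]
    push_cast
    rw [← h]
    linear_combination α * hs'
  choose x y hx hy using key
  refine Nat.card_le_card_of_injective (fun t => Ideal.Quotient.mk _ (y t)) fun t t' ht => ?_
  replace ht : Ideal.Quotient.mk _ (y t) = Ideal.Quotient.mk _ (y t') := ht
  rw [Ideal.Quotient.mk_eq_mk_iff_sub_mem, Ideal.mem_span_singleton] at ht
  obtain ⟨z, hz⟩ := ht
  apply Subtype.ext
  rw [← hx t, ← hx t', Ideal.Quotient.mk_eq_mk_iff_sub_mem, Ideal.mem_span_singleton]
  refine ⟨z, mul_left_cancel₀ hmO ?_⟩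
  linear_combination hy t - hy t' + q * hz

/-- The Gauss sum of a unimodular quaternary form modulo `q` is `O(N(q)²)`. -/
theorem gauss_bound (p q α β : 𝓞 K) (hq : q ≠ 0) (D : ℤ) (hD : D ≠ 0) (h : α * p + β * q = D)
    [Fintype (𝓞 K ⧸ Ideal.span {q})]
    (S T : Matrix (Fin 4) (Fin 4) (𝓞 K ⧸ Ideal.span {q})) (hS : S.transpose = S) (hTS : T * S = 1)
    (χ : AddChar (Fin 4 → 𝓞 K ⧸ Ideal.span {q}) ℂ) :
    ‖∑ c : Fin 4 → 𝓞 K ⧸ Ideal.span {q}, psi p q hq (c ⬝ᵥ S.mulVec c) * χ c‖ ≤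
      (∏ w : InfinitePlace K, |sg w (q : K)|) ^ 2 *
        (Nat.card (𝓞 K ⧸ Ideal.span {((2 * dK K * D : ℤ) : 𝓞 K)}) : ℝ) ^ 2 := by
  refine (gauss_ring _ S T hS hTS χ).trans ?_
  rw [natCard_quot]
  have := card_psi p q α β hq D hD h
  gcongr

end

end

/-! ### Dirichlet approximation by fractions -/

section

open NumberField

section
variable {K : Type*} [Field K] [NumberField K]

open scoped nonZeroDivisors in
open scoped Classical in
variable (K) in
/-- Minkowski's theorem for inverses of ideals of large norm. -/
theorem exists_small_mem_inv : ∃ B : ℕ, ∀ I : Ideal (𝓞 K), I ≠ ⊥ → B < Ideal.absNorm I →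
    ∃ κ : K, κ ≠ 0 ∧ (∀ x ∈ I, ∃ y : 𝓞 K, κ * x = y) ∧ ∀ w : InfinitePlace K, w κ < 1 := by
  let V := MeasureTheory.volume (ZSpan.fundamentalDomain (mixedEmbedding.latticeBasis K)) *
    (2 : ENNReal) ^ (Module.finrank ℝ (mixedEmbedding.mixedSpace K))
  have hV : V < ⊤ := by
    exact ENNReal.mul_lt_top (ZSpan.fundamentalDomain_isBounded _).measure_lt_top <|
      ENNReal.pow_lt_top ENNReal.ofNat_lt_top
  obtain ⟨B, hB⟩ := exists_nat_gt V.toReal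
  refine ⟨B, fun I hI hBI => ?_⟩
  have hI' : (I : FractionalIdeal (𝓞 K)⁰ K) ≠ 0 := by simpa using hI
  let J : (FractionalIdeal (𝓞 K)⁰ K)ˣ := (Units.mk0 _ hI')⁻¹
  have hJ : (J : FractionalIdeal (𝓞 K)⁰ K) = (I : FractionalIdeal (𝓞 K)⁰ K)⁻¹ := rfl
  have hn : FractionalIdeal.absNorm J.1 = (Ideal.absNorm I : ℚ)⁻¹ := by
    rw [hJ, map_inv₀, FractionalIdeal.coeIdeal_absNorm]
  have hbd : mixedEmbedding.minkowskiBound K J <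
      MeasureTheory.volume (mixedEmbedding.convexBodyLT K fun _ => 1) := by
    have h1 : mixedEmbedding.minkowskiBound K J < 1 := by
      rw [mixedEmbedding.minkowskiBound, mixedEmbedding.volume_fundamentalDomain_fractionalIdealLatticeBasis,
        mul_assoc]
      change _ * V < 1
      rw [hn, ← ENNReal.ofReal_toReal hV.ne, ← ENNReal.ofReal_mul (by positivity), ENNReal.ofReal_lt_one]
      have : (0 : ℝ) < Ideal.absNorm I := by
        have : 0 < Ideal.absNorm I := by omega
        exact_mod_cast this
      push_cast
      rw [inv_mul_lt_one₀ this]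
      exact hB.trans (by exact_mod_cast hBI)
    refine h1.trans_le ?_
    rw [mixedEmbedding.convexBodyLT_volume]
    simp only [ENNReal.coe_one, one_pow, Finset.prod_const_one, mul_one]
    exact_mod_cast mixedEmbedding.one_le_convexBodyLTFactor K
  obtain ⟨κ, hκ, h0, hw⟩ := mixedEmbedding.exists_ne_zero_mem_ideal_lt K J hbd
  refine ⟨κ, h0, fun x hx => ?_, by simpa using hw⟩
  rw [hJ, FractionalIdeal.mem_inv_iff hI'] at hκ
  have := hκ x (FractionalIdeal.mem_coeIdeal_of_mem _ hx)
  rw [FractionalIdeal.mem_one_iff] at this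
  obtain ⟨y, hy⟩ := this
  exact ⟨y, hy.symm⟩

variable [IsTotallyReal K]

variable (K) in
theorem exists_abs_sg_le : ∃ c : ℝ, 0 < c ∧ ∀ (f : InfinitePlace K → ℝ) (H : ℝ), (∀ k, |f k| ≤ H) →
    ∀ w, |(emb K).mulVec f w| ≤ c * H := by
  refine ⟨1 + ∑ w, ∑ k, |emb K w k|, by positivity, fun f H hf w => ?_⟩
  have hH : 0 ≤ H := by
    exact (abs_nonneg _).trans (hf w)
  calc |(emb K).mulVec f w| ≤ ∑ k, |emb K w k * f k| := Finset.abs_sum_le_sum_abs _ _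
    _ ≤ ∑ k, |emb K w k| * H := Finset.sum_le_sum fun k _ => by
        rw [abs_mul]; exact mul_le_mul_of_nonneg_left (hf k) (abs_nonneg _)
    _ = (∑ k, |emb K w k|) * H := by rw [Finset.sum_mul]
    _ ≤ _ := by
      gcongr
      have := Finset.single_le_sum (f := fun w => ∑ k, |emb K w k|)
        (fun w _ => Finset.sum_nonneg fun k _ => abs_nonneg _) (Finset.mem_univ w)
      linarith

open scoped Classical in
variable (K) in
/-- Simultaneous approximation by elements of `K`. -/
theorem exists_approx : ∃ C : ℝ, 0 < C ∧ ∀ (τ : InfinitePlace K → ℝ) (y : ℝ), 0 < y → y ≤ 1 →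
    ∃ p q : 𝓞 K, q ≠ 0 ∧ (∀ w, (sg w (q : K)) ^ 2 * y ≤ C) ∧
      ∀ w, (sg w (q : K) * τ w - sg w (p : K)) ^ 2 ≤ C * y := by
  obtain ⟨c, hc, hcb⟩ := exists_abs_sg_le K
  refine ⟨4 * c ^ 2, by positivity, fun τ y hy hy1 => ?_⟩
  let H : ℕ := ⌈(√y)⁻¹⌉₊
  have hsy : 0 < √y := Real.sqrt_pos.mpr hy
  have hsy1 : √y ≤ 1 := Real.sqrt_le_one.mpr hy1
  have hH1 : (√y)⁻¹ ≤ H := Nat.le_ceil _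
  have hH2 : (H : ℝ) ≤ 2 * (√y)⁻¹ := by
    have := Nat.ceil_lt_add_one (a := (√y)⁻¹) (by positivity)
    have h1 : 1 ≤ (√y)⁻¹ := (one_le_inv₀ hsy).mpr hsy1
    change ((⌈(√y)⁻¹⌉₊ : ℕ) : ℝ) ≤ _
    linarith
  have hH0 : (0 : ℝ) < H := (inv_pos.mpr hsy).trans_le hH1
  have hHn : 0 < H := by exact_mod_cast hH0
  -- the coordinates of `τ q` on the integral basis
  let X : (InfinitePlace K → Fin (H + 1)) → InfinitePlace K → ℝ := fun n =>
    (emb K)⁻¹.mulVec fun w => (emb K).mulVec (fun k => ((n k : ℕ) : ℝ)) w * τ w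
  let bx : (InfinitePlace K → Fin (H + 1)) → InfinitePlace K → Fin H := fun n w =>
    ⟨⌊Int.fract (X n w) * H⌋₊, by
      rw [Nat.floor_lt (mul_nonneg (Int.fract_nonneg _) hH0.le)]
      have := Int.fract_lt_one (X n w)
      nlinarith⟩
  obtain ⟨n, n', hne, hbx⟩ : ∃ n n', n ≠ n' ∧ bx n = bx n' := by
    refine Fintype.exists_ne_map_eq_of_card_lt bx ?_
    rw [Fintype.card_fun, Fintype.card_fun, Fintype.card_fin, Fintype.card_fin]
    exact Nat.pow_lt_pow_left (Nat.lt_succ_self H) (Fintype.card_ne_zero)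
  let a : InfinitePlace K → ℤ := fun k => (n k : ℤ) - (n' k : ℤ)
  let b : InfinitePlace K → ℤ := fun k => ⌊X n k⌋ - ⌊X n' k⌋
  have hint : ∀ (f : InfinitePlace K → ℤ) w, sg w ((∑ l, f l • ib K l : 𝓞 K) : K) =
      ((emb K).mulVec fun i => (f i : ℝ)) w := fun f w => by
    rw [sg_eq_sum]
    congr 1
    ext l
    rw [(ib K).repr_sum_self]
  have hXd : ∀ k, |X n k - X n' k - b k| ≤ √y := fun k => by
    have h1 := congrArg Fin.val (congrFun hbx k)
    simp only [bx] at h1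
    have h2 := Nat.floor_le (mul_nonneg (Int.fract_nonneg (X n k)) hH0.le)
    have h3 := Nat.lt_floor_add_one (Int.fract (X n k) * H)
    have h4 := Nat.floor_le (mul_nonneg (Int.fract_nonneg (X n' k)) hH0.le)
    have h5 := Nat.lt_floor_add_one (Int.fract (X n' k) * H)
    rw [h1] at h2 h3
    have h6 : X n k - X n' k - b k = Int.fract (X n k) - Int.fract (X n' k) := by
      simp only [b, Int.fract]; push_cast; ring
    rw [h6]
    have h7 : |(Int.fract (X n k) - Int.fract (X n' k)) * H| ≤ 1 := by
      rw [abs_le]; constructor <;> linarith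
    rw [abs_mul, abs_of_pos hH0] at h7
    calc _ ≤ 1 / (H : ℝ) := by rwa [le_div_iff₀ hH0]
      _ ≤ √y := by rw [one_div]; exact inv_le_of_inv_le₀ hsy hH1
  refine ⟨∑ l, b l • ib K l, ∑ l, a l • ib K l, ?_, fun w => ?_, fun w => ?_⟩
  · intro h
    apply hne
    have h1 := (ib K).repr_sum_self a
    rw [h] at h1
    ext k
    have h2 := congrFun h1 k
    simp only [map_zero, Finsupp.coe_zero, Pi.zero_apply, a] at h2
    omega
  · rw [hint]
    have h1 := hcb (fun k => (a k : ℝ)) H (fun k => by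
      have h1 := (n k).2
      have h2 := (n' k).2
      have : |a k| ≤ H := by simp only [a]; rw [abs_le]; omega
      exact_mod_cast this) w
    have h2 : |(emb K).mulVec (fun k => (a k : ℝ)) w| ≤ 2 * c * (√y)⁻¹ := h1.trans (by nlinarith)
    have h3 := pow_le_pow_left₀ (abs_nonneg _) h2 2
    rw [sq_abs] at h3
    calc _ ≤ (2 * c * (√y)⁻¹) ^ 2 * y := by gcongr
      _ = 4 * c ^ 2 * ((√y)⁻¹ ^ 2 * y) := by ring
      _ = 4 * c ^ 2 := by rw [inv_pow, Real.sq_sqrt hy.le, inv_mul_cancel₀ hy.ne', mul_one]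
  · rw [hint, hint]
    have hB : IsUnit (emb K).det := isUnit_iff_ne_zero.mpr det_emb_ne_zero
    have hX : ∀ m, (emb K).mulVec (X m) = fun w => (emb K).mulVec (fun k => ((m k : ℕ) : ℝ)) w * τ w := by
      intro m
      simp only [X]
      rw [Matrix.mulVec_mulVec, Matrix.mul_nonsing_inv _ hB, Matrix.one_mulVec]
    have h1 := hcb (fun k => X n k - X n' k - b k) (√y) hXd w
    have e1 : (fun k => X n k - X n' k - (b k : ℝ)) = X n - X n' - fun k => (b k : ℝ) := rfl
    have e2 : (fun k => (a k : ℝ)) = (fun k => ((n k : ℕ) : ℝ)) - fun k => ((n' k : ℕ) : ℝ) := by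
      ext k; simp [a]
    rw [e1, Matrix.mulVec_sub, Matrix.mulVec_sub, hX, hX] at h1
    have e3 : (emb K).mulVec (fun k => (a k : ℝ)) w * τ w - (emb K).mulVec (fun k => (b k : ℝ)) w =
        ((fun w => (emb K).mulVec (fun k => ((n k : ℕ) : ℝ)) w * τ w) -
          (fun w => (emb K).mulVec (fun k => ((n' k : ℕ) : ℝ)) w * τ w) -
          (emb K).mulVec (fun k => (b k : ℝ))) w := by
      rw [e2, Matrix.mulVec_sub]
      simp only [Pi.sub_apply]
      ring
    rw [e3]
    have h3 := pow_le_pow_left₀ (abs_nonneg _) h1 2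
    rw [sq_abs, mul_pow, Real.sq_sqrt hy.le] at h3
    refine h3.trans ?_
    nlinarith [mul_pos (pow_pos hc 2) hy]

variable (K) in
/-- Simultaneous approximation by fractions `p/q` with almost coprime `p`, `q`. -/
theorem exists_dirichlet : ∃ (C : ℝ) (D : ℤ), 0 < C ∧ D ≠ 0 ∧
    ∀ (τ : InfinitePlace K → ℝ) (y : ℝ), 0 < y → y ≤ 1 →
    ∃ p q α β : 𝓞 K, q ≠ 0 ∧ α * p + β * q = D ∧ (∀ w, (sg w (q : K)) ^ 2 * y ≤ C) ∧
      ∀ w, (sg w (q : K) * τ w - sg w (p : K)) ^ 2 ≤ C * y := by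
  obtain ⟨C, hC, happ⟩ := exists_approx K
  obtain ⟨B, hB⟩ := exists_small_mem_inv K
  refine ⟨C, (B.factorial : ℕ), hC, by exact_mod_cast B.factorial_ne_zero, fun τ y hy hy1 => ?_⟩
  -- Among all admissible pairs, one with minimal `|N(q)|` generates an ideal of bounded norm, since
  -- multiplication by a small element of the inverse ideal would decrease the norm of `q`.
  let P : ℕ → Prop := fun N => ∃ p q : 𝓞 K, q ≠ 0 ∧ (∀ w, (sg w (q : K)) ^ 2 * y ≤ C) ∧
      (∀ w, (sg w (q : K) * τ w - sg w (p : K)) ^ 2 ≤ C * y) ∧ (Algebra.norm ℤ q).natAbs = N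
  have hP : ∃ N, P N := by
    obtain ⟨p, q, h1, h2, h3⟩ := happ τ y hy hy1
    exact ⟨_, p, q, h1, h2, h3, rfl⟩
  classical
  obtain ⟨p, q, hq, h1, h2, hN⟩ := Nat.find_spec hP
  have hmin : ∀ M, P M → Nat.find hP ≤ M := fun M hM => Nat.find_min' hP hM
  have hI : Ideal.span {p, q} ≠ ⊥ := by
    intro h
    rw [Ideal.span_eq_bot] at h
    exact hq (h q (by simp))
  have hle : Ideal.absNorm (Ideal.span {p, q}) ≤ B := by
    by_contra! hlt
    obtain ⟨κ, hκ0, hκ, hκw⟩ := hB _ hI hlt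
    obtain ⟨p', hp'⟩ := hκ p (Ideal.subset_span (by simp))
    obtain ⟨q', hq'⟩ := hκ q (Ideal.subset_span (by simp))
    have hκ2 : ∀ w, sg w κ ^ 2 ≤ 1 := fun w => by
      rw [← sq_abs, abs_sg]
      exact pow_le_one₀ (apply_nonneg _ _) (hκw w).le
    have hqK : (q : K) ≠ 0 := by exact_mod_cast hq
    have hq0 : q' ≠ 0 := by
      rintro rfl
      exact mul_ne_zero hκ0 hqK hq'
    have hlt2 : (Algebra.norm ℤ q').natAbs < (Algebra.norm ℤ q).natAbs := by
      have e : ∀ x : 𝓞 K, (((Algebra.norm ℤ x).natAbs : ℕ) : ℝ) = ∏ w, |sg w (x : K)| := fun x => by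
        rw [prod_abs_sg, ← Algebra.coe_norm_int]
        simp [Nat.cast_natAbs]
      have h5 : (((Algebra.norm ℤ q').natAbs : ℕ) : ℝ) < ((Algebra.norm ℤ q).natAbs : ℕ) := by
        rw [e, e]
        refine Finset.prod_lt_prod_of_nonempty (fun w _ => ?_) (fun w _ => ?_) Finset.univ_nonempty
        · rw [abs_pos]
          exact (map_ne_zero _).mpr (by exact_mod_cast hq0)
        · rw [← hq', map_mul, abs_mul, abs_sg w κ]
          have : 0 < |sg w (q : K)| := abs_pos.mpr ((map_ne_zero _).mpr hqK)
          have := hκw w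
          nlinarith
      exact_mod_cast h5
    refine absurd (hmin _ ⟨p', q', hq0, fun w => ?_, fun w => ?_, rfl⟩) (by omega)
    · rw [← hq', map_mul, mul_pow]
      have := h1 w
      have h0 : 0 ≤ sg w (q : K) ^ 2 * y := by positivity
      nlinarith [hκ2 w]
    · rw [← hq', ← hp', map_mul, map_mul]
      have e : sg w κ * sg w (q : K) * τ w - sg w κ * sg w (p : K) =
        sg w κ * (sg w (q : K) * τ w - sg w (p : K)) := by ring
      rw [e, mul_pow]
      have := h2 w
      nlinarith [hκ2 w, sq_nonneg (sg w (q : K) * τ w - sg w (p : K))]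
  have hpos : 0 < Ideal.absNorm (Ideal.span {p, q}) :=
    Nat.pos_of_ne_zero (by rwa [Ne, Ideal.absNorm_eq_zero_iff])
  have hmem : ((B.factorial : ℕ) : 𝓞 K) ∈ Ideal.span {p, q} := by
    obtain ⟨k, hk⟩ := Nat.dvd_factorial hpos hle
    rw [hk, Nat.cast_mul]
    exact Ideal.mul_mem_right _ _ (Ideal.absNorm_mem _)
  obtain ⟨α, β, hαβ⟩ := Ideal.mem_span_pair.mp hmem
  exact ⟨p, q, α, β, hq, by rw [hαβ]; simp, h1, h2⟩

end

end

/-! ### Lattice matrices of quaternary forms -/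

section

open NumberField

section
open scoped Kronecker
variable {J : Type*} [Fintype J] [DecidableEq J]

/-- The block matrix sending a family of four coordinate vectors `(f l)` on a lattice with
basis matrix `B` to the vectors `U w (B f)_w`. -/
def big (U : J → Matrix (Fin 4) (Fin 4) ℝ) (B : Matrix J J ℝ) : Matrix (Fin 4 × J) (Fin 4 × J) ℝ :=
  Matrix.blockDiagonal U * (1 : Matrix (Fin 4) (Fin 4) ℝ) ⊗ₖ B

omit [DecidableEq J] in
theorem one_kron_mulVec (B : Matrix J J ℝ) (f : Fin 4 × J → ℝ) (l : Fin 4) (w : J) :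
    ((1 : Matrix (Fin 4) (Fin 4) ℝ) ⊗ₖ B).mulVec f (l, w) = B.mulVec (fun k => f (l, k)) w := by
  simp only [Matrix.mulVec, dotProduct, Fintype.sum_prod_type, Matrix.kronecker_apply]
  rw [Finset.sum_eq_single l]
  · simp
  · intro b _ hb
    simp [Matrix.one_apply_ne hb.symm]
  · simp

theorem blockDiagonal_mulVec (U : J → Matrix (Fin 4) (Fin 4) ℝ) (f : Fin 4 × J → ℝ)
    (i : Fin 4) (w : J) :
    (Matrix.blockDiagonal U).mulVec f (i, w) = (U w).mulVec (fun l => f (l, w)) i := by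
  simp only [Matrix.mulVec, dotProduct, Fintype.sum_prod_type, Matrix.blockDiagonal_apply]
  refine Finset.sum_congr rfl fun l _ => ?_
  simp

theorem big_mulVec (U : J → Matrix (Fin 4) (Fin 4) ℝ) (B : Matrix J J ℝ) (f : Fin 4 × J → ℝ)
    (i : Fin 4) (w : J) :
    (big U B).mulVec f (i, w) = (U w).mulVec (fun l => B.mulVec (fun k => f (l, k)) w) i := by
  rw [big, ← Matrix.mulVec_mulVec, blockDiagonal_mulVec]
  simp_rw [one_kron_mulVec]

theorem det_big (U : J → Matrix (Fin 4) (Fin 4) ℝ) (B : Matrix J J ℝ) :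
    (big U B).det = (∏ w, (U w).det) * B.det ^ 4 := by
  rw [big, Matrix.det_mul, Matrix.det_blockDiagonal, Matrix.det_kronecker]
  simp

theorem big_inv_transpose (U : J → Matrix (Fin 4) (Fin 4) ℝ) (hU : ∀ w, (U w).det ≠ 0)
    (B : Matrix J J ℝ) :
    (big U B)⁻¹.transpose = big (fun w => (U w)⁻¹.transpose) B⁻¹.transpose := by
  have h : (Matrix.blockDiagonal U)⁻¹ = Matrix.blockDiagonal fun w => (U w)⁻¹ := by
    refine Matrix.inv_eq_right_inv ?_
    rw [← Matrix.blockDiagonal_mul]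
    have : (fun k => U k * (U k)⁻¹) = 1 := by
      ext1 w
      exact Matrix.mul_nonsing_inv _ (isUnit_iff_ne_zero.mpr (hU w))
    rw [this, Matrix.blockDiagonal_one]
  rw [big, Matrix.mul_inv_rev, h, Matrix.transpose_mul, Matrix.inv_kronecker, inv_one,
    Matrix.blockDiagonal_transpose, ← Matrix.kroneckerMap_transpose, Matrix.transpose_one]
  rfl
end

end

/-! ### Theta series and residue classes -/

section

open NumberField

section
variable {K : Type*} [Field K] [NumberField K] [IsTotallyReal K]

variable (K) in
/-- Quadruples of algebraic integers in terms of their integral coordinates. -/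
noncomputable def xe : (Fin 4 × InfinitePlace K → ℤ) ≃ (Fin 4 → 𝓞 K) :=
  (Equiv.curry _ _ _).trans (Equiv.piCongrRight fun _ => (ib K).equivFun.symm.toEquiv)

theorem xe_apply (n : Fin 4 × InfinitePlace K → ℤ) (l : Fin 4) :
    xe K n l = ∑ k, n (l, k) • ib K k := by
  change (ib K).equivFun.symm (fun k => n (l, k)) = _
  rw [Module.Basis.equivFun_symm_apply]

theorem xe_add (n m : Fin 4 × InfinitePlace K → ℤ) : xe K (n + m) = xe K n + xe K m := by
  ext l
  simp [xe_apply, add_smul, Finset.sum_add_distrib]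

theorem emb_mulVec_xe (n : Fin 4 × InfinitePlace K → ℤ) (l : Fin 4) (w : InfinitePlace K) :
    (emb K).mulVec (fun k => (n (l, k) : ℝ)) w = sg w (xe K n l : K) := by
  rw [sg_eq_sum, xe_apply, (ib K).repr_sum_self]

omit [NumberField K] [IsTotallyReal K] in
/-- Decomposition of a sum over quadruples of integers into residue classes modulo `q`. -/
theorem tsum_cosets (q : 𝓞 K) (hq : q ≠ 0) [Fintype (𝓞 K ⧸ Ideal.span {q})]
    (F : (Fin 4 → 𝓞 K) → ℂ) (hF : Summable F) :
    ∑' x, F x = ∑ c : Fin 4 → 𝓞 K ⧸ Ideal.span {q},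
      ∑' m : Fin 4 → 𝓞 K, F (fun l => Quotient.out (c l) + q * m l) := by
  let Φ : (Fin 4 → 𝓞 K ⧸ Ideal.span {q}) × (Fin 4 → 𝓞 K) → (Fin 4 → 𝓞 K) :=
    fun z l => Quotient.out (z.1 l) + q * z.2 l
  have hmk : ∀ z l, Ideal.Quotient.mk (Ideal.span {q}) (Φ z l) = z.1 l := fun z l => by
    simp only [Φ]
    rw [map_add, map_mul, Ideal.Quotient.mk_out, Ideal.Quotient.eq_zero_iff_mem.mpr
      (Ideal.mem_span_singleton_self q), zero_mul, add_zero]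
  have hΦ : Function.Bijective Φ := by
    constructor
    · intro z z' h
      have h1 : z.1 = z'.1 := by
        ext1 l
        rw [← hmk z, ← hmk z', h]
      refine Prod.ext h1 ?_
      ext1 l
      have h2 := congrFun h l
      simp only [Φ, h1, add_right_inj] at h2
      exact mul_left_cancel₀ hq h2
    · intro x
      have : ∀ l, ∃ m, x l = Quotient.out (Ideal.Quotient.mk (Ideal.span {q}) (x l)) + q * m := fun l => by
        have h : Ideal.Quotient.mk (Ideal.span {q}) (x l) = Ideal.Quotient.mk _
          (Quotient.out (Ideal.Quotient.mk (Ideal.span {q}) (x l))) := (Ideal.Quotient.mk_out _).symm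
        rw [Ideal.Quotient.mk_eq_mk_iff_sub_mem, Ideal.mem_span_singleton] at h
        obtain ⟨m, hm⟩ := h
        exact ⟨m, by rw [← hm]; ring⟩
      choose m hm using this
      exact ⟨(fun l => Ideal.Quotient.mk _ (x l), m), funext fun l => (hm l).symm⟩
  let e := Equiv.ofBijective Φ hΦ
  have h := Summable.tsum_prod ((e.summable_iff).mpr hF)
  rw [← e.tsum_eq]
  exact h.trans (tsum_fintype _)

omit [NumberField K] [IsTotallyReal K] in
/-- A character of `𝓞⁴` that is trivial on multiples of `q` descends to `(𝓞/q)⁴`. -/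
theorem exists_addChar (q : 𝓞 K) (f : (Fin 4 → 𝓞 K) → ℂ) (hf0 : f 0 = 1)
    (hf : ∀ x y, f (x + y) = f x * f y) (hfq : ∀ x : Fin 4 → 𝓞 K, f (fun l => q * x l) = 1) :
    ∃ χ : AddChar (Fin 4 → 𝓞 K ⧸ Ideal.span {q}) ℂ, ∀ x : Fin 4 → 𝓞 K,
      χ (fun l => Ideal.Quotient.mk _ (x l)) = f x := by
  have hwd : ∀ x y : Fin 4 → 𝓞 K, (∀ l, Ideal.Quotient.mk (Ideal.span {q}) (x l) =
      Ideal.Quotient.mk _ (y l)) → f x = f y := fun x y h => by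
    have : ∀ l, ∃ z, x l = y l + q * z := fun l => by
      have := h l
      rw [Ideal.Quotient.mk_eq_mk_iff_sub_mem, Ideal.mem_span_singleton] at this
      obtain ⟨z, hz⟩ := this
      exact ⟨z, by rw [← hz]; ring⟩
    choose z hz using this
    have e : x = y + fun l => q * z l := funext hz
    rw [e, hf, hfq, mul_one]
  refine ⟨{ toFun := fun c => f fun l => Quotient.out (c l)
            map_zero_eq_one' := ?_
            map_add_eq_mul' := fun a b => ?_ }, fun x => ?_⟩
  · rw [← hf0]
    exact hwd _ _ fun l => by rw [Ideal.Quotient.mk_out]; rfl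
  · rw [← hf]
    exact hwd _ _ fun l => by
      rw [Pi.add_apply, Pi.add_apply, map_add, Ideal.Quotient.mk_out, Ideal.Quotient.mk_out,
        Ideal.Quotient.mk_out]
  · exact hwd _ _ fun l => by rw [Ideal.Quotient.mk_out]

theorem sum_sq_eq (U : InfinitePlace K → Matrix (Fin 4) (Fin 4) ℝ) (S : Matrix (Fin 4) (Fin 4) (𝓞 K))
    (hU : ∀ w, (U w).transpose * U w = S.map fun s => sg w (s : K))
    (x : Fin 4 → 𝓞 K) (w : InfinitePlace K) :
    ∑ i, ((U w).mulVec (fun l => sg w (x l : K)) i) ^ 2 = sg w ((x ⬝ᵥ S.mulVec x : 𝓞 K) : K) := by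
  have h1 : ∑ i, ((U w).mulVec (fun l => sg w (x l : K)) i) ^ 2 =
      (U w).mulVec (fun l => sg w (x l : K)) ⬝ᵥ (U w).mulVec (fun l => sg w (x l : K)) := by
    simp only [dotProduct, sq]
  rw [h1, Matrix.dotProduct_mulVec, Matrix.vecMul_mulVec, hU, ← Matrix.dotProduct_mulVec]
  simp [dotProduct, Matrix.mulVec, Finset.mul_sum]

open scoped Classical in
/-- The Gaussian attached to the form `S` at a lattice vector. -/
theorem gau_eq (U : InfinitePlace K → Matrix (Fin 4) (Fin 4) ℝ) (S : Matrix (Fin 4) (Fin 4) (𝓞 K))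
    (hU : ∀ w, (U w).transpose * U w = S.map fun s => sg w (s : K)) (ω : InfinitePlace K → ℂ)
    (n : Fin 4 × InfinitePlace K → ℤ) :
    gau (big U (emb K)) (fun r => ω r.2) (fun r => (n r : ℝ)) =
      Complex.exp (-Real.pi * ∑ w, ω w * (sg w ((xe K n ⬝ᵥ S.mulVec (xe K n) : 𝓞 K) : K) : ℝ)) := by
  rw [gau]
  congr 2
  rw [Fintype.sum_prod_type_right]
  refine Finset.sum_congr rfl fun w _ => ?_
  rw [← sum_sq_eq U S hU]
  push_cast
  rw [Finset.mul_sum]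
  refine Finset.sum_congr rfl fun i _ => ?_
  rw [big_mulVec]
  simp_rw [emb_mulVec_xe]

/-- The shifted parameter `y - 2i(τ - p/q)`. -/
noncomputable def om (p q : 𝓞 K) (y : ℝ) (τ : InfinitePlace K → ℝ) (w : InfinitePlace K) : ℂ :=
  y - 2 * Complex.I * ((τ w - sg w (p : K) / sg w (q : K) : ℝ) : ℂ)

theorem exp_om (p q : 𝓞 K) (y : ℝ) (τ : InfinitePlace K → ℝ) (s : 𝓞 K) :
    Complex.exp (-Real.pi * ∑ w, (y - 2 * Complex.I * (τ w : ℂ)) * (sg w (s : K) : ℝ)) =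
    Complex.exp (-Real.pi * ∑ w, om p q y τ w * (sg w (s : K) : ℝ)) * eTr ((p : K) * s / q) := by
  have : ((Algebra.trace ℚ K ((p : K) * s / q) : ℚ) : ℂ) =
      ((Algebra.trace ℚ K ((p : K) * s / q) : ℝ) : ℂ) := by simp
  rw [eTr, this, trace_eq_sum_sg, ← Complex.exp_add]
  congr 1
  push_cast
  rw [Finset.mul_sum, Finset.mul_sum, Finset.mul_sum, ← Finset.sum_add_distrib]
  refine Finset.sum_congr rfl fun w _ => ?_
  simp only [om, map_div₀, map_mul]
  push_cast
  ring
end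

end

/-! ### Transformation at a cusp -/

section

open NumberField

section
variable {K : Type*} [Field K] [NumberField K] [IsTotallyReal K]

open scoped Classical in
/-- The real coordinates of `x / q`. -/
noncomputable def vq (q : 𝓞 K) (x : Fin 4 → 𝓞 K) (r : Fin 4 × InfinitePlace K) : ℝ :=
  ((emb K)⁻¹.mulVec fun w => sg w (x r.1 : K) / sg w (q : K)) r.2

open scoped Classical in
theorem emb_mulVec_vq (q : 𝓞 K) (x : Fin 4 → 𝓞 K) (l : Fin 4) :
    (emb K).mulVec (fun k => vq q x (l, k)) = fun w => sg w (x l : K) / sg w (q : K) := by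
  have : (fun k => vq q x (l, k)) =
      (emb K)⁻¹.mulVec fun w => sg w (x l : K) / sg w (q : K) := by
    ext k
    simp only [vq]
  rw [this, Matrix.mulVec_mulVec, Matrix.mul_nonsing_inv _ (isUnit_iff_ne_zero.mpr det_emb_ne_zero),
    Matrix.one_mulVec]

open scoped Classical in
theorem vq_add (q : 𝓞 K) (x y : Fin 4 → 𝓞 K) : vq q (x + y) = vq q x + vq q y := by
  ext r
  have h : (fun w => sg w ((x + y) r.1 : K) / sg w (q : K)) =
      (fun w => sg w (x r.1 : K) / sg w (q : K)) + fun w => sg w (y r.1 : K) / sg w (q : K) := by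
    ext w
    simp [add_div]
  rw [Pi.add_apply]
  simp only [vq]
  rw [h, Matrix.mulVec_add, Pi.add_apply]

open scoped Classical in
theorem vq_mul (q : 𝓞 K) (hq : q ≠ 0) (n : Fin 4 × InfinitePlace K → ℤ) :
    vq q (fun l => q * xe K n l) = fun r => (n r : ℝ) := by
  ext ⟨l, k⟩
  have h : (fun w => sg w ((q * xe K n l : 𝓞 K) : K) / sg w (q : K)) =
      (emb K).mulVec fun k => (n (l, k) : ℝ) := by
    ext w
    rw [emb_mulVec_xe]
    have : sg w (q : K) ≠ 0 := (map_ne_zero _).mpr (by exact_mod_cast hq)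
    push_cast
    rw [map_mul]
    field_simp
  simp only [vq]
  rw [h, Matrix.mulVec_mulVec, Matrix.nonsing_inv_mul _ (isUnit_iff_ne_zero.mpr det_emb_ne_zero),
    Matrix.one_mulVec]

/-- The characters of `(𝓞/q)⁴` attached to the dual lattice. -/
theorem exists_chi (q : 𝓞 K) (hq : q ≠ 0) (k : Fin 4 × InfinitePlace K → ℤ) :
    ∃ χ : AddChar (Fin 4 → 𝓞 K ⧸ Ideal.span {q}) ℂ, ∀ x : Fin 4 → 𝓞 K,
      χ (fun l => Ideal.Quotient.mk _ (x l)) =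
        Complex.exp (2 * Real.pi * Complex.I * ∑ r, (k r : ℂ) * (vq q x r : ℂ)) := by
  refine exists_addChar q (fun x =>
    Complex.exp (2 * Real.pi * Complex.I * ∑ r, (k r : ℂ) * (vq q x r : ℂ))) ?_ ?_ ?_
  · have : vq q 0 = 0 := by
      have := vq_add q 0 0
      simpa using this
    simp [this]
  · intro x y
    rw [← Complex.exp_add, vq_add, ← mul_add, ← Finset.sum_add_distrib]
    congr 2
    refine Finset.sum_congr rfl fun r _ => ?_
    simp [mul_add]
  · intro x
    obtain ⟨n, rfl⟩ := (xe K).surjective x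
    rw [vq_mul q hq, Complex.exp_eq_one_iff]
    refine ⟨∑ r, k r * n r, ?_⟩
    push_cast
    ring

omit [NumberField K] in
theorem om_re (p q : 𝓞 K) (y : ℝ) (τ : InfinitePlace K → ℝ) (w : InfinitePlace K) :
    (om p q y τ w).re = y := by
  simp [om]

open scoped Classical in
theorem big_mulVec_shift (q : 𝓞 K) (hq : q ≠ 0) (U : InfinitePlace K → Matrix (Fin 4) (Fin 4) ℝ)
    (a : Fin 4 → 𝓞 K) (n : Fin 4 × InfinitePlace K → ℤ) :
    (big U (emb K)).mulVec (fun r => ((xe K).symm (fun l => a l + q * xe K n l) r : ℝ)) =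
      (big (fun w => sg w (q : K) • U w) (emb K)).mulVec (vq q a + fun r => (n r : ℝ)) := by
  ext ⟨i, w⟩
  have hq' : sg w (q : K) ≠ 0 := (map_ne_zero _).mpr (by exact_mod_cast hq)
  have e1 : (fun l => (emb K).mulVec (fun k => (vq q a + fun r => (n r : ℝ)) (l, k)) w) =
      fun l => sg w (a l : K) / sg w (q : K) + sg w (xe K n l : K) := by
    ext l
    have : (fun k => (vq q a + fun r => (n r : ℝ)) (l, k)) =
        (fun k => vq q a (l, k)) + fun k => (n (l, k) : ℝ) := rfl
    rw [this, Matrix.mulVec_add, Pi.add_apply, emb_mulVec_vq, emb_mulVec_xe]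
  have e2 : (fun l => (emb K).mulVec
      (fun k => ((xe K).symm (fun l => a l + q * xe K n l) (l, k) : ℝ)) w) =
      sg w (q : K) • fun l => sg w (a l : K) / sg w (q : K) + sg w (xe K n l : K) := by
    ext l
    rw [emb_mulVec_xe, Equiv.apply_symm_apply, Pi.smul_apply, smul_eq_mul]
    push_cast
    rw [map_add, map_mul]
    field_simp
  rw [big_mulVec, big_mulVec, e1, e2, Matrix.mulVec_smul, Matrix.smul_mulVec]

theorem gau_congr {n : Type*} [Fintype n] {M N : Matrix n n ℝ} {w : n → ℂ} {x y : n → ℝ}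
    (h : M.mulVec x = N.mulVec y) : gau M w x = gau N w y := by
  rw [gau, gau, h]

omit [NumberField K] [IsTotallyReal K] in
theorem quot_shift (q : 𝓞 K) (S : Matrix (Fin 4) (Fin 4) (𝓞 K))
    (c : Fin 4 → 𝓞 K ⧸ Ideal.span {q}) (m : Fin 4 → 𝓞 K) :
    Ideal.Quotient.mk (Ideal.span {q})
      ((fun l => Quotient.out (c l) + q * m l) ⬝ᵥ S.mulVec fun l => Quotient.out (c l) + q * m l) =
      c ⬝ᵥ (S.map (Ideal.Quotient.mk _)).mulVec c := by
  have e2 : ∀ l, Ideal.Quotient.mk (Ideal.span {q}) (Quotient.out (c l) + q * m l) = c l :=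
    fun l => by
      rw [map_add, map_mul, Ideal.Quotient.mk_out, Ideal.Quotient.eq_zero_iff_mem.mpr
        (Ideal.mem_span_singleton_self q), zero_mul, add_zero]
  simp only [dotProduct, Matrix.mulVec, map_sum, map_mul, e2, Matrix.map_apply]

set_option maxHeartbeats 1000000 in
open scoped Classical in
/-- Modular transformation of the theta series at the cusp `p/q`. -/
theorem theta_coset (p q : 𝓞 K) (hq : q ≠ 0) (y : ℝ) (hy : 0 < y) (τ : InfinitePlace K → ℝ)
    [Fintype (𝓞 K ⧸ Ideal.span {q})]
    (U : InfinitePlace K → Matrix (Fin 4) (Fin 4) ℝ) (S : Matrix (Fin 4) (Fin 4) (𝓞 K))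
    (hU : ∀ w, (U w).transpose * U w = S.map fun s => sg w (s : K)) (hd : ∀ w, (U w).det ≠ 0) :
    ∃ χ : (Fin 4 × InfinitePlace K → ℤ) → AddChar (Fin 4 → 𝓞 K ⧸ Ideal.span {q}) ℂ,
      (∀ c, χ 0 c = 1) ∧
      ∑' n : Fin 4 × InfinitePlace K → ℤ, gau (big U (emb K))
          (fun r => (y - 2 * Complex.I * (τ r.2 : ℂ))) (fun r => (n r : ℝ)) =
        ((|(big (fun w => sg w (q : K) • U w) (emb K)).det| : ℝ)⁻¹ *
          ∏ r : Fin 4 × InfinitePlace K, (1 / om p q y τ r.2) ^ (1 / 2 : ℂ)) *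
        ∑' k : Fin 4 × InfinitePlace K → ℤ,
          gau ((big (fun w => sg w (q : K) • U w) (emb K))⁻¹.transpose)
            (fun r => (om p q y τ r.2)⁻¹) (fun r => (k r : ℝ)) *
          ∑ c : Fin 4 → 𝓞 K ⧸ Ideal.span {q},
            psi p q hq (c ⬝ᵥ (S.map (Ideal.Quotient.mk _)).mulVec c) * χ k c := by
  have hqw : ∀ w : InfinitePlace K, sg w (q : K) ≠ 0 := fun w =>
    (map_ne_zero _).mpr (by exact_mod_cast hq)
  have hdM : (big (fun w => sg w (q : K) • U w) (emb K)).det ≠ 0 := by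
    rw [det_big]
    refine mul_ne_zero (Finset.prod_ne_zero_iff.mpr fun w _ => ?_) (pow_ne_zero _ det_emb_ne_zero)
    rw [Matrix.det_smul]
    exact mul_ne_zero (pow_ne_zero _ (hqw w)) (hd w)
  have hdU : (big U (emb K)).det ≠ 0 := by
    rw [det_big]
    exact mul_ne_zero (Finset.prod_ne_zero_iff.mpr fun w _ => hd w) (pow_ne_zero _ det_emb_ne_zero)
  choose χ hχ using exists_chi q hq
  have hout : ∀ c : Fin 4 → 𝓞 K ⧸ Ideal.span {q},
      (fun l => Ideal.Quotient.mk (Ideal.span {q}) (Quotient.out (c l))) = c := fun c => by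
    ext l
    exact Ideal.Quotient.mk_out _
  refine ⟨χ, fun c => ?_, ?_⟩
  · rw [← hout c, hχ]
    simp
  let ω : Fin 4 × InfinitePlace K → ℂ := fun r => om p q y τ r.2
  have hω : ∀ r, 0 < (ω r).re := fun r => by simp only [ω]; rw [om_re]; exact hy
  set M := big (fun w => sg w (q : K) • U w) (emb K) with hM
  let F : (Fin 4 → 𝓞 K) → ℂ := fun x =>
    gau (big U (emb K)) ω (fun r => ((xe K).symm x r : ℝ)) *
      eTr ((p : K) * (x ⬝ᵥ S.mulVec x : 𝓞 K) / q)
  have hF1 : ∀ n : Fin 4 × InfinitePlace K → ℤ, gau (big U (emb K))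
      (fun r => (y - 2 * Complex.I * (τ r.2 : ℂ))) (fun r => (n r : ℝ)) = F (xe K n) := fun n => by
    simp only [F, Equiv.symm_apply_apply, ω]
    rw [gau_eq U S hU, ← exp_om]
    exact gau_eq U S hU (fun w => (y - 2 * Complex.I * (τ w : ℂ))) n
  have hFs : Summable F := by
    rw [← (xe K).summable_iff]
    have := summable_gau (big U (emb K)) hdU (fun r => (y - 2 * Complex.I * (τ r.2 : ℂ)))
      (fun r => by simpa using hy) 0
    refine this.congr fun n => ?_
    rw [zero_add]
    exact hF1 n
  simp_rw [hF1]
  rw [(xe K).tsum_eq, tsum_cosets q hq F hFs]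
  have hc : ∀ c : Fin 4 → 𝓞 K ⧸ Ideal.span {q},
      ∑' m : Fin 4 → 𝓞 K, F (fun l => Quotient.out (c l) + q * m l) =
        ((|M.det| : ℝ)⁻¹ * ∏ r : Fin 4 × InfinitePlace K, (1 / om p q y τ r.2) ^ (1 / 2 : ℂ)) *
        ∑' k : Fin 4 × InfinitePlace K → ℤ,
          gau (M⁻¹.transpose) (fun r => (om p q y τ r.2)⁻¹) (fun r => (k r : ℝ)) *
            (psi p q hq (c ⬝ᵥ (S.map (Ideal.Quotient.mk _)).mulVec c) * χ k c) := by
    intro c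
    set P := psi p q hq (c ⬝ᵥ (S.map (Ideal.Quotient.mk _)).mulVec c) with hP
    have h1 : ∀ n : Fin 4 × InfinitePlace K → ℤ,
        F (fun l => Quotient.out (c l) + q * xe K n l) =
          gau M ω (vq q (fun l => Quotient.out (c l)) + fun r => (n r : ℝ)) * P := by
      intro n
      have a1 : gau (big U (emb K)) ω
          (fun r => ((xe K).symm (fun l => Quotient.out (c l) + q * xe K n l) r : ℝ)) =
          gau M ω (vq q (fun l => Quotient.out (c l)) + fun r => (n r : ℝ)) :=
        gau_congr (big_mulVec_shift q hq U (fun l => Quotient.out (c l)) n)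
      have a2 := psi_mk p q hq ((fun l => Quotient.out (c l) + q * xe K n l) ⬝ᵥ
        S.mulVec fun l => Quotient.out (c l) + q * xe K n l)
      rw [quot_shift] at a2
      simp only [F]
      rw [a1, hP, a2]
    rw [← (xe K).tsum_eq]
    simp_rw [h1]
    rw [tsum_mul_right, poisson_gau M hdM ω hω, mul_assoc, ← tsum_mul_right]
    congr 1
    refine tsum_congr fun k => ?_
    have a3 := hχ k (fun l => Quotient.out (c l))
    rw [hout c] at a3
    rw [a3]
    ring
  simp_rw [hc]
  rw [← Finset.mul_sum]
  congr 1
  rw [← Summable.tsum_finsetSum]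
  · refine tsum_congr fun k => ?_
    rw [Finset.mul_sum]
  · intro c _
    refine Summable.of_norm_bounded (summable_gau_dual M hdM ω hω).norm fun k => ?_
    rw [norm_mul, norm_mul, AddChar.norm_apply, AddChar.norm_apply]
    simp [ω]
end

end

/-! ### Decay of the dual theta series -/

section

open NumberField

section
variable {K : Type*} [Field K] [NumberField K] [IsTotallyReal K]

open scoped Classical in
/-- Uniform decay of the non-constant terms of the dual theta series. The weights `Y` are arbitrary
as long as they are bounded below: a large product of weights is compensated by the norm of a
nonzero algebraic integer being at least one. -/
theorem dual_decay (U : InfinitePlace K → Matrix (Fin 4) (Fin 4) ℝ) (hd : ∀ w, (U w).det ≠ 0)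
    (c₀ : ℝ) (hc₀ : 0 < c₀) :
    ∃ B c : ℝ, 0 < B ∧ 0 < c ∧ ∀ Y : InfinitePlace K → ℝ, (∀ w, c₀ ≤ Y w) →
      ∀ k : Fin 4 × InfinitePlace K → ℤ, k ≠ 0 →
      (∏ w, Y w) * Real.exp (-Real.pi * ∑ r, Y r.2 *
        ((big (fun w => (U w)⁻¹.transpose) (emb K)⁻¹.transpose).mulVec (fun r => (k r : ℝ)) r) ^ 2) ≤
      B * Real.exp (-c * ∑ r, (k r : ℝ) ^ 2) := by
  have hdW : (big (fun w => (U w)⁻¹.transpose) (emb K)⁻¹.transpose).det ≠ 0 := by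
    rw [det_big]
    refine mul_ne_zero (Finset.prod_ne_zero_iff.mpr fun w _ => ?_) (pow_ne_zero _ ?_)
    · rw [Matrix.det_transpose, Matrix.det_nonsing_inv, Ring.inverse_eq_inv']
      exact inv_ne_zero (hd w)
    · rw [Matrix.det_transpose, Matrix.det_nonsing_inv, Ring.inverse_eq_inv']
      exact inv_ne_zero det_emb_ne_zero
  obtain ⟨c, hc, hcW⟩ := exists_sum_sq_le_mulVec _ hdW
  have hloc : ∀ w, ∃ c : ℝ, 0 < c ∧ ∀ x : Fin 4 → ℝ, c * ∑ i, x i ^ 2 ≤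
      ∑ i, ((U w)⁻¹.transpose.mulVec x i) ^ 2 := fun w =>
    exists_sum_sq_le_mulVec _ (by
      rw [Matrix.det_transpose, Matrix.det_nonsing_inv, Ring.inverse_eq_inv']
      exact inv_ne_zero (hd w))
  choose cw hcw hcU using hloc
  have hdK : (0 : ℝ) < (dK K : ℝ) ^ 2 := by
    have := dK_ne_zero (K := K)
    positivity
  set d := Fintype.card (InfinitePlace K) with hd'
  have hA : 0 < ∏ w, ((dK K : ℝ) ^ 2 / cw w) := Finset.prod_pos fun w _ => div_pos hdK (hcw w)
  refine ⟨(∏ w, ((dK K : ℝ) ^ 2 / cw w)) * d.factorial, c₀ * c, by positivity, by positivity, ?_⟩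
  intro Y hY k hk
  have hY0 : ∀ w, 0 < Y w := fun w => hc₀.trans_le (hY w)
  set W := big (fun w => (U w)⁻¹.transpose) (emb K)⁻¹.transpose with hW
  set E := ∑ r, Y r.2 * (W.mulVec (fun r => (k r : ℝ)) r) ^ 2 with hE
  have hE0 : 0 ≤ E := Finset.sum_nonneg fun r _ => mul_nonneg (hY0 _).le (sq_nonneg _)
  have hE1 : c₀ * c * ∑ r, (k r : ℝ) ^ 2 ≤ E := by
    calc c₀ * c * ∑ r, (k r : ℝ) ^ 2 = c₀ * (c * ∑ r, (k r : ℝ) ^ 2) := by ring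
      _ ≤ c₀ * ∑ r, (W.mulVec (fun r => (k r : ℝ)) r) ^ 2 := by gcongr; exact hcW _
      _ ≤ E := by
          rw [Finset.mul_sum]
          exact Finset.sum_le_sum fun r _ => mul_le_mul_of_nonneg_right (hY _) (sq_nonneg _)
  choose t ht using fun l => exists_dual_int' (K := K) fun i => k (l, i)
  obtain ⟨l, hl⟩ : ∃ l, t l ≠ 0 := by
    by_contra! hall
    apply hk
    have h0 : ∀ l w, (emb K)⁻¹.transpose.mulVec (fun i => (k (l, i) : ℝ)) w = 0 := fun l w => by
      have := ht l w
      rw [hall l] at this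
      have h2 : (dK K : ℝ) ≠ 0 := by exact_mod_cast dK_ne_zero
      simpa [h2] using this
    ext ⟨l, i⟩
    have h3 : (emb K).transpose.mulVec ((emb K)⁻¹.transpose.mulVec (fun i => (k (l, i) : ℝ))) = 0 := by
      rw [show (emb K)⁻¹.transpose.mulVec (fun i => (k (l, i) : ℝ)) = 0 from funext (h0 l),
        Matrix.mulVec_zero]
    rw [Matrix.mulVec_mulVec, ← Matrix.transpose_mul,
      Matrix.nonsing_inv_mul _ (isUnit_iff_ne_zero.mpr det_emb_ne_zero), Matrix.transpose_one,
      Matrix.one_mulVec] at h3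
    simpa using congrFun h3 i
  have hEw : ∀ w, Y w * (sg w (t l : K)) ^ 2 ≤ (dK K : ℝ) ^ 2 / cw w * E := by
    intro w
    rw [← ht l w]
    set v : Fin 4 → ℝ := fun l => (emb K)⁻¹.transpose.mulVec (fun i => (k (l, i) : ℝ)) w with hv
    have h1 : v l ^ 2 ≤ ∑ i, v i ^ 2 :=
      Finset.single_le_sum (f := fun i => v i ^ 2) (fun i _ => sq_nonneg _) (Finset.mem_univ l)
    have h2 := hcU w v
    have h3 : Y w * ∑ i, ((U w)⁻¹.transpose.mulVec v i) ^ 2 ≤ E := by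
      rw [hE, Fintype.sum_prod_type_right, Finset.mul_sum]
      refine (le_of_eq ?_).trans (Finset.single_le_sum (f := fun w => ∑ i, Y w *
        (W.mulVec (fun r => (k r : ℝ)) (i, w)) ^ 2) (fun w _ => Finset.sum_nonneg fun i _ =>
          mul_nonneg (hY0 _).le (sq_nonneg _)) (Finset.mem_univ w))
      refine Finset.sum_congr rfl fun i _ => ?_
      rw [hW, big_mulVec]
    have h4 : cw w * (Y w * v l ^ 2) ≤ E := by
      have := mul_le_mul_of_nonneg_left h2 (hY0 w).le
      have h5 := mul_le_mul_of_nonneg_left h1 (mul_pos (hcw w) (hY0 w)).le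
      nlinarith
    have := hcw w
    rw [mul_pow, div_mul_eq_mul_div, le_div_iff₀ this]
    nlinarith
  have hprod : ∏ w, Y w ≤ (∏ w, ((dK K : ℝ) ^ 2 / cw w)) * E ^ d := by
    calc ∏ w, Y w ≤ (∏ w, Y w) * (∏ w, |sg w (t l : K)|) ^ 2 := by
          refine le_mul_of_one_le_right (Finset.prod_nonneg fun w _ => (hY0 w).le) ?_
          exact one_le_pow₀ (one_le_prod_abs_sg _ hl)
      _ = ∏ w, Y w * (sg w (t l : K)) ^ 2 := by
          rw [← Finset.prod_pow, ← Finset.prod_mul_distrib]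
          simp
      _ ≤ ∏ w, ((dK K : ℝ) ^ 2 / cw w * E) :=
          Finset.prod_le_prod (fun w _ => mul_nonneg (hY0 w).le (sq_nonneg _)) fun w _ => hEw w
      _ = _ := by rw [Finset.prod_mul_distrib, Finset.prod_const, Finset.card_univ]
  have hfac : E ^ d ≤ d.factorial * Real.exp E := by
    have := Real.pow_div_factorial_le_exp E hE0 d
    rw [div_le_iff₀ (by positivity)] at this
    linarith
  have hpi : -Real.pi * E ≤ -E - E := by nlinarith [Real.pi_gt_three]
  calc (∏ w, Y w) * Real.exp (-Real.pi * E) ≤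
        ((∏ w, ((dK K : ℝ) ^ 2 / cw w)) * (d.factorial * Real.exp E)) * Real.exp (-E - E) := by
        gcongr
        exact hprod.trans (by gcongr)
    _ = (∏ w, ((dK K : ℝ) ^ 2 / cw w)) * d.factorial * Real.exp (-E) := by
        rw [sub_eq_add_neg (-E), Real.exp_add, Real.exp_neg]
        field_simp
    _ ≤ _ := by
        gcongr
        linarith
end

end

/-! ### The main term at a cusp -/

section

open NumberField

section
variable {K : Type*} [Field K] [NumberField K] [IsTotallyReal K]

theorem norm_half_pow_four (z : ℂ) : ‖z ^ (1 / 2 : ℂ)‖ ^ 4 = ‖z‖ ^ 2 := by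
  have h : (z ^ (1 / 2 : ℂ)) ^ 2 = z := by
    have := Complex.cpow_nat_inv_pow z (n := 2) two_ne_zero
    rw [one_div]
    exact_mod_cast this
  calc ‖z ^ (1 / 2 : ℂ)‖ ^ 4 = ‖(z ^ (1 / 2 : ℂ)) ^ 2‖ ^ 2 := by rw [norm_pow]; ring
    _ = _ := by rw [h]

omit [IsTotallyReal K] in
open scoped Classical in
theorem norm_prod_half (om : InfinitePlace K → ℂ) :
    ‖∏ r : Fin 4 × InfinitePlace K, (1 / om r.2) ^ (1 / 2 : ℂ)‖ = ∏ w, (‖om w‖ ^ 2)⁻¹ := by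
  rw [norm_prod, Fintype.prod_prod_type_right]
  refine Finset.prod_congr rfl fun w _ => ?_
  simp only []
  rw [Finset.prod_const, Finset.card_univ, Fintype.card_fin, norm_half_pow_four]
  simp

open scoped Classical in
theorem abs_det_smul_big (q : 𝓞 K) (U : InfinitePlace K → Matrix (Fin 4) (Fin 4) ℝ)
    (hd : ∀ w, |(U w).det| = 1) :
    |(big (fun w => sg w (q : K) • U w) (emb K)).det| =
      (∏ w, |sg w (q : K)|) ^ 4 * |(emb K).det| ^ 4 := by
  rw [det_big, abs_mul, Finset.abs_prod, abs_pow, ← Finset.prod_pow]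
  congr 1
  refine Finset.prod_congr rfl fun w _ => ?_
  rw [Matrix.det_smul, abs_mul, hd, mul_one, Fintype.card_fin, abs_pow]

/-- `Re(1/om)` normalised by `q²`. -/
noncomputable def Yw (p q : 𝓞 K) (y : ℝ) (τ : InfinitePlace K → ℝ) (w : InfinitePlace K) : ℝ :=
  y / (‖om p q y τ w‖ ^ 2 * (sg w (q : K)) ^ 2)

omit [NumberField K] in
theorem le_Yw (p q : 𝓞 K) (hq : q ≠ 0) (y : ℝ) (hy : 0 < y) (τ : InfinitePlace K → ℝ) (C : ℝ)
    (hC : 0 < C) (w : InfinitePlace K) (h1 : (sg w (q : K)) ^ 2 * y ≤ C)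
    (h2 : (sg w (q : K) * τ w - sg w (p : K)) ^ 2 ≤ C * y) : (5 * C)⁻¹ ≤ Yw p q y τ w := by
  have hq' : sg w (q : K) ≠ 0 := (map_ne_zero _).mpr (by exact_mod_cast hq)
  have hn : ‖om p q y τ w‖ ^ 2 = y ^ 2 + 4 * (τ w - sg w (p : K) / sg w (q : K)) ^ 2 := by
    rw [← Complex.normSq_eq_norm_sq, Complex.normSq_apply]
    simp [om]
    ring
  have hp : 0 < ‖om p q y τ w‖ ^ 2 * (sg w (q : K)) ^ 2 := by
    rw [hn]; positivity
  rw [Yw, le_div_iff₀ hp, inv_mul_le_iff₀ (by positivity), hn]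
  have : (y ^ 2 + 4 * (τ w - sg w (p : K) / sg w (q : K)) ^ 2) * (sg w (q : K)) ^ 2 =
      y * ((sg w (q : K)) ^ 2 * y) + 4 * (sg w (q : K) * τ w - sg w (p : K)) ^ 2 := by
    field_simp
  rw [this]
  nlinarith

open scoped Classical in
theorem norm_gau_dual_om (p q : 𝓞 K) (hq : q ≠ 0) (y : ℝ) (τ : InfinitePlace K → ℝ)
    (U : InfinitePlace K → Matrix (Fin 4) (Fin 4) ℝ) (hd : ∀ w, (U w).det ≠ 0)
    (k : Fin 4 × InfinitePlace K → ℝ) :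
    ‖gau ((big (fun w => sg w (q : K) • U w) (emb K))⁻¹.transpose)
      (fun r => (om p q y τ r.2)⁻¹) k‖ = Real.exp (-Real.pi * ∑ r, Yw p q y τ r.2 *
        ((big (fun w => (U w)⁻¹.transpose) (emb K)⁻¹.transpose).mulVec k r) ^ 2) := by
  have hqw : ∀ w : InfinitePlace K, sg w (q : K) ≠ 0 := fun w =>
    (map_ne_zero _).mpr (by exact_mod_cast hq)
  rw [norm_gau, big_inv_transpose]
  · congr 2
    refine Finset.sum_congr rfl fun r _ => ?_
    obtain ⟨i, w⟩ := r
    have e : (sg w (q : K) • U w)⁻¹ = (sg w (q : K))⁻¹ • (U w)⁻¹ :=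
      Matrix.inv_smul' _ (Units.mk0 _ (hqw w)) (isUnit_iff_ne_zero.mpr (hd w))
    rw [big_mulVec, big_mulVec]
    simp only [e]
    rw [Matrix.transpose_smul, Matrix.smul_mulVec, Pi.smul_apply, smul_eq_mul, Complex.inv_re,
      om_re, Yw, Complex.normSq_eq_norm_sq]
    ring
  · intro w
    rw [Matrix.det_smul]
    exact mul_ne_zero (pow_ne_zero _ (hqw w)) (hd w)

open scoped Classical in
/-- The common factor of the main terms of all theta series of the same determinant. -/
noncomputable def kap (p q : 𝓞 K) (y : ℝ) (τ : InfinitePlace K → ℝ) : ℂ :=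
  (((∏ w, |sg w (q : K)|) ^ 4 * |(emb K).det| ^ 4 : ℝ) : ℂ)⁻¹ *
    ∏ r : Fin 4 × InfinitePlace K, (1 / om p q y τ r.2) ^ (1 / 2 : ℂ)

open scoped Classical in
theorem norm_kap_mul (p q : 𝓞 K) (hq : q ≠ 0) (y : ℝ) (hy : 0 < y) (τ : InfinitePlace K → ℝ) :
    ‖kap p q y τ‖ * (∏ w, |sg w (q : K)|) ^ 2 =
      (|(emb K).det| ^ 4)⁻¹ * ((y ^ Fintype.card (InfinitePlace K))⁻¹ * ∏ w, Yw p q y τ w) := by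
  have h0 : (∏ w, |sg w (q : K)|) ≠ 0 := Finset.prod_ne_zero_iff.mpr fun w _ =>
    abs_ne_zero.mpr ((map_ne_zero _).mpr (by exact_mod_cast hq))
  have h1 : (∏ w, Yw p q y τ w) = y ^ Fintype.card (InfinitePlace K) *
      ((∏ w, (‖om p q y τ w‖ ^ 2)⁻¹) * ((∏ w, |sg w (q : K)|) ^ 2)⁻¹) := by
    rw [← Finset.prod_pow, ← Finset.prod_inv_distrib, ← Finset.prod_mul_distrib,
      ← Finset.card_univ, ← Finset.prod_const, ← Finset.prod_mul_distrib]
    refine Finset.prod_congr rfl fun w _ => ?_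
    rw [Yw, sq_abs, div_eq_mul_inv, mul_inv]
  rw [kap, norm_mul, norm_prod_half, norm_inv, Complex.norm_real, Real.norm_of_nonneg (by positivity),
    h1]
  field_simp

set_option maxHeartbeats 400000 in
open scoped Classical in
/-- Up to an error of order `y^{-d}`, the theta series of `S` on the segment of height `y` is given by
the constant term of its expansion at a nearby cusp. -/
theorem theta_main (U : InfinitePlace K → Matrix (Fin 4) (Fin 4) ℝ) (S T : Matrix (Fin 4) (Fin 4) (𝓞 K))
    (hU : ∀ w, (U w).transpose * U w = S.map fun s => sg w (s : K)) (hd : ∀ w, |(U w).det| = 1)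
    (hS : S.transpose = S) (hTS : T * S = 1) (C : ℝ) (hC : 0 < C) (D : ℤ) (hD : D ≠ 0) :
    ∃ C' : ℝ, 0 < C' ∧ ∀ (y : ℝ) (_ : 0 < y) (τ : InfinitePlace K → ℝ) (p q α β : 𝓞 K) (hq : q ≠ 0)
      (_ : α * p + β * q = D) (_ : ∀ w, (sg w (q : K)) ^ 2 * y ≤ C)
      (_ : ∀ w, (sg w (q : K) * τ w - sg w (p : K)) ^ 2 ≤ C * y)
      [Fintype (𝓞 K ⧸ Ideal.span {q})],
      ‖(∑' n : Fin 4 × InfinitePlace K → ℤ, gau (big U (emb K))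
          (fun r => (y - 2 * Complex.I * (τ r.2 : ℂ))) (fun r => (n r : ℝ))) -
        kap p q y τ * ∑ c : Fin 4 → 𝓞 K ⧸ Ideal.span {q},
            psi p q hq (c ⬝ᵥ (S.map (Ideal.Quotient.mk _)).mulVec c)‖ ≤
      C' * (y ^ Fintype.card (InfinitePlace K))⁻¹ := by
  have hd0 : ∀ w, (U w).det ≠ 0 := fun w h => by
    have := hd w
    rw [h] at this
    simp at this
  obtain ⟨B, c, hB, hc, hBc⟩ := dual_decay U hd0 (5 * C)⁻¹ (by positivity)
  have hsum := summable_exp_neg_sq (n := Fin 4 × InfinitePlace K) hc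
  set N : ℝ := (Nat.card (𝓞 K ⧸ Ideal.span {((2 * dK K * D : ℤ) : 𝓞 K)}) : ℝ) ^ 2 with hN
  have hN0 : 0 ≤ N := by positivity
  have hE : 0 < |(emb K).det| := abs_pos.mpr det_emb_ne_zero
  set Z := ∑' k : Fin 4 × InfinitePlace K → ℤ, Real.exp (-c * ∑ i, (k i : ℝ) ^ 2) with hZ
  have hZ0 : 0 ≤ Z := tsum_nonneg fun k => (Real.exp_pos _).le
  refine ⟨(|(emb K).det| ^ 4)⁻¹ * N * B * Z + 1, by positivity, ?_⟩
  intro y hy τ p q α β hq hpq h1 h2 _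
  obtain ⟨χ, hχ0, hθ⟩ := theta_coset p q hq y hy τ U S hU hd0
  have hkap : ((|(big (fun w => sg w (q : K) • U w) (emb K)).det| : ℝ) : ℂ)⁻¹ *
          ∏ r : Fin 4 × InfinitePlace K, (1 / om p q y τ r.2) ^ (1 / 2 : ℂ) = kap p q y τ := by
    rw [abs_det_smul_big q U hd, kap]
  rw [Complex.ofReal_inv, hkap] at hθ
  rw [hθ, ← mul_sub]
  set a : (Fin 4 × InfinitePlace K → ℤ) → ℂ := fun k =>
    gau ((big (fun w => sg w (q : K) • U w) (emb K))⁻¹.transpose)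
            (fun r => (om p q y τ r.2)⁻¹) (fun r => (k r : ℝ)) *
          ∑ c : Fin 4 → 𝓞 K ⧸ Ideal.span {q},
            psi p q hq (c ⬝ᵥ (S.map (Ideal.Quotient.mk _)).mulVec c) * χ k c with ha
  have ha0 : a 0 = ∑ c : Fin 4 → 𝓞 K ⧸ Ideal.span {q},
            psi p q hq (c ⬝ᵥ (S.map (Ideal.Quotient.mk _)).mulVec c) := by
    have : gau ((big (fun w => sg w (q : K) • U w) (emb K))⁻¹.transpose)
            (fun r => (om p q y τ r.2)⁻¹)
            (fun r => (((0 : Fin 4 × InfinitePlace K → ℤ) r : ℤ) : ℝ)) = 1 := by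
      have h : (fun r => (((0 : Fin 4 × InfinitePlace K → ℤ) r : ℤ) : ℝ)) = 0 := by
        ext; simp
      rw [h, gau, Matrix.mulVec_zero]
      simp
    simp only [ha]
    rw [this, one_mul]
    simp only [hχ0, mul_one]
  set P := ∏ w, Yw p q y τ w with hP
  have hY := fun w => le_Yw p q hq y hy τ C hC w (h1 w) (h2 w)
  have hY0 : ∀ w, 0 < Yw p q y τ w := fun w => lt_of_lt_of_le (by positivity) (hY w)
  have hP0 : 0 < P := Finset.prod_pos fun w _ => hY0 w
  set Q := (∏ w, |sg w (q : K)|) ^ 2 with hQ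
  have hQ0 : 0 ≤ Q := by positivity
  have hak : ∀ k, k ≠ 0 → P * ‖a k‖ ≤ Q * N * (B * Real.exp (-c * ∑ i, (k i : ℝ) ^ 2)) := by
    intro k hk
    have g := gauss_bound p q α β hq D hD hpq (S.map (Ideal.Quotient.mk _))
      (T.map (Ideal.Quotient.mk _)) (by rw [← Matrix.transpose_map, hS])
      (by rw [← Matrix.map_mul, hTS]; exact Matrix.map_one _ (map_zero _) (map_one _)) (χ k)
    have b := hBc _ hY k hk
    rw [← norm_gau_dual_om p q hq y τ U hd0 fun r => (k r : ℝ)] at b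
    rw [ha, norm_mul, ← mul_assoc, mul_comm]
    exact mul_le_mul g b (by positivity) (by positivity)
  have hasum : Summable fun k => ‖a k‖ := by
    refine Summable.of_norm_bounded_eventually
      (g := fun k => P⁻¹ * (Q * N * B) * Real.exp (-c * ∑ i, (k i : ℝ) ^ 2)) (hsum.mul_left _) ?_
    have : ∀ᶠ k : Fin 4 × InfinitePlace K → ℤ in Filter.cofinite, k ≠ 0 :=
      (Set.finite_singleton 0).compl_mem_cofinite
    filter_upwards [this] with k hk
    rw [norm_norm, mul_assoc, le_inv_mul_iff₀ hP0]
    refine (hak k hk).trans (le_of_eq (by ring))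
  have hsplit : (∑' k, a k) - a 0 = ∑' k, if k = 0 then 0 else a k := by
    rw [Summable.tsum_eq_add_tsum_ite hasum.of_norm 0]
    ring
  rw [← ha0, hsplit, norm_mul]
  have hbd : P * ‖∑' k, if k = 0 then 0 else a k‖ ≤ Q * N * B * Z := by
    rw [mul_comm, ← le_div_iff₀ hP0]
    have hs1 : HasSum (fun k : Fin 4 × InfinitePlace K → ℤ =>
        Real.exp (-c * ∑ i, (k i : ℝ) ^ 2)) Z := hsum.hasSum
    have hs2 := (hs1.mul_left (Q * N * B)).div_const P
    refine tsum_of_norm_bounded hs2 fun k => ?_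
    rw [le_div_iff₀ hP0]
    by_cases hk : k = 0
    · simp only [hk, if_true, norm_zero, zero_mul]
      positivity
    · simp only [hk, if_false]
      have := hak k hk
      linarith
  have hk := norm_kap_mul p q hq y hy τ
  rw [← hP, ← hQ] at hk
  have hq0 : 0 < Q := by
    refine pow_pos (Finset.prod_pos fun w _ => ?_) _
    exact abs_pos.mpr ((map_ne_zero _).mpr (by exact_mod_cast hq))
  have hyd : 0 < y ^ Fintype.card (InfinitePlace K) := by positivity
  set X := ‖∑' k, if k = 0 then 0 else a k‖
  have e1 : ‖kap p q y τ‖ * X * Q = (|(emb K).det| ^ 4)⁻¹ *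
      (y ^ Fintype.card (InfinitePlace K))⁻¹ * (P * X) := by
    rw [mul_right_comm, hk]
    ring
  have e2 : ‖kap p q y τ‖ * X * Q ≤ ((|(emb K).det| ^ 4)⁻¹ * N * B * Z *
      (y ^ Fintype.card (InfinitePlace K))⁻¹) * Q := by
    rw [e1]
    calc _ ≤ (|(emb K).det| ^ 4)⁻¹ * (y ^ Fintype.card (InfinitePlace K))⁻¹ * (Q * N * B * Z) := by
          gcongr
      _ = _ := by ring
  have e3 := le_of_mul_le_mul_right e2 hq0
  exact e3.trans (mul_le_mul_of_nonneg_right (by linarith) (inv_nonneg.mpr hyd.le))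
end

end

/-! ### Fourier expansion of theta series -/

section

open NumberField

section
variable {K : Type*} [Field K] [NumberField K] [IsTotallyReal K]

open scoped Classical in
/-- The values of the form on the box of size `H` are `O(H²)` at every real place. -/
theorem value_le (U : InfinitePlace K → Matrix (Fin 4) (Fin 4) ℝ) (S : Matrix (Fin 4) (Fin 4) (𝓞 K))
    (hU : ∀ w, (U w).transpose * U w = S.map fun s => sg w (s : K)) :
    ∃ A : ℝ, 0 < A ∧ ∀ (H : ℕ) (n : Fin 4 × InfinitePlace K → ℤ), (∀ r, |n r| ≤ H) →
      ∀ w, sg w ((xe K n ⬝ᵥ S.mulVec (xe K n) : 𝓞 K) : K) ≤ A * (H : ℝ) ^ 2 := by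
  set W := big U (emb K) with hW
  refine ⟨1 + ∑ r, (∑ j, |W r j|) ^ 2, by positivity, fun H n hn w => ?_⟩
  have h1 : ∀ r, (W.mulVec (fun r => (n r : ℝ)) r) ^ 2 ≤ (∑ j, |W r j|) ^ 2 * (H : ℝ) ^ 2 := by
    intro r
    rw [← mul_pow, sq_le_sq, abs_of_nonneg (a := (∑ j, |W r j|) * (H : ℝ)) (by positivity)]
    rw [Matrix.mulVec, dotProduct, Finset.sum_mul]
    refine (Finset.abs_sum_le_sum_abs _ _).trans (Finset.sum_le_sum fun j _ => ?_)
    rw [abs_mul]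
    gcongr
    exact_mod_cast hn j
  rw [← sum_sq_eq U S hU]
  have h2 : ∀ i, ((U w).mulVec (fun l => sg w (xe K n l : K)) i) =
      W.mulVec (fun r => (n r : ℝ)) (i, w) := fun i => by
    rw [hW, big_mulVec]
    simp_rw [emb_mulVec_xe]
  simp_rw [h2]
  calc ∑ i, (W.mulVec (fun r => (n r : ℝ)) (i, w)) ^ 2 ≤
        ∑ i, (∑ j, |W (i, w) j|) ^ 2 * (H : ℝ) ^ 2 := Finset.sum_le_sum fun i _ => h1 _
    _ = (∑ i, (∑ j, |W (i, w) j|) ^ 2) * (H : ℝ) ^ 2 := by rw [Finset.sum_mul]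
    _ ≤ _ := by
      gcongr
      rw [Fintype.sum_prod_type_right]
      have := Finset.single_le_sum (f := fun w => ∑ i, (∑ j, |W (i, w) j|) ^ 2)
        (fun w _ => Finset.sum_nonneg fun i _ => sq_nonneg _) (Finset.mem_univ w)
      exact this.trans (le_add_of_nonneg_left zero_le_one)

open scoped Classical in
/-- The integral coordinates of the values of the form on the box of size `H` are `O(H²)`, so there
are `O(H^{2d})` such values. -/
theorem coord_le (U : InfinitePlace K → Matrix (Fin 4) (Fin 4) ℝ) (S : Matrix (Fin 4) (Fin 4) (𝓞 K))
    (hU : ∀ w, (U w).transpose * U w = S.map fun s => sg w (s : K)) :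
    ∃ A : ℕ, ∀ (H : ℕ) (n : Fin 4 × InfinitePlace K → ℤ), (∀ r, |n r| ≤ H) →
      ∀ k, |(ib K).repr (xe K n ⬝ᵥ S.mulVec (xe K n)) k| ≤ ((A * H ^ 2 : ℕ) : ℤ) := by
  obtain ⟨A, hA, h⟩ := value_le U S hU
  obtain ⟨R, hR⟩ := exists_nat_ge (∑ k, ∑ w, |(emb K)⁻¹ k w| * A)
  refine ⟨R, fun H n hn k => ?_⟩
  set t := xe K n ⬝ᵥ S.mulVec (xe K n) with ht
  have h0 : ∀ w, 0 ≤ sg w (t : K) := fun w => by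
    rw [ht, ← sum_sq_eq U S hU]
    exact Finset.sum_nonneg fun i _ => sq_nonneg _
  have h1 : ((ib K).repr t k : ℝ) = (emb K)⁻¹.mulVec (fun w => sg w (t : K)) k := by
    have : (fun w => sg w (t : K)) = (emb K).mulVec fun k => ((ib K).repr t k : ℝ) :=
      funext fun w => sg_eq_sum t w
    rw [this, Matrix.mulVec_mulVec, Matrix.nonsing_inv_mul _ (isUnit_iff_ne_zero.mpr det_emb_ne_zero),
      Matrix.one_mulVec]
  have h2 : |((ib K).repr t k : ℝ)| ≤ R * (H : ℝ) ^ 2 := by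
    rw [h1, Matrix.mulVec, dotProduct]
    calc |∑ w, (emb K)⁻¹ k w * sg w (t : K)| ≤ ∑ w, |(emb K)⁻¹ k w| * (A * (H : ℝ) ^ 2) := by
          refine (Finset.abs_sum_le_sum_abs _ _).trans (Finset.sum_le_sum fun w _ => ?_)
          rw [abs_mul, abs_of_nonneg (h0 w)]
          gcongr
          exact h H n hn w
      _ = (∑ w, |(emb K)⁻¹ k w| * A) * (H : ℝ) ^ 2 := by
          rw [Finset.sum_mul]
          exact Finset.sum_congr rfl fun w _ => by ring
      _ ≤ _ := by
          gcongr
          refine le_trans ?_ hR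
          exact Finset.single_le_sum (f := fun k => ∑ w, |(emb K)⁻¹ k w| * A)
            (fun k _ => Finset.sum_nonneg fun w _ => by positivity) (Finset.mem_univ k)
  exact_mod_cast h2

open scoped Classical in
/-- The theta series as a Fourier series on the torus. -/
theorem gau_fourier (U : InfinitePlace K → Matrix (Fin 4) (Fin 4) ℝ) (S : Matrix (Fin 4) (Fin 4) (𝓞 K))
    (hU : ∀ w, (U w).transpose * U w = S.map fun s => sg w (s : K)) (y : ℝ)
    (s : InfinitePlace K → ℝ) (n : Fin 4 × InfinitePlace K → ℤ) :
    gau (big U (emb K)) (fun r => (y - 2 * Complex.I * (((emb K)⁻¹.transpose.mulVec s r.2 : ℝ) : ℂ)))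
      (fun r => (n r : ℝ)) =
    (Real.exp (-Real.pi * y * ∑ w, sg w ((xe K n ⬝ᵥ S.mulVec (xe K n) : 𝓞 K) : K)) : ℝ) *
      Complex.exp (2 * Real.pi * Complex.I *
        ∑ k, (((ib K).repr (xe K n ⬝ᵥ S.mulVec (xe K n)) k : ℤ) : ℂ) * (s k : ℂ)) := by
  rw [gau_eq U S hU (fun w => (y - 2 * Complex.I * (((emb K)⁻¹.transpose.mulVec s w : ℝ) : ℂ)))]
  set t := xe K n ⬝ᵥ S.mulVec (xe K n) with ht
  have h : ∑ w, (emb K)⁻¹.transpose.mulVec s w * sg w (t : K) =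
      ∑ k, ((ib K).repr t k : ℝ) * s k := by
    have h1 : (fun w => sg w (t : K)) = (emb K).mulVec fun k => ((ib K).repr t k : ℝ) :=
      funext fun w => sg_eq_sum t w
    change (emb K)⁻¹.transpose.mulVec s ⬝ᵥ (fun w => sg w (t : K)) = (fun k => ((ib K).repr t k : ℝ)) ⬝ᵥ s
    rw [h1, Matrix.mulVec_transpose, ← Matrix.dotProduct_mulVec, Matrix.mulVec_mulVec,
      Matrix.nonsing_inv_mul _ (isUnit_iff_ne_zero.mpr det_emb_ne_zero), Matrix.one_mulVec,
      dotProduct_comm]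
  have h' : ∑ k, (((ib K).repr t k : ℤ) : ℂ) * (s k : ℂ) =
      ∑ w, (((emb K)⁻¹.transpose.mulVec s w : ℝ) : ℂ) * ((sg w (t : K) : ℝ) : ℂ) := by
    have := congrArg (fun x : ℝ => (x : ℂ)) h
    push_cast at this
    exact this.symm
  rw [h', Complex.ofReal_exp, ← Complex.exp_add]
  congr 1
  push_cast
  rw [Finset.mul_sum, Finset.mul_sum, Finset.mul_sum, ← Finset.sum_add_distrib]
  exact Finset.sum_congr rfl fun w _ => by ring
end

end

/-! ### Common values of two forms -/

section

open NumberField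

section
variable {K : Type*} [Field K] [NumberField K] [IsTotallyReal K]

theorem value_ne_zero (U : InfinitePlace K → Matrix (Fin 4) (Fin 4) ℝ)
    (S : Matrix (Fin 4) (Fin 4) (𝓞 K))
    (hU : ∀ w, (U w).transpose * U w = S.map fun s => sg w (s : K)) (hd : ∀ w, |(U w).det| = 1)
    (x : Fin 4 → 𝓞 K) (hx : x ≠ 0) : x ⬝ᵥ S.mulVec x ≠ 0 := by
  intro h
  apply hx
  obtain ⟨w⟩ : Nonempty (InfinitePlace K) := inferInstance
  have h1 := sum_sq_eq U S hU x w
  rw [h, RingOfIntegers.coe_eq_algebraMap, map_zero, map_zero,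
    Finset.sum_eq_zero_iff_of_nonneg fun _ _ => sq_nonneg _] at h1
  have h2 : (U w).mulVec (fun l => sg w (x l : K)) = 0 := by
    ext i
    simpa using h1 i (Finset.mem_univ i)
  have hdw : (U w).det ≠ 0 := fun h0 => by
    have := hd w
    rw [h0] at this
    simp at this
  have h3 := Matrix.eq_zero_of_mulVec_eq_zero hdw h2
  ext l
  have := congrFun h3 l
  simpa using this

open scoped Classical in
theorem summable_coeff (U : InfinitePlace K → Matrix (Fin 4) (Fin 4) ℝ)
    (S : Matrix (Fin 4) (Fin 4) (𝓞 K))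
    (hU : ∀ w, (U w).transpose * U w = S.map fun s => sg w (s : K)) (hd : ∀ w, |(U w).det| = 1)
    (y : ℝ) (hy : 0 < y) :
    Summable fun n : Fin 4 × InfinitePlace K → ℤ =>
      Real.exp (-Real.pi * y * ∑ w, sg w ((xe K n ⬝ᵥ S.mulVec (xe K n) : 𝓞 K) : K)) := by
  have hdU : (big U (emb K)).det ≠ 0 := by
    rw [det_big]
    refine mul_ne_zero (Finset.prod_ne_zero_iff.mpr fun w _ h0 => ?_)
      (pow_ne_zero _ det_emb_ne_zero)
    have := hd w
    rw [h0] at this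
    simp at this
  have h := (summable_gau (big U (emb K)) hdU (fun _ => (y : ℂ)) (fun _ => by simpa using hy) 0).norm
  refine h.congr fun n => ?_
  rw [zero_add, gau_eq U S hU (fun _ => (y : ℂ)), ← Finset.mul_sum, ← Complex.ofReal_sum,
    ← Complex.ofReal_neg, ← mul_assoc, ← Complex.ofReal_mul, ← Complex.ofReal_mul,
    Complex.norm_exp_ofReal]

open scoped Classical in
/-- Two definite quaternary forms of determinant one whose Gauss sums agree represent a common
nonzero number: otherwise the difference of their theta series has too many Fourier coefficients
to be as small as the cusp expansions require. -/
theorem common_value (U₁ U₂ : InfinitePlace K → Matrix (Fin 4) (Fin 4) ℝ)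
    (S₁ S₂ T₁ T₂ : Matrix (Fin 4) (Fin 4) (𝓞 K))
    (hU₁ : ∀ w, (U₁ w).transpose * U₁ w = S₁.map fun s => sg w (s : K))
    (hU₂ : ∀ w, (U₂ w).transpose * U₂ w = S₂.map fun s => sg w (s : K))
    (hd₁ : ∀ w, |(U₁ w).det| = 1) (hd₂ : ∀ w, |(U₂ w).det| = 1)
    (hS₁ : S₁.transpose = S₁) (hTS₁ : T₁ * S₁ = 1) (hS₂ : S₂.transpose = S₂) (hTS₂ : T₂ * S₂ = 1)
    (htr : ∀ (p q : 𝓞 K) (hq : q ≠ 0) [Fintype (𝓞 K ⧸ Ideal.span {q})],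
      ∑ c : Fin 4 → 𝓞 K ⧸ Ideal.span {q},
        psi p q hq (c ⬝ᵥ (S₁.map (Ideal.Quotient.mk _)).mulVec c) =
      ∑ c : Fin 4 → 𝓞 K ⧸ Ideal.span {q},
        psi p q hq (c ⬝ᵥ (S₂.map (Ideal.Quotient.mk _)).mulVec c)) :
    ∃ x z : Fin 4 → 𝓞 K, x ⬝ᵥ S₁.mulVec x = z ⬝ᵥ S₂.mulVec z ∧ x ⬝ᵥ S₁.mulVec x ≠ 0 := by
  by_contra! hno
  obtain ⟨C, D, hC, hD, hdir⟩ := exists_dirichlet K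
  obtain ⟨C₁, hC₁, hb₁⟩ := theta_main U₁ S₁ T₁ hU₁ hd₁ hS₁ hTS₁ C hC D hD
  obtain ⟨C₂, hC₂, hb₂⟩ := theta_main U₂ S₂ T₂ hU₂ hd₂ hS₂ hTS₂ C hC D hD
  obtain ⟨A, hA, hval⟩ := value_le U₁ S₁ hU₁
  obtain ⟨R, hR⟩ := coord_le U₁ S₁ hU₁
  set d := Fintype.card (InfinitePlace K) with hd
  have hd0 : d ≠ 0 := Fintype.card_ne_zero
  set φ : Matrix (Fin 4) (Fin 4) (𝓞 K) → (Fin 4 × InfinitePlace K → ℤ) → InfinitePlace K → ℤ :=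
    fun S n k => (ib K).repr (xe K n ⬝ᵥ S.mulVec (xe K n)) k with hφ
  have key : ∀ H : ℕ, 1 ≤ H → Real.exp (-Real.pi * (d * A)) * (H : ℝ) ^ (4 * d) ≤
      (C₁ + C₂) * (H : ℝ) ^ (2 * d) * Real.sqrt ((2 * R + 1) ^ d * (H : ℝ) ^ (2 * d)) := by
    intro H hH
    have hH0 : (1 : ℝ) ≤ H := by exact_mod_cast hH
    -- At height `y = H⁻²` the at least `H^{4d}` nonzero lattice points of size at most `H` have theta
    -- coefficients bounded below, while their values are among `O(H^{2d})` integers.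
    set y : ℝ := ((H : ℝ) ^ 2)⁻¹ with hy
    have hy0 : 0 < y := by positivity
    have hy1 : y ≤ 1 := inv_le_one_of_one_le₀ (one_le_pow₀ hH0)
    have hyd : (y ^ d)⁻¹ = (H : ℝ) ^ (2 * d) := by
      rw [hy, inv_pow, inv_inv, pow_mul]
    set box : Finset (Fin 4 × InfinitePlace K → ℤ) :=
      (Fintype.piFinset fun _ => Finset.Icc (-(H : ℤ)) H).erase 0 with hbox
    have hboxmem : ∀ n ∈ box, n ≠ 0 ∧ ∀ r, |n r| ≤ H := fun n hn => by
      rw [hbox, Finset.mem_erase, Fintype.mem_piFinset] at hn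
      exact ⟨hn.1, fun r => abs_le.mpr (Finset.mem_Icc.mp (hn.2 r))⟩
    set T : Finset (InfinitePlace K → ℤ) := box.image (φ S₁) with hT
    have hbd := sum_coeff_le_of_torus_bound (φ S₁) (φ S₂)
      (fun n => Real.exp (-Real.pi * y * ∑ w, sg w ((xe K n ⬝ᵥ S₁.mulVec (xe K n) : 𝓞 K) : K)))
      (fun n => Real.exp (-Real.pi * y * ∑ w, sg w ((xe K n ⬝ᵥ S₂.mulVec (xe K n) : 𝓞 K) : K)))
      (fun n => (Real.exp_pos _).le) (summable_coeff U₁ S₁ hU₁ hd₁ y hy0)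
      (fun n => (Real.exp_pos _).le) (summable_coeff U₂ S₂ hU₂ hd₂ y hy0)
      ((C₁ + C₂) * (H : ℝ) ^ (2 * d)) ?_ T ?_ box fun n hn => Finset.mem_image_of_mem _ hn
    · have hcard : (box.card : ℝ) ≥ (H : ℝ) ^ (4 * d) := by
        have h1 : box.card = (2 * H + 1) ^ (4 * d) - 1 := by
          rw [hbox, Finset.card_erase_of_mem]
          · rw [Fintype.card_piFinset, Finset.prod_const, Finset.card_univ, Int.card_Icc, Fintype.card_prod, Fintype.card_fin]
            congr 2
            omega
          · rw [Fintype.mem_piFinset]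
            intro r
            simp
        have h2 : H ^ (4 * d) ≤ (2 * H + 1) ^ (4 * d) - 1 :=
          Nat.le_sub_one_of_lt (Nat.pow_lt_pow_left (by omega) (by omega))
        rw [h1]
        exact_mod_cast h2
      have hlow : Real.exp (-Real.pi * (d * A)) * (H : ℝ) ^ (4 * d) ≤ ∑ n ∈ box,
          Real.exp (-Real.pi * y * ∑ w, sg w ((xe K n ⬝ᵥ S₁.mulVec (xe K n) : 𝓞 K) : K)) := by
        calc _ ≤ Real.exp (-Real.pi * (d * A)) * (box.card : ℝ) := by gcongr
          _ = ∑ n ∈ box, Real.exp (-Real.pi * (d * A)) := by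
              rw [Finset.sum_const, nsmul_eq_mul, mul_comm]
          _ ≤ _ := by
              refine Finset.sum_le_sum fun n hn => Real.exp_le_exp.mpr ?_
              have h3 : ∑ w, sg w ((xe K n ⬝ᵥ S₁.mulVec (xe K n) : 𝓞 K) : K) ≤
                  d * (A * (H : ℝ) ^ 2) := by
                refine (Finset.sum_le_card_nsmul _ _ _ fun w _ => hval H n (hboxmem n hn).2 w).trans ?_
                rw [Finset.card_univ, nsmul_eq_mul]
              have h4 : y * (d * (A * (H : ℝ) ^ 2)) = d * A := by
                rw [hy]
                field_simp
              have h5 := mul_le_mul_of_nonneg_left h3 hy0.le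
              rw [h4] at h5
              have := mul_le_mul_of_nonneg_left h5 Real.pi_pos.le
              linarith
      have hTcard : (T.card : ℝ) ≤ (2 * R + 1) ^ d * (H : ℝ) ^ (2 * d) := by
        have h1 : T ⊆ Fintype.piFinset fun _ => Finset.Icc (-((R * H ^ 2 : ℕ) : ℤ)) (R * H ^ 2 : ℕ) := by
          intro v hv
          obtain ⟨n, hn, rfl⟩ := Finset.mem_image.mp hv
          rw [Fintype.mem_piFinset]
          intro k
          exact Finset.mem_Icc.mpr (abs_le.mp (hR H n (hboxmem n hn).2 k))
        have h2 := Finset.card_le_card h1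
        rw [Fintype.card_piFinset, Finset.prod_const, Finset.card_univ, Int.card_Icc, ← hd] at h2
        have h3 : (((R * H ^ 2 : ℕ) : ℤ) + 1 - -((R * H ^ 2 : ℕ) : ℤ)).toNat ≤
            (2 * R + 1) * H ^ 2 := by
          have : 1 ≤ H ^ 2 := Nat.one_le_pow _ _ hH
          have h6 : (2 * R + 1) * H ^ 2 = 2 * (R * H ^ 2) + H ^ 2 := by ring
          rw [h6]
          generalize R * H ^ 2 = z
          omega
        have h4 := h2.trans (Nat.pow_le_pow_left h3 d)
        rw [pow_mul, ← mul_pow]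
        exact_mod_cast h4
      exact hlow.trans (hbd.trans (by gcongr))
    · intro s
      obtain ⟨p, q, α, β, hq, hpq, hq1, hq2⟩ := hdir ((emb K)⁻¹.transpose.mulVec s) y hy0 hy1
      have : Finite (𝓞 K ⧸ Ideal.span {q}) := Ideal.finiteQuotientOfFreeOfNeBot _ (by
        simpa [Ideal.span_singleton_eq_bot] using hq)
      let _ := Fintype.ofFinite (𝓞 K ⧸ Ideal.span {q})
      have e₁ := hb₁ y hy0 _ p q α β hq hpq hq1 hq2
      have e₂ := hb₂ y hy0 _ p q α β hq hpq hq1 hq2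
      simp_rw [gau_fourier U₁ S₁ hU₁ y s] at e₁
      simp_rw [gau_fourier U₂ S₂ hU₂ y s] at e₂
      rw [htr p q hq, norm_sub_rev] at e₁
      rw [hyd] at e₁ e₂
      rw [norm_sub_rev, add_mul, add_comm]
      refine (norm_sub_le_norm_sub_add_norm_sub _ _ _).trans (add_le_add e₂ e₁)
    · intro n hn
      obtain ⟨m, hm, hmn⟩ := Finset.mem_image.mp hn
      have h1 : xe K m ⬝ᵥ S₁.mulVec (xe K m) = xe K n ⬝ᵥ S₂.mulVec (xe K n) := by
        apply (ib K).repr.injective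
        ext k
        exact congrFun hmn k
      have h2 := hno _ _ h1
      have hm0 : xe K m ≠ 0 := fun h0 => by
        apply (hboxmem m hm).1
        have h00 : xe K 0 = 0 := by
          ext l
          simp [xe_apply]
        exact (xe K).injective (h0.trans h00.symm)
      exact value_ne_zero U₁ S₁ hU₁ hd₁ _ hm0 h2
  -- Bessel's inequality now reads `H^{4d} ≪ H^{3d}`, which fails for large `H`.
  set E := Real.exp (-Real.pi * (d * A)) with hE
  have hE0 : 0 < E := Real.exp_pos _
  have key2 : ∀ H : ℕ, 1 ≤ H → (H : ℝ) ≤ (C₁ + C₂) * Real.sqrt ((2 * R + 1) ^ d) / E := by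
    intro H hH
    have hH0 : (1 : ℝ) ≤ H := by exact_mod_cast hH
    have h := key H hH
    have e2 : (H : ℝ) ^ (2 * d) = ((H : ℝ) ^ d) ^ 2 := by rw [← pow_mul, mul_comm]
    rw [Real.sqrt_mul (by positivity), e2, Real.sqrt_sq (by positivity)] at h
    have h1 : (H : ℝ) ^ d * (E * ((H : ℝ) ^ d) ^ 3) ≤
        (C₁ + C₂) * Real.sqrt ((2 * R + 1) ^ d) * ((H : ℝ) ^ d) ^ 3 := by
      have e1 : (H : ℝ) ^ (4 * d) = ((H : ℝ) ^ d) ^ 4 := by rw [← pow_mul, mul_comm]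
      rw [e1] at h
      nlinarith
    have h2 : (0 : ℝ) < ((H : ℝ) ^ d) ^ 3 := by positivity
    have h3 : (H : ℝ) ^ d ≤ (C₁ + C₂) * Real.sqrt ((2 * R + 1) ^ d) / E := by
      rw [le_div_iff₀ hE0]
      refine le_of_mul_le_mul_right ?_ h2
      linarith
    exact (le_self_pow₀ hH0 hd0).trans h3
  obtain ⟨H, hH⟩ := exists_nat_gt ((C₁ + C₂) * Real.sqrt ((2 * R + 1) ^ d) / E)
  have h1 := key2 (H + 1) (by omega)
  push_cast at h1
  linarith
end

end

/-! ### Quadratic forms over finite rings -/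

section

section LocalData
open Polynomial in
/-- Hensel's lemma for square roots where `2` is invertible: `1 + ε` is the inverse of a square. -/
theorem exists_scale {R : Type*} [CommRing R] (h2 : IsUnit (2:R)) (ε : R) (hε : IsNilpotent ε) :
    ∃ s : R, s ^ 2 * (1 + ε) = 1 := by
  have hu : IsUnit (1 + ε) := hε.isUnit_one_add
  obtain ⟨r, ⟨-, hr⟩, -⟩ := existsUnique_nilpotent_sub_and_aeval_eq_zero (x := (1:R))
    (P := C (1 + ε) * X ^ 2 - 1) (by simpa using hε) (by
      have : aeval (1 : R) (derivative (C (1 + ε) * X ^ 2 - 1)) = (1 + ε) * 2 := by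
        simp only [derivative_sub, derivative_mul, derivative_C, derivative_X_pow, derivative_one]
        simp
      rw [this]
      exact hu.mul h2)
  refine ⟨r, ?_⟩
  simp only [map_sub, map_mul, aeval_C, map_pow, aeval_X, map_one, Algebra.algebraMap_self,
    RingHom.id_apply] at hr
  linear_combination hr

open Polynomial in
/-- Hensel's lemma for square roots where `2` is nilpotent: `1 + 8c` is the inverse of a square
`(1 + 4r)²`, and the equation for `r` is separable. -/
theorem exists_sq_mul_of_two_nilpotent {R : Type*} [CommRing R] (h2 : IsNilpotent (2:R)) (c : R) :
    ∃ s : R, (1 + 8 * c) * s ^ 2 = 1 := by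
  obtain ⟨r, ⟨-, hr⟩, -⟩ := existsUnique_nilpotent_sub_and_aeval_eq_zero (x := -c)
    (P := X + C 2 * X ^ 2 + C c * (1 + C 4 * X) ^ 2) (by
      have : aeval (-c) (X + C 2 * X ^ 2 + C c * (1 + C 4 * X) ^ 2)
        = 2 * (c ^ 2 - 4 * c ^ 2 + 8 * c ^ 3) := by
        simp; ring
      rw [this]
      exact (Commute.all _ _).isNilpotent_mul_right h2) (by
      have : aeval (-c) (derivative (X + C 2 * X ^ 2 + C c * (1 + C 4 * X) ^ 2))
        = 1 + 2 * (-2 * c + 4 * c * (1 - 4 * c)) := by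
        simp [derivative_pow]; ring
      rw [this]
      exact ((Commute.all _ _).isNilpotent_mul_right h2).isUnit_one_add)
  refine ⟨1 + 4 * r, ?_⟩
  simp at hr
  linear_combination 8 * hr

/-- The Chinese remainder theorem for all residue fields of a finite ring. -/
theorem exists_lift_maximal {R : Type*} [CommRing R] [Finite R]
    (f : ∀ I : MaximalSpectrum R, R ⧸ I.asIdeal) :
    ∃ r : R, ∀ I : MaximalSpectrum R, Ideal.Quotient.mk I.asIdeal r = f I := by
  have hf : Finite (MaximalSpectrum R) := inferInstance
  have := Ideal.pi_mkQ_surjective (I := fun I : MaximalSpectrum R => I.asIdeal) (by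
    intro I J hIJ
    exact Ideal.isCoprime_of_isMaximal fun h => hIJ (MaximalSpectrum.ext h))
  obtain ⟨r, hr⟩ := this f
  exact ⟨r, fun I => congrFun hr I⟩

theorem isNilpotent_of_maximal {R : Type*} [CommRing R] [Finite R] (x : R)
    (h : ∀ I : MaximalSpectrum R, Ideal.Quotient.mk I.asIdeal x = 0) : IsNilpotent x := by
  rw [← mem_nilradical, nilradical_eq_sInf, Ideal.mem_sInf]
  intro I hI
  have : I.IsPrime := hI
  have hm : I.IsMaximal := IsArtinianRing.isMaximal_of_isPrime I
  exact Ideal.Quotient.eq_zero_iff_mem.1 (h ⟨I, hm⟩)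

/-- Every element of a finite field of odd characteristic is a sum of two squares. -/
theorem field_sum_two_sq {k : Type*} [Field k] [Finite k] (h2 : (2:k) ≠ 0) (t : k) :
    ∃ x y : k, x ^ 2 + y ^ 2 = t := by
  classical
  have := Fintype.ofFinite k
  open Polynomial in
  obtain ⟨x, y, h⟩ := FiniteField.exists_root_sum_quadratic (f := (X : k[X]) ^ 2)
    (g := (X : k[X]) ^ 2 - C t) (by simp) (by
      exact degree_X_pow_sub_C (by norm_num) t) (by
      rcases Nat.mod_two_eq_zero_or_one (Fintype.card k) with h | h
      · exfalso
        have h' := FiniteField.cast_card_eq_zero k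
        obtain ⟨n, hn⟩ := Nat.dvd_of_mod_eq_zero h
        exact absurd ((FiniteField.even_card_iff_char_two).2 h) (fun hh => h2 (by
          have := CharP.cast_eq_zero k (ringChar k)
          rw [hh] at this; exact_mod_cast this))
      · exact h)
  refine ⟨x, y, ?_⟩
  simp at h
  linear_combination h

theorem exists_sq_add_sq_eq_neg_one {R : Type*} [CommRing R] [Finite R] (h2 : IsUnit (2:R)) :
    ∃ u v : R, u ^ 2 + v ^ 2 = -1 := by
  have h (I : MaximalSpectrum R) : ∃ x y : R ⧸ I.asIdeal, x ^ 2 + y ^ 2 = -1 := by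
    have := I.isMaximal
    have hfin : Finite (R ⧸ I.asIdeal) := Finite.of_surjective _ Ideal.Quotient.mk_surjective
    let _ : Field (R ⧸ I.asIdeal) := Ideal.Quotient.field _
    refine field_sum_two_sq (k := R ⧸ I.asIdeal) ?_ (-1)
    have := (h2.map (Ideal.Quotient.mk I.asIdeal)).ne_zero
    rwa [map_ofNat] at this
  choose x y hxy using h
  obtain ⟨u, hu⟩ := exists_lift_maximal x
  obtain ⟨v, hv⟩ := exists_lift_maximal y
  have hn : IsNilpotent (-(u ^ 2 + v ^ 2) - 1) := isNilpotent_of_maximal _ fun I => by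
    simp only [map_sub, map_neg, map_add, map_pow, hu, hv, hxy, map_one]; ring
  obtain ⟨s, hs⟩ := exists_scale h2 _ hn
  exact ⟨s * u, s * v, by linear_combination -hs⟩

/-- The value at `y` of the quaternary form with matrix `matS a b u v`. When `1 + u² + v² = a b`, a
vector on which this value is `1` makes the form equivalent to the sum of four squares, see
`matH_gram`. -/
def phiForm {R : Type*} [CommRing R] (a b u v : R) (y : Fin 4 → R) : R :=
  b * (y 0 ^ 2 + y 1 ^ 2) + 2 * y 0 * (u * y 2 + v * y 3) + 2 * y 1 * (v * y 2 - u * y 3)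
    + a * (y 2 ^ 2 + y 3 ^ 2)

theorem map_phiForm {R R' : Type*} [CommRing R] [CommRing R'] (f : R →+* R') (a b u v : R)
    (y : Fin 4 → R) :
    f (phiForm a b u v y) = phiForm (f a) (f b) (f u) (f v) fun i => f (y i) := by
  simp [phiForm, map_ofNat f 2]

/-- In a residue field, `a (x² + y²) = 1` is solvable for `a ≠ 0`, and for `a = 0` the form is
isotropic because `u² + v² = -1`. A simultaneous lift represents an element `1 + ε` with `ε` nilpotent,
which is the inverse of a square. -/
theorem phiForm_represents_one_of_isUnit {R : Type*} [CommRing R] [Finite R] (h2 : IsUnit (2:R))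
    (a b u v : R) (hab : 1 + u ^ 2 + v ^ 2 = a * b) : ∃ y, phiForm a b u v y = 1 := by
  have h (I : MaximalSpectrum R) : ∃ y : Fin 4 → R ⧸ I.asIdeal,
      phiForm (Ideal.Quotient.mk _ a) (Ideal.Quotient.mk _ b) (Ideal.Quotient.mk _ u)
        (Ideal.Quotient.mk _ v) y = 1 := by
    have := I.isMaximal
    have hfin : Finite (R ⧸ I.asIdeal) := Finite.of_surjective _ Ideal.Quotient.mk_surjective
    let _ : Field (R ⧸ I.asIdeal) := Ideal.Quotient.field _
    have h2' : (2 : R ⧸ I.asIdeal) ≠ 0 := by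
      have := (h2.map (Ideal.Quotient.mk I.asIdeal)).ne_zero
      rwa [map_ofNat] at this
    have hab' := congrArg (Ideal.Quotient.mk I.asIdeal) hab
    simp only [map_add, map_one, map_mul, map_pow] at hab'
    generalize Ideal.Quotient.mk I.asIdeal a = a at *
    generalize Ideal.Quotient.mk I.asIdeal b = b at *
    generalize Ideal.Quotient.mk I.asIdeal u = u at *
    generalize Ideal.Quotient.mk I.asIdeal v = v at *
    by_cases ha : a = 0
    · refine ⟨![1, 0, (b - 1) / 2 * u, (b - 1) / 2 * v], ?_⟩
      have : 2 * ((b - 1) / 2) = b - 1 := by field_simp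
      simp [phiForm, ha]
      rw [ha] at hab'
      linear_combination (u ^ 2 + v ^ 2) * this + (b - 1) * hab'
    · obtain ⟨x, y, h⟩ := field_sum_two_sq h2' a⁻¹
      refine ⟨![0, 0, x, y], ?_⟩
      simp [phiForm, h, ha]
  choose y hy using h
  choose z hz using fun i => exists_lift_maximal fun I => y I i
  have hn : IsNilpotent (phiForm a b u v z - 1) := isNilpotent_of_maximal _ fun I => by
    rw [map_sub, map_phiForm, map_one, sub_eq_zero, ← hy I]
    congr 1
    ext i; exact hz i I
  obtain ⟨s, hs⟩ := exists_scale h2 _ hn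
  refine ⟨fun i => s * z i, ?_⟩
  rw [← hs]
  simp only [phiForm]; ring

/-- A finite ring splits as a product of a ring where `2` is invertible and one where `2` is
nilpotent; on the first factor one works over residue fields, on the second `a ≡ 1 mod 8` is a
square. -/
theorem phiForm_represents_one {R : Type*} [CommRing R] [Finite R]
    (a b u v c : R) (ha : a = 1 + 8 * c) (hab : 1 + u ^ 2 + v ^ 2 = a * b) :
    ∃ y, phiForm a b u v y = 1 := by
  obtain ⟨k, m, hm, hn⟩ := Nat.exists_eq_two_pow_mul_odd (n := Nat.card R) Nat.card_pos.ne'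
  have hR : ((2:R) ^ k * m) = 0 := by
    have : ((Nat.card R : ℕ) : R) = 0 := by
      have := card_nsmul_eq_zero' (x := (1:R))
      simpa using this
    rw [hn] at this; exact_mod_cast this
  obtain ⟨y₁, h₁⟩ : ∃ y : Fin 4 → R, ∃ t, phiForm a b u v y = 1 + m * t := by
    let I := Ideal.span {(m : R)}
    have hfin : Finite (R ⧸ I) := Finite.of_surjective _ Ideal.Quotient.mk_surjective
    have hu : IsUnit (2 : R ⧸ I) := by
      obtain ⟨j, hj⟩ := hm
      refine IsUnit.of_mul_eq_one (-(j : R ⧸ I)) ?_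
      have : (m : R ⧸ I) = 0 := by
        have : Ideal.Quotient.mk I (m : R) = 0 :=
          Ideal.Quotient.eq_zero_iff_mem.2 (Ideal.mem_span_singleton_self _)
        simpa using this
      rw [hj] at this
      push_cast at this
      linear_combination -this
    obtain ⟨y, hy⟩ := phiForm_represents_one_of_isUnit hu (Ideal.Quotient.mk I a)
      (Ideal.Quotient.mk I b) (Ideal.Quotient.mk I u) (Ideal.Quotient.mk I v) (by
        simpa using congrArg (Ideal.Quotient.mk I) hab)
    choose z hz using fun i => Ideal.Quotient.mk_surjective (y i)
    obtain rfl : (fun i => Ideal.Quotient.mk I (z i)) = y := funext hz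
    rw [← map_phiForm, ← map_one (Ideal.Quotient.mk I), Ideal.Quotient.mk_eq_mk_iff_sub_mem,
      Ideal.mem_span_singleton] at hy
    obtain ⟨t, ht⟩ := hy
    exact ⟨z, t, by linear_combination ht⟩
  obtain ⟨y₂, h₂⟩ : ∃ y : Fin 4 → R, ∃ t, phiForm a b u v y = 1 + 2 ^ k * t := by
    let I := Ideal.span {(2 ^ k : R)}
    obtain ⟨s, hs⟩ := exists_sq_mul_of_two_nilpotent (R := R ⧸ I) ⟨k, by
      have : Ideal.Quotient.mk I (2 ^ k : R) = 0 :=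
          Ideal.Quotient.eq_zero_iff_mem.2 (Ideal.mem_span_singleton_self _)
      rwa [map_pow, map_ofNat] at this⟩ (Ideal.Quotient.mk I c)
    obtain ⟨s, rfl⟩ := Ideal.Quotient.mk_surjective s
    have : Ideal.Quotient.mk I (a * s ^ 2) = Ideal.Quotient.mk I 1 := by
      rw [ha]; simpa [map_ofNat (Ideal.Quotient.mk I) 8] using hs
    rw [Ideal.Quotient.mk_eq_mk_iff_sub_mem, Ideal.mem_span_singleton] at this
    obtain ⟨t, ht⟩ := this
    exact ⟨![0, 0, s, 0], t, by simp [phiForm]; linear_combination ht⟩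
  obtain ⟨t₁, h₁⟩ := h₁
  obtain ⟨t₂, h₂⟩ := h₂
  have hcop : IsCoprime ((2:R) ^ k) (m : R) := by
    have : IsCoprime ((2 ^ k : ℕ) : ℤ) (m : ℤ) :=
      Nat.isCoprime_iff_coprime.2 (Nat.Coprime.pow_left k (Nat.coprime_two_left.2 hm))
    have := this.map (Int.castRingHom R)
    simpa using this
  obtain ⟨α, β, hαβ⟩ := hcop
  have hbil (e f : R) (x y : Fin 4 → R) (hef : e * f = 0) :
      phiForm a b u v (fun i => e * x i + f * y i)
        = e ^ 2 * phiForm a b u v x + f ^ 2 * phiForm a b u v y := by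
    simp only [phiForm]
    linear_combination (2 * b * (x 0 * y 0 + x 1 * y 1) + 2 * x 0 * (u * y 2 + v * y 3)
      + 2 * y 0 * (u * x 2 + v * x 3) + 2 * x 1 * (v * y 2 - u * y 3)
      + 2 * y 1 * (v * x 2 - u * x 3) + 2 * a * (x 2 * y 2 + x 3 * y 3)) * hef
  refine ⟨fun i => (α * 2 ^ k) * y₁ i + (β * m) * y₂ i, ?_⟩
  rw [hbil _ _ _ _ (by linear_combination α * β * hR), h₁, h₂]
  linear_combination (α ^ 2 * 2 ^ k * t₁ + β ^ 2 * m * t₂ - 2 * α * β) * hR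
    + (α * 2 ^ k + β * m + 1) * hαβ
end LocalData

end

/-! ### An explicit unimodular form -/

section

open NumberField
section LocalMatrices
variable {R : Type*} [CommRing R]

/-- A symmetric matrix of determinant `(a b - u² - v²)²`, hence unimodular when
`1 + u² + v² = a b`. -/
def matS (a b u v : R) : Matrix (Fin 4) (Fin 4) R :=
  !![b, 0, u, v; 0, b, v, -u; u, v, a, 0; v, -u, 0, a]

/-- The inverse of `matS a b u v` when `1 + u² + v² = a b`. -/
def matT (a b u v : R) : Matrix (Fin 4) (Fin 4) R :=
  !![a, 0, -u, -v; 0, a, -v, u; -u, -v, b, 0; -v, u, 0, b]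

/-- A matrix that embeds `a • matS a b u v` into the sum of four squares when
`1 + u² + v² = a b`. -/
def matG (a u v : R) : Matrix (Fin 4) (Fin 4) R :=
  !![1, 0, 0, 0; 0, 1, 0, 0; u, v, a, 0; v, -u, 0, a]

/-- The change of basis carrying `matS a b u v` to the identity, built from a vector `y` on which the
form has value `1`. -/
def matH (a b u v : R) (y : Fin 4 → R) : Matrix (Fin 4) (Fin 4) R :=
  !![y 0, -y 1, -(u * y 0 + v * y 1 + a * y 2), -(v * y 0 - u * y 1 + a * y 3);
     y 1, y 0, -(v * y 0 - u * y 1 + a * y 3), u * y 0 + v * y 1 + a * y 2;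
     y 2, y 3, b * y 0 + u * y 2 + v * y 3, -(b * y 1 + v * y 2 - u * y 3);
     y 3, -y 2, b * y 1 + v * y 2 - u * y 3, b * y 0 + u * y 2 + v * y 3]

theorem matS_transpose (a b u v : R) : (matS a b u v).transpose = matS a b u v := by
  ext i j; fin_cases i <;> fin_cases j <;> simp [matS]

theorem matT_mul_matS (a b u v : R) (hab : 1 + u ^ 2 + v ^ 2 = a * b) :
    matT a b u v * matS a b u v = 1 := by
  ext i j
  fin_cases i <;> fin_cases j <;> simp [matS, matT, Matrix.mul_apply, Fin.sum_univ_four] <;> grind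

theorem matG_gram (a b u v : R) (hab : 1 + u ^ 2 + v ^ 2 = a * b) :
    (matG a u v).transpose * matG a u v = a • matS a b u v := by
  ext i j
  fin_cases i <;> fin_cases j <;> simp [matS, matG, Matrix.mul_apply, Fin.sum_univ_four] <;> grind

theorem matG_det (a u v : R) : (matG a u v).det = a ^ 2 := by
  simp [matG, Matrix.det_succ_row_zero, Fin.sum_univ_succ]; ring

theorem matH_gram (a b u v : R) (y : Fin 4 → R) (hab : 1 + u ^ 2 + v ^ 2 = a * b)
    (hy : phiForm a b u v y = 1) :
    (matH a b u v y).transpose * matS a b u v * matH a b u v y = 1 := by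
  simp only [phiForm] at hy
  generalize h0 : y 0 = y0 at *
  generalize h1 : y 1 = y1 at *
  generalize h2 : y 2 = y2 at *
  generalize h3 : y 3 = y3 at *
  ext i j
  fin_cases i <;> fin_cases j <;>
    simp [matS, matH, Matrix.mul_apply, Fin.sum_univ_four, h0, h1, h2, h3] <;> grind
end LocalMatrices

end

/-! ### Four squares: elements congruent to one modulo eight -/

section

open NumberField
section
variable {R : Type*} [CommRing R]

/-- Sums over the values of a form equivalent to the sum of four squares are the corresponding sums
for four squares. -/
theorem sum_addChar_congr [Fintype R] {M : Type*} [AddCommMonoid M] (f : R → M)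
    (S H : Matrix (Fin 4) (Fin 4) R) (h : H.transpose * S * H = 1) :
    ∑ c : Fin 4 → R, f (c ⬝ᵥ S.mulVec c) = ∑ c : Fin 4 → R, f (c ⬝ᵥ c) := by
  have h' : H * (H.transpose * S) = 1 := mul_eq_one_comm.1 h
  let e : (Fin 4 → R) ≃ (Fin 4 → R) :=
    { toFun := fun c => H.mulVec c
      invFun := fun c => (H.transpose * S).mulVec c
      left_inv := fun c => by simp only [Matrix.mulVec_mulVec]; rw [h, Matrix.one_mulVec]
      right_inv := fun c => by simp only [Matrix.mulVec_mulVec]; rw [h', Matrix.one_mulVec] }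
  rw [← Equiv.sum_comp e]
  refine Finset.sum_congr rfl fun c _ => congrArg f ?_
  change H.mulVec c ⬝ᵥ S.mulVec (H.mulVec c) = _
  rw [Matrix.mulVec_mulVec, Matrix.dotProduct_mulVec, ← Matrix.mulVec_transpose,
    Matrix.mulVec_mulVec, dotProduct_comm]
  have : (S * H).transpose * H = 1 := by
    have := congrArg Matrix.transpose h
    rw [Matrix.transpose_mul, Matrix.transpose_mul, Matrix.transpose_transpose,
      Matrix.transpose_one] at this
    rw [Matrix.transpose_mul, ← this, Matrix.mul_assoc]
  rw [this, Matrix.one_mulVec]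

/-- Nonzero sums of four squares. -/
def Is4 {K : Type*} [Field K] (a : K) : Prop :=
  a ≠ 0 ∧ ∃ x y z t : K, a = x ^ 2 + y ^ 2 + z ^ 2 + t ^ 2

theorem Is4.mul {K : Type*} [Field K] {a b : K} (ha : Is4 a) (hb : Is4 b) : Is4 (a * b) := by
  obtain ⟨ha0, x, y, z, t, rfl⟩ := ha
  obtain ⟨hb0, x', y', z', t', rfl⟩ := hb
  refine ⟨mul_ne_zero ha0 hb0, x * x' - y * y' - z * z' - t * t',
    x * y' + y * x' + z * t' - t * z', x * z' - y * t' + z * x' + t * y',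
    x * t' + y * z' - z * y' + t * x', ?_⟩
  ring

theorem Is4.sq {K : Type*} [Field K] {a : K} (ha : a ≠ 0) : Is4 (a ^ 2) :=
  ⟨pow_ne_zero _ ha, a, 0, 0, 0, by ring⟩

theorem Is4.inv {K : Type*} [Field K] {a : K} (ha : Is4 a) : Is4 a⁻¹ := by
  have : a⁻¹ = a * (a⁻¹) ^ 2 := by have := ha.1; field_simp
  rw [this]
  exact ha.mul (Is4.sq (inv_ne_zero ha.1))

theorem Is4.div {K : Type*} [Field K] {a b : K} (ha : Is4 a) (hb : Is4 b) : Is4 (a / b) := by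
  rw [div_eq_mul_inv]; exact ha.mul hb.inv

variable {K : Type*} [Field K] [NumberField K] [IsTotallyReal K]

/-- The case `a ≡ 1 mod 8` of Siegel's theorem: `matS a b u v` and the sum of four squares have a
common nonzero value `t`, and both `t` and `a t` are sums of four squares. -/
theorem is4_of_one_mod_eight (a c : 𝓞 K) (ha : a = 1 + 8 * c)
    (hpos : ∀ w : InfinitePlace K, 0 < sg w (a : K)) : Is4 (a : K) := by
  classical
  have ha0 : a ≠ 0 := by
    rintro h
    obtain ⟨w⟩ : Nonempty (InfinitePlace K) := inferInstance
    have := hpos w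
    simp [h] at this
  have hfin (q : 𝓞 K) (hq : q ≠ 0) : Finite (𝓞 K ⧸ Ideal.span {q}) :=
    Ideal.finiteQuotientOfFreeOfNeBot _ (by simpa [Ideal.span_singleton_eq_bot] using hq)
  obtain ⟨b, u, v, hab⟩ : ∃ b u v : 𝓞 K, 1 + u ^ 2 + v ^ 2 = a * b := by
    have := hfin a ha0
    have hz : Ideal.Quotient.mk (Ideal.span {a}) a = 0 :=
      Ideal.Quotient.eq_zero_iff_mem.2 (Ideal.mem_span_singleton_self _)
    obtain ⟨u, v, huv⟩ := exists_sq_add_sq_eq_neg_one (R := 𝓞 K ⧸ Ideal.span {a}) (by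
      refine IsUnit.of_mul_eq_one (-4 * Ideal.Quotient.mk _ c) ?_
      have ha' := congrArg (Ideal.Quotient.mk (Ideal.span {a})) ha
      rw [hz] at ha'
      simp only [map_add, map_one, map_mul, map_ofNat] at ha'
      linear_combination ha')
    obtain ⟨u, rfl⟩ := Ideal.Quotient.mk_surjective u
    obtain ⟨v, rfl⟩ := Ideal.Quotient.mk_surjective v
    have : Ideal.Quotient.mk (Ideal.span {a}) (1 + u ^ 2 + v ^ 2) = 0 := by
      simp only [map_add, map_one, map_pow]; linear_combination huv
    rw [Ideal.Quotient.eq_zero_iff_mem, Ideal.mem_span_singleton] at this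
    obtain ⟨b, hb⟩ := this
    exact ⟨b, u, v, hb⟩
  let U : InfinitePlace K → Matrix (Fin 4) (Fin 4) ℝ := fun w =>
    (√(sg w (a : K)))⁻¹ • (matG a u v).map fun s : 𝓞 K => sg w (s : K)
  have hmap (w : InfinitePlace K) (M : Matrix (Fin 4) (Fin 4) (𝓞 K)) :
      M.map (fun s : 𝓞 K => sg w (s : K)) = M.map ((sg w).comp (algebraMap (𝓞 K) K)) := rfl
  have hsq (w : InfinitePlace K) : √(sg w (a : K)) ^ 2 = sg w (a : K) :=
    Real.sq_sqrt (hpos w).le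
  have hsp (w : InfinitePlace K) : √(sg w (a : K)) ≠ 0 := (Real.sqrt_pos.2 (hpos w)).ne'
  obtain ⟨x, z, hxz, hne⟩ := common_value (K := K) U (fun _ => 1) (matS a b u v) 1
    (matT a b u v) 1 (fun w => by
      simp only [U]
      rw [Matrix.transpose_smul, Matrix.smul_mul, Matrix.mul_smul, smul_smul, hmap, hmap,
        ← Matrix.transpose_map, ← Matrix.map_mul, matG_gram a b u v hab]
      ext i j
      simp only [Matrix.smul_apply, Matrix.map_apply, smul_eq_mul, map_mul, RingHom.comp_apply]
      rw [← RingOfIntegers.coe_eq_algebraMap]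
      have h1 : (√(sg w (a : K)))⁻¹ * (√(sg w (a : K)))⁻¹ * sg w (a : K) = 1 := by
        nth_rw 3 [← hsq w]
        field_simp [hsp w]
      rw [← mul_assoc, h1, one_mul]) (fun w => by
      rw [Matrix.transpose_one, one_mul, hmap, Matrix.map_one _ (map_zero _) (map_one _)])
    (fun w => by
      simp only [U]
      rw [Matrix.det_smul, hmap, ← RingHom.mapMatrix_apply, ← RingHom.map_det, matG_det]
      simp only [Fintype.card_fin, map_pow, RingHom.comp_apply]
      rw [← RingOfIntegers.coe_eq_algebraMap]
      nth_rw 2 [← hsq w]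
      have : (√(sg w (a : K)))⁻¹ ^ 4 * ((√(sg w (a : K))) ^ 2) ^ 2 = 1 := by
        field_simp [hsp w]
      rw [this, abs_one]) (fun w => by simp) (matS_transpose a b u v)
    (matT_mul_matS a b u v hab) Matrix.transpose_one (one_mul 1) (fun p q hq _ => by
      obtain ⟨y, hy⟩ := phiForm_represents_one (R := 𝓞 K ⧸ Ideal.span {q})
        (Ideal.Quotient.mk _ a) (Ideal.Quotient.mk _ b) (Ideal.Quotient.mk _ u)
        (Ideal.Quotient.mk _ v) (Ideal.Quotient.mk _ c)
        (by rw [ha]; simp [map_ofNat (Ideal.Quotient.mk (Ideal.span {q})) 8])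
        (by rw [← map_mul, ← hab]; simp)
      have h := matH_gram _ _ _ _ y (by rw [← map_mul, ← hab]; simp) hy
      have hS : (matS a b u v).map (Ideal.Quotient.mk (Ideal.span {q}))
          = matS (Ideal.Quotient.mk _ a) (Ideal.Quotient.mk _ b) (Ideal.Quotient.mk _ u)
              (Ideal.Quotient.mk _ v) := by
        ext i j; fin_cases i <;> fin_cases j <;> simp [matS]
      rw [hS, sum_addChar_congr _ _ _ h, Matrix.map_one _ (map_zero _) (map_one _)]
      simp only [Matrix.one_mulVec])
  have hG : a * (x ⬝ᵥ (matS a b u v).mulVec x)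
      = (matG a u v).mulVec x ⬝ᵥ (matG a u v).mulVec x := by
    rw [Matrix.dotProduct_mulVec ((matG a u v).mulVec x), ← Matrix.mulVec_transpose,
      Matrix.mulVec_mulVec, matG_gram a b u v hab, Matrix.smul_mulVec,
      smul_dotProduct, smul_eq_mul, dotProduct_comm x]
  rw [Matrix.one_mulVec] at hxz
  have h4 (y : Fin 4 → 𝓞 K) (hy : y ⬝ᵥ y ≠ 0) : Is4 ((y ⬝ᵥ y : 𝓞 K) : K) := by
    refine ⟨?_, (y 0 : K), (y 1 : K), (y 2 : K), (y 3 : K), ?_⟩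
    · simpa using hy
    · simp [dotProduct, Fin.sum_univ_four]; ring
  have hz := h4 z (hxz ▸ hne)
  have hg := h4 ((matG a u v).mulVec x) (by rw [← hG]; exact mul_ne_zero ha0 hne)
  rw [← hG] at hg
  have h1 : (a : K) = ((a * (x ⬝ᵥ (matS a b u v).mulVec x) : 𝓞 K) : K) / ((z ⬝ᵥ z : 𝓞 K) : K) := by
    rw [eq_div_iff hz.1, hxz]
    exact (map_mul (algebraMap (𝓞 K) K) _ _).symm
  rw [h1]
  exact hg.div hz
end

end

/-! ### Dyadic approximation -/

section

open NumberField
section Dyadic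
variable {K : Type*} [Field K] [NumberField K]

/-- Some fixed `4 ^ k * a` is congruent to a sum of four squares modulo every power of `p`. -/
def Loc4 (p : Ideal (𝓞 K)) (a : 𝓞 K) : Prop :=
  ∃ k : ℕ, ∀ N : ℕ, ∃ x : Fin 4 → 𝓞 K, x ⬝ᵥ x - 4 ^ k * a ∈ p ^ N

/-- The product of quaternions in coordinates. -/
def quatMul {R : Type*} [CommRing R] (x y : Fin 4 → R) : Fin 4 → R :=
  ![x 0 * y 0 - x 1 * y 1 - x 2 * y 2 - x 3 * y 3,
    x 0 * y 1 + x 1 * y 0 + x 2 * y 3 - x 3 * y 2,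
    x 0 * y 2 - x 1 * y 3 + x 2 * y 0 + x 3 * y 1,
    x 0 * y 3 + x 1 * y 2 - x 2 * y 1 + x 3 * y 0]

theorem quatMul_dot {R : Type*} [CommRing R] (x y : Fin 4 → R) :
    quatMul x y ⬝ᵥ quatMul x y = (x ⬝ᵥ x) * (y ⬝ᵥ y) := by
  simp [quatMul, dotProduct, Fin.sum_univ_four]; ring

omit [NumberField K] in
theorem Loc4.of_eq {p : Ideal (𝓞 K)} {a : 𝓞 K} (k : ℕ) (x : Fin 4 → 𝓞 K)
    (h : x ⬝ᵥ x = 4 ^ k * a) : Loc4 p a :=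
  ⟨k, fun N => ⟨x, by rw [h, sub_self]; exact zero_mem _⟩⟩

omit [NumberField K] in
theorem Loc4.mul {p : Ideal (𝓞 K)} {a b : 𝓞 K} (ha : Loc4 p a) (hb : Loc4 p b) :
    Loc4 p (a * b) := by
  obtain ⟨k, ha⟩ := ha
  obtain ⟨l, hb⟩ := hb
  refine ⟨k + l, fun N => ?_⟩
  obtain ⟨x, hx⟩ := ha N
  obtain ⟨y, hy⟩ := hb N
  refine ⟨quatMul x y, ?_⟩
  rw [quatMul_dot]
  have : (x ⬝ᵥ x) * (y ⬝ᵥ y) - 4 ^ (k + l) * (a * b)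
      = (y ⬝ᵥ y) * (x ⬝ᵥ x - 4 ^ k * a) + 4 ^ k * a * (y ⬝ᵥ y - 4 ^ l * b) := by ring
  rw [this]
  exact add_mem (Ideal.mul_mem_left _ _ hx) (Ideal.mul_mem_left _ _ hy)

/-- The norm provides a cofactor of `c` whose product with `c` is a rational integer. -/
theorem exists_mul_eq_two_pow_odd (c : 𝓞 K) (hc : c ≠ 0) :
    ∃ (c' : 𝓞 K) (v m : ℕ), Odd m ∧ c * c' = 2 ^ v * m := by
  have h := Ideal.absNorm_mem (Ideal.span {c})
  rw [Ideal.mem_span_singleton] at h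
  obtain ⟨c', hc'⟩ := h
  have hn : Ideal.absNorm (Ideal.span {c}) ≠ 0 := by
    rw [Ne, Ideal.absNorm_eq_zero_iff, Ideal.span_singleton_eq_bot]; exact hc
  obtain ⟨v, m, hm, hvm⟩ := Nat.exists_eq_two_pow_mul_odd hn
  exact ⟨c', v, m, hm, by rw [← hc', hvm]; push_cast; rfl⟩

/-- Square factors can be removed: a cofactor of `c` turns `c²` into a power of `4` times an odd
square, which is invertible modulo powers of `p`. -/
theorem Loc4.of_mul_sq {p : Ideal (𝓞 K)} (h2 : (2 : 𝓞 K) ∈ p) {a c : 𝓞 K} (hc : c ≠ 0)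
    (h : Loc4 p (a * c ^ 2)) : Loc4 p a := by
  obtain ⟨c', v, m, hm, hcc⟩ := exists_mul_eq_two_pow_odd c hc
  obtain ⟨k, h⟩ := h
  refine ⟨k + v, fun N => ?_⟩
  obtain ⟨x, hx⟩ := h N
  have hcop : IsCoprime ((2:𝓞 K) ^ N) (m : 𝓞 K) := by
    have : IsCoprime ((2 ^ N : ℕ) : ℤ) (m : ℤ) :=
      Nat.isCoprime_iff_coprime.2 (Nat.Coprime.pow_left N (Nat.coprime_two_left.2 hm))
    have := this.map (Int.castRingHom (𝓞 K))
    simpa using this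
  obtain ⟨α, β, hαβ⟩ := hcop
  refine ⟨(β * c') • x, ?_⟩
  rw [smul_dotProduct, dotProduct_smul, smul_eq_mul, smul_eq_mul]
  have : β * c' * (β * c' * x ⬝ᵥ x) - 4 ^ (k + v) * a
      = (β * c') ^ 2 * (x ⬝ᵥ x - 4 ^ k * (a * c ^ 2))
        + (4 ^ (k + v) * a * (α * (- 1 - β * m))) * 2 ^ N := by
    have h4 : (4 : 𝓞 K) ^ v = (2 ^ v) ^ 2 := by rw [← pow_mul, mul_comm v, pow_mul]; norm_num
    rw [pow_add, h4]
    linear_combination (β ^ 2 * 4 ^ k * a * (c * c' + 2 ^ v * m)) * hcc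
      + (4 ^ k * (2 ^ v) ^ 2 * a * (β * m + 1)) * hαβ
  rw [this]
  exact add_mem (Ideal.mul_mem_left _ _ hx) (Ideal.mul_mem_left _ _ (Ideal.pow_mem_pow h2 N))

theorem Loc4.of_mul {p : Ideal (𝓞 K)} (h2 : (2 : 𝓞 K) ∈ p) {a c : 𝓞 K} (hc : c ≠ 0)
    (h : Loc4 p (a * c)) (hc4 : Loc4 p c) : Loc4 p a :=
  Loc4.of_mul_sq h2 hc (by rw [sq, ← mul_assoc]; exact h.mul hc4)

/-- The residue field at a prime above `2` is perfect. -/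
theorem exists_sq_sub_mem (p : Ideal (𝓞 K)) [hp : p.IsMaximal] (h2 : (2 : 𝓞 K) ∈ p) (a : 𝓞 K) :
    ∃ y : 𝓞 K, y ^ 2 - a ∈ p := by
  have hp0 : p ≠ ⊥ := by
    rintro rfl; exact two_ne_zero (Ideal.mem_bot.1 h2)
  let _ : Field (𝓞 K ⧸ p) := Ideal.Quotient.field p
  have : Finite (𝓞 K ⧸ p) := Ideal.finiteQuotientOfFreeOfNeBot _ hp0
  have hch : CharP (𝓞 K ⧸ p) 2 := by
    refine CharTwo.of_one_ne_zero_of_two_eq_zero one_ne_zero ?_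
    rw [← map_ofNat (Ideal.Quotient.mk p) 2]
    exact Ideal.Quotient.eq_zero_iff_mem.2 h2
  have : PerfectRing (𝓞 K ⧸ p) 2 := inferInstance
  obtain ⟨y, hy⟩ := (bijective_frobenius (𝓞 K ⧸ p) 2).2 (Ideal.Quotient.mk p a)
  obtain ⟨y, rfl⟩ := Ideal.Quotient.mk_surjective y
  refine ⟨y, Ideal.Quotient.eq_zero_iff_mem.1 ?_⟩
  rw [map_sub, map_pow, sub_eq_zero]
  exact hy

open Polynomial in
/-- For `a` prime to `p`, choose `y` with `y² ≡ a`; Hensel's lemma gives a root `z` of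
`z² + y z + (y² - a)`, and then `4 a = (2 y + z)² + 3 z²`. -/
theorem Loc4.of_notMem {p : Ideal (𝓞 K)} [hp : p.IsMaximal] (h2 : (2 : 𝓞 K) ∈ p) {a : 𝓞 K}
    (ha : a ∉ p) : Loc4 p a := by
  obtain ⟨y, hy⟩ := exists_sq_sub_mem p h2 a
  have hyp : y ∉ p := fun h => ha (by
    have : a = y * y - (y ^ 2 - a) := by ring
    rw [this]; exact sub_mem (Ideal.mul_mem_left _ _ h) hy)
  refine ⟨1, fun N => ?_⟩
  have hnil (t : 𝓞 K) (ht : t ∈ p) : IsNilpotent (Ideal.Quotient.mk (p ^ N) t) :=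
    ⟨N, by rw [← map_pow]; exact Ideal.Quotient.eq_zero_iff_mem.2 (Ideal.pow_mem_pow ht N)⟩
  have hyu : IsUnit (Ideal.Quotient.mk (p ^ N) y) := by
    obtain ⟨y', hy'⟩ := hp.exists_inv hyp
    obtain ⟨i, hi, h1⟩ := hy'
    have : IsUnit (Ideal.Quotient.mk (p ^ N) (y' * y)) := by
      have : y' * y = 1 + -i := by linear_combination h1
      rw [this, map_add, map_one]
      exact (hnil _ (neg_mem hi)).isUnit_one_add
    rw [map_mul] at this
    exact isUnit_of_mul_isUnit_right this
  obtain ⟨z, ⟨-, hz⟩, -⟩ := existsUnique_nilpotent_sub_and_aeval_eq_zero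
    (x := (0 : 𝓞 K ⧸ p ^ N)) (P := X ^ 2 + C (Ideal.Quotient.mk (p ^ N) y) * X
      + C (Ideal.Quotient.mk (p ^ N) (y ^ 2 - a))) (by simpa using hnil _ hy) (by
      simpa [-map_pow, -map_sub] using hyu)
  obtain ⟨z, rfl⟩ := Ideal.Quotient.mk_surjective z
  have h : z ^ 2 + y * z + (y ^ 2 - a) ∈ p ^ N := by
    rw [← Ideal.Quotient.eq_zero_iff_mem]
    simpa using hz
  refine ⟨![2 * y + z, z, z, z], ?_⟩
  have : (![2 * y + z, z, z, z] ⬝ᵥ ![2 * y + z, z, z, z] : 𝓞 K) - 4 ^ 1 * a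
      = 4 * (z ^ 2 + y * z + (y ^ 2 - a)) := by
    simp [dotProduct, Fin.sum_univ_four]; ring
  rw [this]
  exact Ideal.mul_mem_left _ _ h

/-- Up to factors prime to `p`, every nonzero element is a power of a uniformizer. -/
theorem exists_notMem_mul_eq {p : Ideal (𝓞 K)} [hp : p.IsMaximal] {π a : 𝓞 K} (hπ : π ∈ p)
    (hπ2 : π ∉ p ^ 2) (ha : a ≠ 0) : ∃ (j : ℕ) (t u : 𝓞 K), t ∉ p ∧ u ∉ p ∧ a * t = π ^ j * u := by
  have hex : ∃ j, a ∉ p ^ (j + 1) := by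
    by_contra! h
    have h0 := Ideal.iInf_pow_eq_bot_of_isDomain p hp.ne_top
    apply ha
    rw [← Ideal.mem_bot, ← h0, Ideal.mem_iInf]
    rintro (_ | j)
    · simp
    · exact h j
  classical
  let j := Nat.find hex
  have hj : a ∉ p ^ (j + 1) := Nat.find_spec hex
  have hj' : a ∈ p ^ j := by
    rcases Nat.eq_zero_or_pos j with h | h
    · rw [h]; simp
    · have := Nat.find_min hex (m := j - 1) (Nat.sub_lt h one_pos)
      rw [Nat.sub_add_cancel (show 1 ≤ j from h), not_not] at this
      exact this
  obtain ⟨J, hJ⟩ : p ∣ Ideal.span {π} := by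
    rwa [Ideal.dvd_span_singleton]
  obtain ⟨s, hsJ, hsp⟩ : ∃ s ∈ J, s ∉ p := by
    by_contra! h
    apply hπ2
    have : π ∈ Ideal.span {π} := Ideal.mem_span_singleton_self π
    rw [hJ] at this
    rw [sq]
    exact Ideal.mul_mono_right h this
  have hsj : s ^ j ∉ p := fun h => hsp (hp.isPrime.mem_of_pow_mem _ h)
  have hmem : a * s ^ j ∈ Ideal.span {π} ^ j := by
    rw [hJ, mul_pow]
    exact Ideal.mul_mem_mul hj' (Ideal.pow_mem_pow hsJ j)
  rw [Ideal.span_singleton_pow, Ideal.mem_span_singleton] at hmem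
  obtain ⟨u, hu⟩ := hmem
  refine ⟨j, s ^ j, u, hsj, fun hup => ?_, hu⟩
  have : s ^ j * a ∈ p ^ (j + 1) := by
    rw [mul_comm, hu, pow_succ]
    exact Ideal.mul_mem_mul (Ideal.pow_mem_pow hπ j) hup
  exact ((Ideal.IsMaximal.mul_mem_pow p this).resolve_left hsj |> hj)

omit [NumberField K] in
theorem ne_zero_of_notMem {p : Ideal (𝓞 K)} {t : 𝓞 K} (h : t ∉ p) : t ≠ 0 := by
  rintro rfl; exact h (zero_mem _)

/-- Write `2 t = π ^ e u` with `t, u` prime to `p`. For odd `e`, the sum of squares `2 = 1² + 1²` is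
a uniformizer up to squares. For `e = 2 f`, the element `4 (π ^ (2 f) (Y² + Y Z + Z²) + 2)` is a sum
of four squares, and `Y, Z` can be chosen so that its quotient by the square `4 π ^ (2 f)` has
valuation one. -/
theorem Loc4.exists_uniformizer {p : Ideal (𝓞 K)} [hp : p.IsMaximal] (h2 : (2 : 𝓞 K) ∈ p) :
    ∃ w : 𝓞 K, w ∈ p ∧ w ∉ p ^ 2 ∧ Loc4 p w := by
  have hp0 : p ≠ ⊥ := by
    rintro rfl; exact two_ne_zero (Ideal.mem_bot.1 h2)
  obtain ⟨π, hπ, hπ2⟩ : ∃ π ∈ p, π ∉ p ^ 2 := by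
    have := Ideal.exists_mem_pow_notMem_pow_succ p hp0 hp.ne_top 1
    simpa using this
  have hπ0 : π ≠ 0 := ne_zero_of_notMem hπ2
  have hmul (t : 𝓞 K) (ht : t ∉ p) : π * t ∈ p ∧ π * t ∉ p ^ 2 :=
    ⟨Ideal.mul_mem_right _ _ hπ, fun h => hπ2 (by
      rw [mul_comm] at h
      exact (Ideal.IsMaximal.mul_mem_pow p h).resolve_left ht)⟩
  obtain ⟨e, t, u, ht, hu, htu⟩ := exists_notMem_mul_eq hπ hπ2 (two_ne_zero (α := 𝓞 K))
  rcases Nat.even_or_odd' e with ⟨f, rfl | rfl⟩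
  · -- a combination of valuation one
    obtain ⟨Y, Z, hw, hw2⟩ : ∃ Y Z : 𝓞 K, t * (Y ^ 2 + Y * Z + Z ^ 2) + u ∈ p ∧
        t * (Y ^ 2 + Y * Z + Z ^ 2) + u ∉ p ^ 2 := by
      obtain ⟨t', i, hi, ht'⟩ := hp.exists_inv ht
      obtain ⟨Y, hY⟩ := exists_sq_sub_mem p h2 (-u * t')
      have h0 : t * Y ^ 2 + u ∈ p := by
        have : t * Y ^ 2 + u = t * (Y ^ 2 - -u * t') + u * i := by linear_combination -u * ht'
        rw [this]
        exact add_mem (Ideal.mul_mem_left _ _ hY) (Ideal.mul_mem_left _ _ hi)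
      have hYp : Y ∉ p := fun h => hu (by
        have : u = (t * Y ^ 2 + u) - t * Y * Y := by ring
        rw [this]
        exact sub_mem h0 (Ideal.mul_mem_left _ _ h))
      by_cases h1 : t * Y ^ 2 + u ∈ p ^ 2
      · refine ⟨Y, π, ?_, fun h => ?_⟩
        · have : t * (Y ^ 2 + Y * π + π ^ 2) + u = (t * Y ^ 2 + u) + t * (Y + π) * π := by ring
          rw [this]
          exact add_mem h0 (Ideal.mul_mem_left _ _ hπ)
        · refine (hmul (t * (Y + π)) fun h' => ?_).2 ?_
          · rcases hp.isPrime.mem_or_mem h' with h' | h'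
            · exact ht h'
            · exact hYp (by simpa using sub_mem h' hπ)
          · have : π * (t * (Y + π))
                = (t * (Y ^ 2 + Y * π + π ^ 2) + u) - (t * Y ^ 2 + u) := by ring
            rw [this]
            exact sub_mem h h1
      · exact ⟨Y, 0, by simpa using h0, by simpa using h1⟩
    refine ⟨_, hw, hw2, ?_⟩
    refine Loc4.of_mul_sq h2 (c := π ^ f) (pow_ne_zero _ hπ0) ?_
    have hβ : Loc4 p ((π ^ f) ^ 2 * (Y ^ 2 + Y * Z + Z ^ 2) + 2) :=
      Loc4.of_eq 1 ![π ^ f * (2 * Y + Z), π ^ f * Z + 2, π ^ f * Z - 2, π ^ f * Z] (by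
        simp [dotProduct, Fin.sum_univ_four]; ring)
    have : (t * (Y ^ 2 + Y * Z + Z ^ 2) + u) * (π ^ f) ^ 2
        = ((π ^ f) ^ 2 * (Y ^ 2 + Y * Z + Z ^ 2) + 2) * t := by
      rw [mul_comm 2 f, pow_mul] at htu
      linear_combination -htu
    rw [this]
    exact hβ.mul (Loc4.of_notMem h2 ht)
  · refine ⟨π * u, (hmul u hu).1, (hmul u hu).2, ?_⟩
    refine Loc4.of_mul_sq h2 (c := π ^ f) (pow_ne_zero _ hπ0) ?_
    have : π * u * (π ^ f) ^ 2 = 2 * t := by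
      rw [htu]; ring
    rw [this]
    exact (Loc4.of_eq 0 ![1, 1, 0, 0] (by
      simp [dotProduct, Fin.sum_univ_four]; norm_num)).mul (Loc4.of_notMem h2 ht)

/-- Every nonzero element is a sum of four squares locally at the primes above `2`: these values are
multiplicative, and contain the units and a uniformizer. -/
theorem loc4_of_ne_zero {p : Ideal (𝓞 K)} [hp : p.IsMaximal] (h2 : (2 : 𝓞 K) ∈ p) {a : 𝓞 K}
    (ha : a ≠ 0) : Loc4 p a := by
  obtain ⟨w, hw, hw2, hw4⟩ := Loc4.exists_uniformizer h2
  obtain ⟨j, t, u, ht, hu, h⟩ := exists_notMem_mul_eq hw hw2 ha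
  refine Loc4.of_mul h2 (ne_zero_of_notMem ht) ?_ (Loc4.of_notMem h2 ht)
  rw [h]
  clear h
  refine Loc4.mul ?_ (Loc4.of_notMem h2 hu)
  induction j with
  | zero => exact Loc4.of_eq 0 ![1, 0, 0, 0] (by simp [dotProduct, Fin.sum_univ_four])
  | succ j ih => exact pow_succ w j ▸ ih.mul hw4
end Dyadic

end

/-! ### Siegel's four squares theorem -/

section

open NumberField
section
variable {K : Type*} [Field K] [NumberField K]

theorem finite_primes_over_two :
    {p : Ideal (𝓞 K) | p.IsMaximal ∧ (2 : 𝓞 K) ∈ p}.Finite := by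
  have h := Ideal.finite_factors (R := 𝓞 K) (I := Ideal.span {2})
    (by simp)
  refine (h.image fun v => v.asIdeal).subset ?_
  rintro p ⟨hp, h2⟩
  refine ⟨⟨p, hp.isPrime, ?_⟩, ?_, rfl⟩
  · rintro rfl; exact two_ne_zero (Ideal.mem_bot.1 h2)
  · simpa [Ideal.dvd_span_singleton] using h2

/-- An element that is highly divisible by all primes above `2` is divisible by a power of `2`. -/
theorem exists_pow_two_dvd (N : ℕ) : ∃ M : ℕ, ∀ r : 𝓞 K,
    (∀ p : Ideal (𝓞 K), p.IsMaximal → (2 : 𝓞 K) ∈ p → r ∈ p ^ M) → (2 : 𝓞 K) ^ N ∣ r := by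
  classical
  obtain ⟨n, hn⟩ := (Ideal.span {(2 : 𝓞 K)}).exists_radical_pow_le_of_fg
    (IsNoetherian.noetherian _)
  refine ⟨n * N, fun r hr => ?_⟩
  have hf := finite_primes_over_two (K := K)
  let s := hf.toFinset
  have hs (p : Ideal (𝓞 K)) : p ∈ s ↔ p.IsMaximal ∧ (2 : 𝓞 K) ∈ p := by simp [s]
  have h1 : r ∈ s.inf fun p => p ^ (n * N) := by
    rw [Submodule.mem_finsetInf]
    exact fun p hp => hr p ((hs p).1 hp).1 ((hs p).1 hp).2
  rw [Finset.inf_eq_iInf, ← Ideal.prod_eq_iInf_of_pairwise_isCoprime (by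
    intro p hp q hq hpq
    have := ((hs p).1 hp).1
    have := ((hs q).1 hq).1
    exact (Ideal.isCoprime_of_isMaximal hpq).pow), Finset.prod_pow] at h1
  have h2 : ∏ p ∈ s, p ≤ (Ideal.span {(2 : 𝓞 K)}).radical := by
    rw [Ideal.radical_eq_sInf, le_sInf_iff]
    rintro p ⟨hp2, hp⟩
    have h2p : (2 : 𝓞 K) ∈ p := hp2 (Ideal.mem_span_singleton_self _)
    have hp0 : p ≠ ⊥ := by
      rintro rfl; exact two_ne_zero (Ideal.mem_bot.1 h2p)
    exact Ideal.prod_le_inf.trans (Finset.inf_le ((hs p).2 ⟨hp.isMaximal hp0, h2p⟩))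
  have h3 := Ideal.pow_right_mono h2 (n * N) h1
  rw [pow_mul] at h3
  have h4 := Ideal.pow_right_mono hn N h3
  rwa [Ideal.span_singleton_pow, Ideal.mem_span_singleton] at h4

/-- The local approximations at the primes above `2` glue by the Chinese remainder theorem. -/
theorem exists_sum_sq_sub_dvd (a : 𝓞 K) (ha : a ≠ 0) : ∃ k : ℕ, ∀ N : ℕ, ∃ x : Fin 4 → 𝓞 K,
    (2 : 𝓞 K) ^ N ∣ x ⬝ᵥ x - 4 ^ k * a := by
  classical
  have hf := finite_primes_over_two (K := K)
  let s := hf.toFinset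
  have hs (p : Ideal (𝓞 K)) : p ∈ s ↔ p.IsMaximal ∧ (2 : 𝓞 K) ∈ p := by simp [s]
  have hloc (p : s) : Loc4 p.1 a := by
    have := ((hs p.1).1 p.2).1
    exact loc4_of_ne_zero ((hs p.1).1 p.2).2 ha
  choose k hk using hloc
  refine ⟨Finset.univ.sup k, fun N => ?_⟩
  obtain ⟨M, hM⟩ := exists_pow_two_dvd (K := K) N
  choose x hx using fun p => hk p M
  have hsurj := Ideal.pi_mkQ_surjective (I := fun p : s => (p.1 ^ M : Ideal (𝓞 K))) (by
    intro p q hpq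
    have := ((hs p.1).1 p.2).1
    have := ((hs q.1).1 q.2).1
    exact (Ideal.isCoprime_of_isMaximal fun h => hpq (Subtype.ext h)).pow)
  choose y hy using fun i : Fin 4 => hsurj fun p : s =>
    Ideal.Quotient.mk (p.1 ^ M) (2 ^ (Finset.univ.sup k - k p) * x p i)
  refine ⟨y, hM _ fun p hp h2 => ?_⟩
  let P : s := ⟨p, (hs p).2 ⟨hp, h2⟩⟩
  have hyx (i : Fin 4) : Ideal.Quotient.mk (p ^ M) (y i)
      = Ideal.Quotient.mk (p ^ M) (2 ^ (Finset.univ.sup k - k P) * x P i) := congrFun (hy i) P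
  have h0 : Ideal.Quotient.mk (p ^ M) (x P ⬝ᵥ x P - 4 ^ k P * a) = 0 :=
    Ideal.Quotient.eq_zero_iff_mem.2 (hx P)
  rw [← Ideal.Quotient.eq_zero_iff_mem]
  have hk' : (4 : 𝓞 K) ^ Finset.univ.sup k = (2 ^ (Finset.univ.sup k - k P)) ^ 2 * 4 ^ k P := by
    rw [← pow_mul, mul_comm _ 2, pow_mul, show (2 : 𝓞 K) ^ 2 = 4 by norm_num, ← pow_add,
      Nat.sub_add_cancel (Finset.le_sup (Finset.mem_univ P))]
  rw [hk']
  simp only [dotProduct, Fin.sum_univ_four, map_sub, map_add, map_mul, map_pow] at h0 hyx ⊢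
  simp only [hyx]
  linear_combination (Ideal.Quotient.mk (p ^ M) 2 ^ (Finset.univ.sup k - k P)) ^ 2 * h0

theorem one_add_eight_mul_ne_zero (c : 𝓞 K) : 1 + 8 * c ≠ 0 := by
  intro h
  have hu : IsUnit (2 : 𝓞 K) := IsUnit.of_mul_eq_one (-4 * c) (by linear_combination -h)
  have h1 := hu.map (Algebra.norm ℤ)
  have h2 : Algebra.norm ℤ (2 : 𝓞 K) = 2 ^ Module.finrank ℤ (𝓞 K) := by
    have := Algebra.norm_algebraMap (S := 𝓞 K) (2 : ℤ)
    simpa using this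
  rw [h2, isUnit_pow_iff Module.finrank_pos.ne'] at h1
  exact absurd h1 (by decide)

variable [IsTotallyReal K]

/-- **Siegel's theorem**: a totally positive element of a totally real number field is a sum of four
squares. For integral `a`, a sum of four squares `s` close to `4 ^ k * a` at `2` makes `s a` equal, up
to squares, to an element congruent to `1` modulo `8`. -/
theorem is4_of_pos (a : K) (hpos : ∀ w : InfinitePlace K, 0 < sg w a) : Is4 a := by
  have key (a : 𝓞 K) (hpos : ∀ w : InfinitePlace K, 0 < sg w (a : K)) : Is4 (a : K) := by
    have ha0 : a ≠ 0 := by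
      rintro h
      obtain ⟨w⟩ : Nonempty (InfinitePlace K) := inferInstance
      have := hpos w
      simp [h] at this
    obtain ⟨a', v, m, hm, haa⟩ := exists_mul_eq_two_pow_odd a ha0
    obtain ⟨k, hk⟩ := exists_sum_sq_sub_dvd a ha0
    obtain ⟨x, y, hxy⟩ := hk (2 * k + v + 3)
    obtain ⟨j, hj⟩ : ∃ j : ℕ, m ^ 2 = 1 + 8 * j := by
      have := Nat.eight_dvd_sq_sub_one_of_odd hm
      have := Nat.pow_pos (n := 2) hm.pos
      exact ⟨m ^ 2 / 8, by omega⟩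
    have hj' : (m : 𝓞 K) ^ 2 = 1 + 8 * j := by exact_mod_cast hj
    set s := x ⬝ᵥ x with hs
    set c : 𝓞 K := j + m * y * a' with hc
    have h1 : s * a * a' ^ 2 = (2 ^ (k + v)) ^ 2 * (1 + 8 * c) := by
      have e4 : (4 : 𝓞 K) ^ k = (2 ^ k) ^ 2 := by rw [← pow_mul, mul_comm k, pow_mul]; norm_num
      have e2 : (2 : 𝓞 K) ^ (2 * k + v + 3) = (2 ^ k) ^ 2 * 2 ^ v * 8 := by
        rw [pow_add, pow_add, mul_comm 2 k, pow_mul]; norm_num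
      rw [e4, e2] at hxy
      rw [hc, pow_add]
      linear_combination a * a' ^ 2 * hxy
        + ((2 ^ k) ^ 2 * a * a' + (2 ^ k) ^ 2 * 2 ^ v * (m + 8 * y * a')) * haa
        + (2 ^ k * 2 ^ v) ^ 2 * hj'
    have hne := one_add_eight_mul_ne_zero c
    have h2 : (2 ^ (k + v) : 𝓞 K) ≠ 0 := pow_ne_zero _ two_ne_zero
    generalize (2 : 𝓞 K) ^ (k + v) = e at h1 h2
    have hsa : s * a * a' ^ 2 ≠ 0 := by
      rw [h1]; exact mul_ne_zero (pow_ne_zero _ h2) hne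
    have hs0 : s ≠ 0 := fun h => hsa (by rw [h]; ring)
    have ha'0 : a' ≠ 0 := fun h => hsa (by rw [h]; ring)
    have hK (z : 𝓞 K) (hz : z ≠ 0) : (z : K) ≠ 0 := by simpa using hz
    have hs4 : Is4 (s : K) := by
      refine ⟨hK s hs0, (x 0 : K), (x 1 : K), (x 2 : K), (x 3 : K), ?_⟩
      simp [hs, dotProduct, Fin.sum_univ_four]; ring
    have h1K := congrArg (algebraMap (𝓞 K) K) h1
    simp only [map_mul, map_pow] at h1K
    have hc4 : Is4 ((1 + 8 * c : 𝓞 K) : K) := by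
      refine is4_of_one_mod_eight (1 + 8 * c) c rfl fun w => ?_
      have hw := congrArg (sg w) h1K
      simp only [map_mul, map_pow] at hw
      have hs1 : 0 < sg w (algebraMap (𝓞 K) K s) := by
        refine lt_of_le_of_ne ?_ ((map_ne_zero (sg w)).2 (hK s hs0)).symm
        obtain ⟨-, x, y, z, t, h⟩ := hs4
        rw [← RingOfIntegers.coe_eq_algebraMap, h]
        simp only [map_add, map_pow]
        positivity
      have ha1 : 0 < sg w (algebraMap (𝓞 K) K a) := hpos w
      have ha2 : 0 < sg w (algebraMap (𝓞 K) K a') ^ 2 :=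
        sq_pos_iff.2 ((map_ne_zero (sg w)).2 (hK a' ha'0))
      have hp := mul_pos (mul_pos hs1 ha1) ha2
      rw [hw] at hp
      exact (pos_iff_pos_of_mul_pos hp).1 (sq_pos_iff.2 ((map_ne_zero (sg w)).2 (hK _ h2)))
    have : (a : K) = (algebraMap (𝓞 K) K e) ^ 2 * ((1 + 8 * c : 𝓞 K) : K)
        / (s * (a' : K) ^ 2) := by
      rw [eq_div_iff (mul_ne_zero (hK s hs0) (pow_ne_zero _ (hK a' ha'0)))]
      linear_combination h1K
    rw [this]
    exact ((Is4.sq (hK _ h2)).mul hc4).div (hs4.mul (Is4.sq (hK a' ha'0)))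
  obtain ⟨n, d, hd, rfl⟩ := IsFractionRing.div_surjective (A := 𝓞 K) a
  have hd0 : (d : K) ≠ 0 := by simpa using nonZeroDivisors.ne_zero hd
  have h1 : algebraMap (𝓞 K) K n / algebraMap (𝓞 K) K d
      = ((n * d : 𝓞 K) : K) / (d : K) ^ 2 := by
    rw [RingOfIntegers.coe_eq_algebraMap, RingOfIntegers.coe_eq_algebraMap, map_mul]
    have : algebraMap (𝓞 K) K d ≠ 0 := hd0
    field_simp
  rw [h1]
  refine (key _ fun w => ?_).div (Is4.sq hd0)
  have h2 : ((n * d : 𝓞 K) : K)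
      = algebraMap (𝓞 K) K n / algebraMap (𝓞 K) K d * (d : K) ^ 2 := by
    rw [h1]; field_simp
  rw [h2, map_mul, map_pow]
  exact mul_pos (hpos w) (sq_pos_iff.2 ((map_ne_zero (sg w)).2 hd0))
end

end

/-! ### Trace forms and total positivity -/

section

open NumberField
section
open InfinitePlace
variable {K : Type*} [Field K] [NumberField K]

/-- The trace as a sum over complex embeddings, each replaced by the chosen embedding of its place,
which does not change the real part. -/
theorem trace_eq_sum_re (x : K) :
    ((Algebra.trace ℚ K x : ℚ) : ℝ) = ∑ σ : K →+* ℂ, ((InfinitePlace.mk σ).embedding x).re := by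
  have h := trace_eq_sum_embeddings (K := ℚ) (L := K) ℂ (x := x)
  have h1 := congrArg Complex.re h
  simp only [eq_ratCast, Complex.ratCast_re, Complex.re_sum] at h1
  rw [h1, ← Equiv.sum_comp (RingHom.equivRatAlgHom (R := K) (S := ℂ))]
  refine Finset.sum_congr rfl fun σ _ => ?_
  rcases InfinitePlace.embedding_mk_eq σ with h | h
  · rw [h]; rfl
  · rw [h, ComplexEmbedding.conjugate_coe_eq, Complex.conj_re]; rfl

/-- By density of `K` in the product of its archimedean completions, nonnegativity of
`x ↦ Tr(c x²)` extends to that product, where it can be tested on vectors supported at `v`. -/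
theorem re_nonneg_of_trace (c : K) (h : ∀ x : K, 0 ≤ Algebra.trace ℚ K (c * x ^ 2))
    (v : InfinitePlace K) (t : v.Completion) :
    0 ≤ (v.embedding c * Completion.extensionEmbedding v t ^ 2).re := by
  classical
  let f : InfiniteAdeleRing K → ℝ := fun z => ∑ σ : K →+* ℂ,
    ((InfinitePlace.mk σ).embedding c *
      Completion.extensionEmbedding (InfinitePlace.mk σ) (z (InfinitePlace.mk σ)) ^ 2).re
  have hf : Continuous f := by
    refine continuous_finsetSum _ fun σ _ => Complex.continuous_re.comp ?_
    refine continuous_const.mul (Continuous.pow ?_ 2)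
    exact (Completion.isometry_extensionEmbedding _).continuous.comp (continuous_apply _)
  have hf0 : ∀ z, 0 ≤ f z := by
    intro z
    refine (InfiniteAdeleRing.denseRange_algebraMap K).induction_on z
      (isClosed_le continuous_const hf) fun x => ?_
    have h1 : f (algebraMap K (InfiniteAdeleRing K) x)
        = ((Algebra.trace ℚ K (c * x ^ 2) : ℚ) : ℝ) := by
      rw [trace_eq_sum_re]
      refine Finset.sum_congr rfl fun σ _ => ?_
      rw [InfiniteAdeleRing.algebraMap_apply, Completion.extensionEmbedding_coe]
      simp
    rw [h1]
    exact_mod_cast h x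
  have h2 := hf0 (Pi.single v t : ∀ w : InfinitePlace K, w.Completion)
  have h3 : f (Pi.single v t : ∀ w : InfinitePlace K, w.Completion)
      = ((Finset.univ.filter fun σ : K →+* ℂ => InfinitePlace.mk σ = v).card : ℝ)
        * (v.embedding c * Completion.extensionEmbedding v t ^ 2).re := by
    rw [← nsmul_eq_mul, ← Finset.sum_const, Finset.sum_filter]
    refine Finset.sum_congr rfl fun σ _ => ?_
    split_ifs with hσ
    · subst hσ; simp
    · simp [Pi.single_eq_of_ne hσ]
  rw [h3] at h2
  refine nonneg_of_mul_nonneg_right h2 ?_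
  have : v.embedding ∈ Finset.univ.filter fun σ : K →+* ℂ => InfinitePlace.mk σ = v := by simp
  exact_mod_cast Finset.card_pos.2 ⟨_, this⟩

/-- At a complex place the vector `x = i` makes the extended trace form negative. -/
theorem isTotallyReal_of_trace (h : ∀ x : K, 0 ≤ Algebra.trace ℚ K (x ^ 2)) :
    IsTotallyReal K := by
  refine ⟨fun v => ?_⟩
  by_contra hv
  rw [not_isReal_iff_isComplex] at hv
  obtain ⟨t, ht⟩ := Completion.surjective_extensionEmbedding_of_isComplex hv Complex.I
  have := re_nonneg_of_trace (1 : K) (by simpa using h) v t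
  rw [ht] at this
  norm_num at this

theorem sg_pos_of_trace [IsTotallyReal K] (c : K) (hc : c ≠ 0)
    (h : ∀ x : K, 0 ≤ Algebra.trace ℚ K (c * x ^ 2)) (v : InfinitePlace K) : 0 < sg v c := by
  have h1 := re_nonneg_of_trace c h v 1
  have h2 : (v.embedding c) = ((sg v c : ℝ) : ℂ) := by
    simp [sg]
  simp only [map_one, one_pow, mul_one, h2, Complex.ofReal_re] at h1
  exact lt_of_le_of_ne h1 ((map_ne_zero (sg v)).2 hc).symm
end

end

/-! ### Self-adjoint elements -/

section

open MulOpposite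

/-- The trace over `ℚ` of multiplication by `y ∈ K` on a `K`-vector space. -/
theorem trace_smul_eq {K M : Type*} [Field K] [Algebra ℚ K] [FiniteDimensional ℚ K]
    [AddCommGroup M] [Module ℚ M] [Module K M] [IsScalarTower ℚ K M] [Module.Finite K M] (y : K)
    (f : M →ₗ[ℚ] M) (hf : ∀ m, f m = y • m) :
    LinearMap.trace ℚ M f = Module.finrank K M * Algebra.trace ℚ K y := by
  classical
  let c := Module.finBasis ℚ K
  let b := Module.finBasis K M
  rw [LinearMap.trace_eq_matrix_trace ℚ (c.smulTower b), Algebra.trace_eq_matrix_trace c,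
    Matrix.trace, Fintype.sum_prod_type_right, Matrix.trace, Finset.sum_congr rfl (g := fun _ =>
      ∑ i, Matrix.diag (Algebra.leftMulMatrix c y) i)]
  · simp
  · intro j _
    refine Finset.sum_congr rfl fun i _ => ?_
    rw [Matrix.diag_apply, Matrix.diag_apply, LinearMap.toMatrix_apply, hf,
      Module.Basis.smulTower_repr, Module.Basis.smulTower_apply, Algebra.leftMulMatrix_eq_repr_mul,
      smul_smul]
    simp

section
variable {D : Type*} [DivisionRing D] [CharZero D] [FiniteDimensional ℚ D]

/-- A nonzero self-adjoint `d` for which `x ↦ Tr(x* d x)` is positive is a sum of four squares in the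
field `ℚ(d)`, which `st` fixes pointwise. -/
theorem exists_four_squares {st : D → D} (hst : IsPositiveInvolutionQ D st) {d : D} (hd : d ≠ 0)
    (hsd : st d = d) (hpos : ∀ x : D, x ≠ 0 → 0 < algTraceQ D (st x * d * x)) :
    ∃ (K : Type) (_ : Field K) (φ : K →+* D), (∀ y, st (φ y) = φ y) ∧
      ∃ x y z t : K, d = φ (x ^ 2 + y ^ 2 + z ^ 2 + t ^ 2) := by
  have hint : IsIntegral ℚ d := Algebra.IsIntegral.isIntegral d
  have : Fact (Irreducible (minpoly ℚ d)) := ⟨minpoly.irreducible hint⟩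
  let K := AdjoinRoot (minpoly ℚ d)
  let φ : K →ₐ[ℚ] D := Ideal.Quotient.liftₐ _ (Polynomial.aeval d) (by
    intro a ha
    obtain ⟨b, rfl⟩ := Ideal.mem_span_singleton'.1 ha
    simp)
  have hφ (p : Polynomial ℚ) : φ (AdjoinRoot.mk _ p) = Polynomial.aeval d p := rfl
  have : FiniteDimensional ℚ K := (AdjoinRoot.powerBasis (minpoly.ne_zero hint)).finite
  have : CharZero K := charZero_of_injective_algebraMap (algebraMap ℚ K).injective
  have : NumberField K := ⟨⟩
  obtain ⟨⟨hadd, hmul, hinv, hrat⟩, hstpos⟩ := hst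
  have hfix : ∀ y, st (φ y) = φ y := by
    intro y
    induction y using AdjoinRoot.induction_on with
    | ih p =>
      induction p using Polynomial.induction_on with
      | C a => rw [hφ, Polynomial.aeval_C, hrat]
      | add p q hp hq => rw [map_add, map_add, hadd, hp, hq]
      | monomial n a h =>
        have : (Polynomial.C a * Polynomial.X ^ (n + 1) : Polynomial ℚ)
          = Polynomial.X * (Polynomial.C a * Polynomial.X ^ n) := by ring
        have hX : st (φ (AdjoinRoot.mk _ Polynomial.X)) = φ (AdjoinRoot.mk _ Polynomial.X) := by
          rw [hφ, Polynomial.aeval_X, hsd]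
        rw [this, map_mul (AdjoinRoot.mk _) Polynomial.X]
        generalize AdjoinRoot.mk _ (Polynomial.C a * Polynomial.X ^ n) = q at h ⊢
        rw [map_mul, hmul, h, hX, ← map_mul, ← map_mul, mul_comm]
  let _ : Module K D := Module.compHom D φ.toRingHom
  have hsm (y : K) (m : D) : y • m = φ y * m := rfl
  have : IsScalarTower ℚ K D := ⟨fun r y m => by
    rw [hsm, hsm, Algebra.smul_def, map_mul, eq_ratCast, map_ratCast, mul_assoc,
      ← eq_ratCast (algebraMap ℚ D), ← Algebra.smul_def]⟩
  have : Module.Finite K D := Module.Finite.of_restrictScalars_finite ℚ K D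
  have htr (y : K) : algTraceQ D (φ y) = Module.finrank K D * Algebra.trace ℚ K y :=
    trace_smul_eq y _ fun m => rfl
  have hn : (0 : ℚ) < Module.finrank K D := by exact_mod_cast Module.finrank_pos
  have hpos' (c : K) (h : ∀ x : K, x ≠ 0 → 0 < algTraceQ D (φ (c * x ^ 2))) (x : K) :
      0 ≤ Algebra.trace ℚ K (c * x ^ 2) := by
    rcases eq_or_ne x 0 with rfl | hx
    · simp
    · have := h x hx
      rw [htr] at this
      exact ((pos_iff_pos_of_mul_pos this).1 hn).le
  have hne {x : K} (hx : x ≠ 0) : φ x ≠ 0 := (map_ne_zero φ).2 hx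
  have : NumberField.IsTotallyReal K := isTotallyReal_of_trace fun x => by
    have := hpos' 1 (fun x hx => by
      have := hstpos _ (hne hx)
      rw [hfix, ← map_mul] at this
      rwa [one_mul, pow_two]) x
    rwa [one_mul] at this
  let c : K := AdjoinRoot.root _
  have hc : φ c = d := by
    change φ (AdjoinRoot.mk _ Polynomial.X) = d
    rw [hφ, Polynomial.aeval_X]
  have hc0 : c ≠ 0 := by
    rintro h
    rw [h, map_zero] at hc
    exact hd hc.symm
  obtain ⟨-, x, y, z, t, h⟩ := is4_of_pos c (sg_pos_of_trace c hc0 (hpos' c fun x hx => by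
    have := hpos _ (hne hx)
    rw [hfix] at this
    have h2 : φ (c * x ^ 2) = φ x * d * φ x := by
      rw [show c * x ^ 2 = x * c * x by ring, map_mul, map_mul, hc]
    rwa [h2]))
  exact ⟨K, inferInstance, φ.toRingHom, hfix, x, y, z, t, hc.symm.trans (congrArg φ h)⟩

/-- A matrix `M` with self-adjoint entries and `Mᵀ M = d`, namely left multiplication by a quaternion
of norm `d`. -/
theorem exists_quat {st : D → D} (hst : IsPositiveInvolutionQ D st) {d : D} (hd : d ≠ 0)
    (hsd : st d = d) (hpos : ∀ x : D, x ≠ 0 → 0 < algTraceQ D (st x * d * x)) :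
    ∃ M : Fin 4 → Fin 4 → D, (∀ k l, st (M k l) = M k l) ∧
      ∀ l l', ∑ k, M k l * M k l' = if l = l' then d else 0 := by
  obtain ⟨K, _, φ, hfix, x, y, z, t, rfl⟩ := exists_four_squares hst hd hsd hpos
  let N : Matrix (Fin 4) (Fin 4) K :=
    !![x, -y, -z, -t; y, x, -t, z; z, t, x, -y; t, -z, y, x]
  refine ⟨fun k l => φ (N k l), fun k l => hfix _, fun l l' => ?_⟩
  simp only [← map_mul, ← map_sum]
  rw [← map_zero φ, ← apply_ite φ]
  congr 1
  fin_cases l <;> fin_cases l' <;> simp [N, Fin.sum_univ_four] <;> ring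
end

end

/-! ### Diagonalisation of Hermitian forms -/

section

open MulOpposite
section
variable {D : Type*} [DivisionRing D] [CharZero D]
  {V : Type*} [AddCommGroup V] [Module Dᵐᵒᵖ V] {st : D → D} {ψ : V → V → D}

theorem algTraceQ_zero : algTraceQ D (0 : D) = 0 := by
  simp [algTraceQ]

theorem algTraceQ_sum {ι : Type*} (s : Finset ι) (f : ι → D) :
    algTraceQ D (∑ i ∈ s, f i) = ∑ i ∈ s, algTraceQ D (f i) := by
  have h : ∀ x : D, algTraceQ D x = (LinearMap.trace ℚ D ∘ₗ LinearMap.mul ℚ D) x := fun x => rfl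
  simp only [h, map_sum]

theorem IsHermitianForm.sum_right (h : IsHermitianForm D V st ψ) (v : V) {ι : Type*}
    (s : Finset ι) (f : ι → V) : ψ v (∑ i ∈ s, f i) = ∑ i ∈ s, ψ v (f i) :=
  map_sum (AddMonoidHom.mk' (ψ v) (h.2.1 v)) f s

theorem IsHermitianForm.sum_left (h : IsHermitianForm D V st ψ) (v : V) {ι : Type*}
    (s : Finset ι) (f : ι → V) : ψ (∑ i ∈ s, f i) v = ∑ i ∈ s, ψ (f i) v :=
  map_sum (AddMonoidHom.mk' (fun w => ψ w v) (fun a b => h.1 a b v)) f s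

theorem IsPosDefHermitianForm.self_ne_zero (h : IsPosDefHermitianForm D V st ψ) {v : V}
    (hv : v ≠ 0) : ψ v v ≠ 0 := fun h0 => by
  have := h.2 v hv
  rw [h0, algTraceQ_zero] at this
  exact lt_irrefl _ this

theorem IsPosDefHermitianForm.linearIndependent (h : IsPosDefHermitianForm D V st ψ)
    {ι : Type*} {v : ι → V} (hv : ∀ i, v i ≠ 0) (ho : ∀ i j, i ≠ j → ψ (v i) (v j) = 0) :
    LinearIndependent Dᵐᵒᵖ v := by
  rw [linearIndependent_iff']
  intro s g hg i hi
  have h1 := h.1.sum_right (v i) s (fun j => g j • v j)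
  rw [hg, Finset.sum_eq_single i] at h1
  · have h2 := h.1.2.2.2.1 (unop (g i)) (v i) (v i)
    rw [op_unop] at h2
    have h0 : ψ (v i) 0 = 0 := by simpa using h.1.sum_right (v i) (∅ : Finset ι) v
    rw [h0, h2, eq_comm, mul_eq_zero] at h1
    exact unop_injective (h1.resolve_left (h.self_ne_zero (hv i)))
  · intro j _ hj
    have h2 := h.1.2.2.2.1 (unop (g j)) (v i) (v j)
    rw [op_unop] at h2
    rw [h2, ho i j hj.symm, zero_mul]
  · exact fun h => absurd hi h

/-- Gram–Schmidt: a positive definite form has an orthogonal family of nonzero vectors of any size up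
to the dimension. -/
theorem IsPosDefHermitianForm.exists_orthogonal [Module.Finite Dᵐᵒᵖ V]
    (hst : IsPositiveInvolutionQ D st) (h : IsPosDefHermitianForm D V st ψ) (n : ℕ)
    (hn : n ≤ Module.finrank Dᵐᵒᵖ V) :
    ∃ v : Fin n → V, (∀ i, v i ≠ 0) ∧ ∀ i j, i ≠ j → ψ (v i) (v j) = 0 := by
  induction n with
  | zero => exact ⟨Fin.elim0, fun i => i.elim0, fun i => i.elim0⟩
  | succ n ih =>
    obtain ⟨v, hv, ho⟩ := ih (by omega)
    obtain ⟨u, hu⟩ : ∃ u, u ∉ Submodule.span Dᵐᵒᵖ (Set.range v) := by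
      by_contra! hcon
      have h1 := finrank_range_le_card (R := Dᵐᵒᵖ) v
      rw [Set.finrank, Submodule.eq_top_iff'.2 hcon, finrank_top, Fintype.card_fin] at h1
      omega
    let w : V := ∑ i, op ((ψ (v i) (v i))⁻¹ * ψ (v i) u) • v i
    have hw : w ∈ Submodule.span Dᵐᵒᵖ (Set.range v) :=
      Submodule.sum_mem _ fun i _ => Submodule.smul_mem _ _ (Submodule.subset_span ⟨i, rfl⟩)
    have hvw (i) : ψ (v i) w = ψ (v i) u := by
      rw [h.1.sum_right, Finset.sum_eq_single i, h.1.2.2.2.1,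
        mul_inv_cancel_left₀ (h.self_ne_zero (hv i))]
      · intro j _ hj
        rw [h.1.2.2.2.1, ho i j hj.symm, zero_mul]
      · simp
    have hvu (i) : ψ (v i) (u - w) = 0 := by
      have h2 := h.1.2.1 (v i) (u - w) w
      rw [sub_add_cancel, hvw] at h2
      simpa using h2
    have hst0 : st 0 = 0 := by simpa using hst.1.2.2.2 0
    have huv (i) : ψ (u - w) (v i) = 0 := by
      rw [h.1.2.2.2.2, hvu, hst0]
    refine ⟨Fin.cons (u - w) v, ?_, ?_⟩
    · refine Fin.cases ?_ hv
      rw [Fin.cons_zero, sub_ne_zero]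
      intro h0
      exact hu (by rw [h0]; exact hw)
    · intro i j
      refine Fin.cases ?_ (fun i => ?_) i <;> refine Fin.cases ?_ (fun j => ?_) j <;> intro hij
      · exact absurd rfl hij
      · simpa using huv j
      · simpa using hvu i
      · simpa using ho i j fun h => hij (by rw [h])

theorem st_sum (hst : IsPositiveInvolutionQ D st) {ι : Type*} (s : Finset ι) (f : ι → D) :
    st (∑ i ∈ s, f i) = ∑ i ∈ s, st (f i) :=
  map_sum (AddMonoidHom.mk' st hst.1.1) f s

variable [FiniteDimensional ℚ D]

/-- Four copies of a positive definite form are isometric to `4n` copies of the standard form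
`st x * y`. -/
theorem IsPosDefHermitianForm.exists_standard [Module.Finite Dᵐᵒᵖ V] [Nontrivial V]
    (hst : IsPositiveInvolutionQ D st) (h : IsPosDefHermitianForm D V st ψ) :
    ∃ F : (Fin 4 → V) ≃ₗ[Dᵐᵒᵖ] (Fin 4 → Fin (Module.finrank Dᵐᵒᵖ V) → Dᵐᵒᵖ),
      ∀ x y, ∑ k, ∑ i, st (unop (F x k i)) * unop (F y k i) = ∑ k, ψ (x k) (y k) := by
  classical
  obtain ⟨v, hv, ho⟩ := h.exists_orthogonal hst _ le_rfl
  have : Nonempty (Fin (Module.finrank Dᵐᵒᵖ V)) := ⟨⟨0, Module.finrank_pos⟩⟩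
  let b := basisOfLinearIndependentOfCardEqFinrank (h.linearIndependent hv ho) (by simp)
  have hb (i) : b i = v i := by simp [b]
  choose M hM hMM using fun i => exists_quat hst (h.self_ne_zero (hv i))
    (h.1.2.2.2.2 _ _).symm fun x hx => by
      rw [← h.1.2.2.1, ← h.1.2.2.2.1]
      exact h.2 _ (smul_ne_zero (by simpa using hx) (hv i))
  -- `ψ` in the coordinates of the orthogonal basis
  have hψ (x y : V) : ψ x y = ∑ i, st (unop (b.repr x i)) * (ψ (v i) (v i) * unop (b.repr y i)) := by
    conv_lhs => rw [← b.sum_repr x, ← b.sum_repr y]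
    rw [h.1.sum_left]
    refine Finset.sum_congr rfl fun i _ => ?_
    rw [h.1.sum_right, Finset.sum_eq_single i]
    · have h1 := h.1.2.2.1 (unop (b.repr x i)) (b i) (b.repr y i • b i)
      have h2 := h.1.2.2.2.1 (unop (b.repr y i)) (b i) (b i)
      rw [op_unop] at h1 h2
      rw [h1, h2, hb]
    · intro j _ hj
      have h1 := h.1.2.2.1 (unop (b.repr x i)) (b i) (b.repr y j • b j)
      have h2 := h.1.2.2.2.1 (unop (b.repr y j)) (b i) (b j)
      rw [op_unop] at h1 h2
      rw [h1, h2, hb, hb, ho i j hj.symm, zero_mul, mul_zero]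
    · simp
  -- `F` is given by the matrices `M i` in the coordinates of the orthogonal basis; as `D` acts on the
  -- right, their entries multiply coordinates on the left, that is on the right in `Dᵐᵒᵖ`.
  let F : (Fin 4 → V) →ₗ[Dᵐᵒᵖ] (Fin 4 → Fin (Module.finrank Dᵐᵒᵖ V) → Dᵐᵒᵖ) :=
    { toFun := fun x k i => ∑ l, b.repr (x l) i * op (M i k l)
      map_add' := fun x y => by
        ext k i
        simp [add_mul, Finset.sum_add_distrib]
      map_smul' := fun a x => by
        ext k i
        simp [Finset.mul_sum, mul_assoc] }
  have hF (x k i) : unop (F x k i) = ∑ l, M i k l * unop (b.repr (x l) i) := by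
    change unop (∑ l, b.repr (x l) i * op (M i k l)) = _
    rw [Finset.unop_sum]
    simp only [unop_mul, unop_op]
  have hiso (x y) : ∑ k, ∑ i, st (unop (F x k i)) * unop (F y k i) = ∑ k, ψ (x k) (y k) := by
    rw [Finset.sum_congr rfl fun k _ => hψ (x k) (y k)]
    rw [Finset.sum_comm, Finset.sum_comm (s := Finset.univ (α := Fin 4))]
    refine Finset.sum_congr rfl fun i _ => ?_
    calc ∑ k, st (unop (F x k i)) * unop (F y k i)
        = ∑ k, ∑ l, ∑ l', st (unop (b.repr (x l) i)) *
            ((M i k l * M i k l') * unop (b.repr (y l') i)) := by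
          refine Finset.sum_congr rfl fun k _ => ?_
          rw [hF, hF, st_sum hst, Finset.sum_mul]
          refine Finset.sum_congr rfl fun l _ => ?_
          rw [Finset.mul_sum]
          refine Finset.sum_congr rfl fun l' _ => ?_
          rw [hst.1.2.1, hM]
          simp only [mul_assoc]
      _ = ∑ l, ∑ l', st (unop (b.repr (x l) i)) *
            ((∑ k, M i k l * M i k l') * unop (b.repr (y l') i)) := by
          rw [Finset.sum_comm]
          refine Finset.sum_congr rfl fun l _ => ?_
          rw [Finset.sum_comm]
          refine Finset.sum_congr rfl fun l' _ => ?_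
          rw [Finset.sum_mul, Finset.mul_sum]
      _ = _ := by
          refine Finset.sum_congr rfl fun l _ => ?_
          simp [hMM]
  have hinj : Function.Injective F := by
    rw [← LinearMap.ker_eq_bot, LinearMap.ker_eq_bot']
    intro x hx
    have h1 := hiso x x
    rw [hx] at h1
    have h2 := congrArg (algTraceQ D) h1
    simp only [Pi.zero_apply, unop_zero, mul_zero, Finset.sum_const_zero] at h2
    rw [algTraceQ_zero, algTraceQ_sum] at h2
    have h00 : ψ 0 0 = 0 := by simpa using h.1.sum_right 0 (∅ : Finset (Fin 4)) x
    have h3 := (Finset.sum_eq_zero_iff_of_nonneg (fun k _ => ?_)).1 h2.symm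
    · ext k
      by_contra hk
      exact (h.2 _ hk).ne' (h3 k (Finset.mem_univ k))
    · rcases eq_or_ne (x k) 0 with hk | hk
      · rw [hk, h00, algTraceQ_zero]
      · exact (h.2 _ hk).le
  refine ⟨LinearEquiv.ofInjectiveOfFinrankEq F hinj ?_, hiso⟩
  simp [Module.finrank_pi_fintype]
end

end

/-- **Albert type IV case of the fourth-power Hermitian form theorem**:
`D` is a division algebra over `ℚ` whose centre is a CM field `F`
(`ι : F →+* D` identifies `F` with the centre of `D`), with a positive involution of the
second kind: it restricts on `F` to the nontrivial automorphism of `F` over its maximal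
totally real subfield `F₀`. -/
theorem fourth_power_hermitian_form_type_IV
    (D : Type*) [DivisionRing D] [CharZero D] [FiniteDimensional ℚ D]
    -- the centre of `D` is a number field `F`
    (F : Type*) [Field F] [NumberField F]
    (ι : F →+* D) (hcenter : Set.range ι = Set.center D)
    -- `F` is a CM field: totally imaginary, quadratic over the totally real field `F₀`
    (F₀ : Type*) [Field F₀] [NumberField F₀] [Algebra F₀ F]
    (htotreal : ∀ (σ : F₀ →+* ℂ) (x : F₀), (σ x).im = 0)
    (htotimag : IsEmpty (F →+* ℝ))
    (hquad : Module.finrank F₀ F = 2)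
    -- `st` is a positive involution of `D` of the second kind
    (st : D → D) (hst : IsPositiveInvolutionQ D st)
    (hstF₀ : ∀ x : F₀, st (ι (algebraMap F₀ F x)) = ι (algebraMap F₀ F x))
    (hstF : ∀ x : F, ∃ y : F, st (ι x) = ι y)
    (hsecondkind : ∃ x : F, st (ι x) ≠ ι x)
    (V : Type*) [AddCommGroup V] [Module Dᵐᵒᵖ V] [Nontrivial V] [Module.Finite Dᵐᵒᵖ V]
    (ψ₁ ψ₂ : V → V → D)
    (h₁ : IsPosDefHermitianForm D V st ψ₁)
    (h₂ : IsPosDefHermitianForm D V st ψ₂) :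
    ∃ f : (Fin 4 → V) ≃ₗ[Dᵐᵒᵖ] (Fin 4 → V),
      ∀ x y : Fin 4 → V, ∑ i, ψ₂ (f x i) (f y i) = ∑ i, ψ₁ (x i) (y i) := by
  obtain ⟨F₁, hF₁⟩ := h₁.exists_standard hst
  obtain ⟨F₂, hF₂⟩ := h₂.exists_standard hst
  refine ⟨F₁.trans F₂.symm, fun x y => ?_⟩
  rw [← hF₂, ← hF₁]
  simp
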